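/- arXiv:2101.08225 — 4 statements merged into one kernel-verified Lean document; each statement's English description precedes it below -/
import Mathlib

section
/- There exist finite simple graphs Γ and Δ such that the outer automorphism group Out(A_Γ) has a finite-index subgroup isomorphic to the right-angled Artin group A_Δ, and Δ contains two maximal cliques of different cardinalities (so the flag complex of Δ is not Cohen–Macaulay and A_Δ is not a duality group). -/
open scoped commutatorElement

/-- The set of relators of a right-angled Artin group: commutators of adjacent vertices. -/
def raagRels {V : Type*} (Γ : SimpleGraph V) : Set (FreeGroup V) :=
  {r | ∃ v w : V, Γ.Adj v w ∧ r = ⁅FreeGroup.of v, FreeGroup.of w⁆}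

/-- The right-angled Artin group of a simple graph. -/
abbrev RAAG {V : Type*} (Γ : SimpleGraph V) : Type _ := PresentedGroup (raagRels Γ)

instance conjRangeNormal (G : Type*) [Group G] :
    ((MulAut.conj : G →* MulAut G).range).Normal := by
  constructor
  rintro - ⟨g, rfl⟩ φ
  refine ⟨φ g, ?_⟩
  ext x
  simp [MulAut.conj_apply, mul_assoc]

/-- The outer automorphism group of a group: the quotient of the automorphism group
by the inner automorphisms. -/
def Out (G : Type*) [Group G] : Type _ :=
  MulAut G ⧸ (MulAut.conj : G →* MulAut G).range

instance (G : Type*) [Group G] : Group (Out G) :=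
  QuotientGroup.Quotient.group _

/-- A maximal clique: a clique that is maximal under inclusion among cliques. -/
def IsMaxClique {V : Type*} (Γ : SimpleGraph V) (K : Set V) : Prop :=
  Γ.IsClique K ∧ ∀ K' : Set V, Γ.IsClique K' → K ⊆ K' → K' = K


namespace RaagProof

section Basics

variable {V : Type*} {Γ : SimpleGraph V}

/-- The standard generator of a right-angled Artin group. -/
def gen (Γ : SimpleGraph V) (v : V) : RAAG Γ := PresentedGroup.of v

theorem gen_comm {v w : V} (h : Γ.Adj v w) : Commute (gen Γ v) (gen Γ w) := by
  have h1 : (PresentedGroup.mk (raagRels Γ)) ⁅FreeGroup.of v, FreeGroup.of w⁆ = 1 :=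
    PresentedGroup.one_of_mem ⟨v, w, h, rfl⟩
  rw [map_commutatorElement] at h1
  exact commutatorElement_eq_one_iff_commute.mp h1

/-- Universal property. -/
def lift {G : Type*} [Group G] (f : V → G) (hf : ∀ v w, Γ.Adj v w → Commute (f v) (f w)) :
    RAAG Γ →* G :=
  PresentedGroup.toGroup (f := f) (by
    rintro r ⟨v, w, h, rfl⟩
    rw [map_commutatorElement, FreeGroup.lift_apply_of, FreeGroup.lift_apply_of]
    exact commutatorElement_eq_one_iff_commute.mpr (hf v w h))

@[simp] theorem lift_gen {G : Type*} [Group G] (f : V → G)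
    (hf : ∀ v w, Γ.Adj v w → Commute (f v) (f w)) (v : V) : lift f hf (gen Γ v) = f v :=
  PresentedGroup.toGroup.of _

theorem hom_ext {G : Type*} [Group G] {f g : RAAG Γ →* G}
    (h : ∀ v, f (gen Γ v) = g (gen Γ v)) : f = g :=
  PresentedGroup.ext h

theorem closure_gen : Subgroup.closure (Set.range (gen Γ)) = ⊤ :=
  PresentedGroup.closure_range_of _

theorem gen_induction {p : RAAG Γ → Prop} (one : p 1) (gen_mul : ∀ v x, p x → p (gen Γ v * x))
    (inv_mul : ∀ v x, p x → p ((gen Γ v)⁻¹ * x)) (x : RAAG Γ) : p x := by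
  have hx : x ∈ Subgroup.closure (Set.range (gen Γ)) := by rw [closure_gen]; trivial
  induction hx using Subgroup.closure_induction_left with
  | one => exact one
  | mul_left y hy z hz ih => obtain ⟨v, rfl⟩ := hy; exact gen_mul v z ih
  | inv_mul_cancel y hy z hz ih => obtain ⟨v, rfl⟩ := hy; exact inv_mul v z ih

/-- Exponent sum of a generator. -/
noncomputable def chi (Γ : SimpleGraph V) (v : V) : RAAG Γ →* Multiplicative ℤ :=
  open Classical in
  lift (fun w => if w = v then Multiplicative.ofAdd 1 else 1) (fun _ _ _ => Commute.all _ _)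

theorem chi_self (v : V) : chi Γ v (gen Γ v) = Multiplicative.ofAdd 1 := by
  simp [chi]

theorem chi_ne {v w : V} (h : w ≠ v) : chi Γ v (gen Γ w) = 1 := by
  simp [chi, h]

theorem chi_self_zpow (v : V) (n : ℤ) : chi Γ v (gen Γ v ^ n) = Multiplicative.ofAdd n := by
  rw [map_zpow, chi_self, ← ofAdd_zsmul]; simp

theorem chi_conj (v : V) (g x : RAAG Γ) : chi Γ v (g * x * g⁻¹) = chi Γ v x := by
  rw [map_mul, map_mul, map_inv, mul_comm (chi Γ v g), mul_inv_cancel_right]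

theorem chi_closure {S : Set V} {v : V} (hv : v ∉ S) {x : RAAG Γ}
    (hx : x ∈ Subgroup.closure (gen Γ '' S)) : chi Γ v x = 1 := by
  have : Subgroup.closure (gen Γ '' S) ≤ (chi Γ v).ker := by
    rw [Subgroup.closure_le]
    rintro _ ⟨w, hw, rfl⟩
    exact chi_ne (by rintro rfl; exact hv hw)
  exact this hx

end Basics

section Crossed

/-- Permutation of finitely supported functions induced by an action. -/
noncomputable def act {G E : Type*} [Group G] [MulAction G E] (g : G) (f : E →₀ ℤ) : E →₀ ℤ :=
  f.mapDomain (g • ·)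

variable {G E : Type*} [Group G] [MulAction G E]

theorem act_add (g : G) (f f' : E →₀ ℤ) : act g (f + f') = act g f + act g f' :=
  Finsupp.mapDomain_add

theorem act_sub (g : G) (f f' : E →₀ ℤ) : act g (f - f') = act g f - act g f' :=
  map_sub (Finsupp.mapDomain.addMonoidHom (g • · : E → E)) f f'

theorem act_zero (g : G) : act g (0 : E →₀ ℤ) = 0 := Finsupp.mapDomain_zero

theorem act_neg (g : G) (f : E →₀ ℤ) : act g (-f) = - act g f := 
  map_neg (Finsupp.mapDomain.addMonoidHom (g • · : E → E)) f

theorem act_single (g : G) (e : E) (n : ℤ) : act g (Finsupp.single e n) = Finsupp.single (g • e) n :=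
  Finsupp.mapDomain_single

theorem act_one (f : E →₀ ℤ) : act (1 : G) f = f := by
  simp only [act, one_smul]
  exact Finsupp.mapDomain_id

theorem act_mul (g h : G) (f : E →₀ ℤ) : act (g * h) f = act g (act h f) := by
  unfold act
  rw [← Finsupp.mapDomain_comp]
  congr 1
  ext x
  simp [mul_smul]

theorem act_apply (g : G) (f : E →₀ ℤ) (e : E) : act g f (g • e) = f e :=
  Finsupp.mapDomain_apply (MulAction.injective g) f e

theorem act_apply' (g : G) (f : E →₀ ℤ) (e : E) : act g f e = f (g⁻¹ • e) := by
  conv_lhs => rw [← smul_inv_smul g e]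
  exact act_apply g f _

variable {V : Type*} {Γ : SimpleGraph V}

/-- Crossed homomorphisms can be prescribed on generators. -/
theorem exists_crossed [MulAction (RAAG Γ) E] (d : V → (E →₀ ℤ))
    (hd : ∀ v w, Γ.Adj v w → d v + act (gen Γ v) (d w) = d w + act (gen Γ w) (d v)) :
    ∃ δ : RAAG Γ → (E →₀ ℤ), (∀ g h, δ (g * h) = δ g + act g (δ h)) ∧
      ∀ v, δ (gen Γ v) = d v := by
  let q : V → Equiv.Perm (E →₀ ℤ) := fun v =>
    { toFun := fun m => d v + act (gen Γ v) m
      invFun := fun m => act (gen Γ v)⁻¹ (m - d v)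
      left_inv := by intro m; simp [← act_mul, act_one]
      right_inv := by intro m; simp [← act_mul, act_one] }
  have hq : ∀ v w, Γ.Adj v w → Commute (q v) (q w) := by
    intro v w h
    ext1 m
    change d v + act (gen Γ v) (d w + act (gen Γ w) m) =
      d w + act (gen Γ w) (d v + act (gen Γ v) m)
    rw [act_add, act_add, ← add_assoc, ← add_assoc, hd v w h, ← act_mul, ← act_mul,
      (gen_comm h).eq]
  let ρ : RAAG Γ →* Equiv.Perm (E →₀ ℤ) := lift q hq
  have key : ∀ g m, ρ g m = ρ g 0 + act g m := by
    intro g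
    induction g using gen_induction with
    | one => intro m; simp [act_one]
    | gen_mul v x ih =>
      intro m
      rw [map_mul, Equiv.Perm.mul_apply, Equiv.Perm.mul_apply, ih m]
      have : ρ (gen Γ v) = q v := lift_gen _ _ _
      rw [this]
      change d v + act (gen Γ v) _ = d v + act (gen Γ v) _ + _
      rw [act_add, act_mul, add_assoc]
    | inv_mul v x ih =>
      intro m
      rw [map_mul, Equiv.Perm.mul_apply, Equiv.Perm.mul_apply, ih m]
      have : ρ (gen Γ v)⁻¹ = (q v)⁻¹ := by rw [map_inv]; congr 1
      rw [this]
      change act (gen Γ v)⁻¹ (_ - d v) = act (gen Γ v)⁻¹ (_ - d v) + _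
      rw [act_mul, ← act_add]
      congr 1
      abel
  refine ⟨fun g => ρ g 0, fun g h => ?_, fun v => ?_⟩
  · change ρ (g * h) 0 = _
    rw [map_mul, Equiv.Perm.mul_apply, key g (ρ h 0)]
  · change ρ (gen Γ v) 0 = _
    have : ρ (gen Γ v) = q v := lift_gen _ _ _
    rw [this]
    change d v + act (gen Γ v) 0 = d v
    rw [act_zero, add_zero]

theorem crossed_one {δ : G → (E →₀ ℤ)} (h : ∀ g h, δ (g * h) = δ g + act g (δ h)) : δ 1 = 0 := by
  have := h 1 1
  rw [act_one, mul_one] at this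
  simpa using this

theorem crossed_inv {δ : G → (E →₀ ℤ)} (h : ∀ g h, δ (g * h) = δ g + act g (δ h)) (g : G) :
    δ g⁻¹ = - act g⁻¹ (δ g) := by
  have h1 := h g⁻¹ g
  rw [inv_mul_cancel, crossed_one h] at h1
  exact eq_neg_of_add_eq_zero_left h1.symm

theorem crossed_ker {δ : G → (E →₀ ℤ)} (h : ∀ g h, δ (g * h) = δ g + act g (δ h)) {S : Set G}
    (hS : ∀ s ∈ S, δ s = 0) {x : G} (hx : x ∈ Subgroup.closure S) : δ x = 0 := by
  induction hx using Subgroup.closure_induction with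
  | mem x hx => exact hS x hx
  | one => exact crossed_one h
  | mul x y _ _ hx hy => rw [h, hx, hy, act_zero, add_zero]
  | inv x _ hx => rw [crossed_inv h, hx, act_zero, neg_zero]

/-- Centralizer of a generator. -/
theorem mem_of_commute_gen (v : V) {g : RAAG Γ} (hg : Commute (gen Γ v) g) :
    ∃ n : ℤ, ∃ c ∈ Subgroup.closure (gen Γ '' {w | Γ.Adj v w}), g = gen Γ v ^ n * c := by
  classical
  set C : Subgroup (RAAG Γ) := Subgroup.closure (gen Γ '' {w | Γ.Adj v w}) with hC
  let E := RAAG Γ ⧸ C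
  let e : E := ((1 : RAAG Γ) : RAAG Γ ⧸ C)
  have hfix : ∀ w, Γ.Adj v w → gen Γ w • e = e := by
    intro w hw
    change (((gen Γ w * 1 : RAAG Γ)) : RAAG Γ ⧸ C) = ((1 : RAAG Γ) : RAAG Γ ⧸ C)
    rw [QuotientGroup.eq]
    simp only [mul_one]
    exact C.inv_mem (Subgroup.subset_closure ⟨w, hw, rfl⟩)
  obtain ⟨δ, hδ, hδv⟩ := exists_crossed (E := E) (Γ := Γ)
    (fun w => if w = v then Finsupp.single e 1 else 0) (by
      intro x y hxy
      by_cases hx : x = v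
      · subst hx
        have hy : y ≠ x := hxy.ne'
        simp [hy, act_zero, act_single, hfix y hxy]
      · by_cases hy : y = v
        · subst hy
          simp [hx, act_zero, act_single, hfix x hxy.symm]
        · simp [hx, hy, act_zero])
  have h1 := hδ (gen Γ v) g
  rw [hg.eq, hδ g] at h1
  have hv : δ (gen Γ v) = Finsupp.single e 1 := by rw [hδv]; simp
  rw [hv, act_single] at h1
  -- orbits under powers of `gen v`
  let q : E → MulAction.orbitRel.Quotient (Subgroup.zpowers (gen Γ v)) E := Quotient.mk''
  have hq : ∀ x : E, q (gen Γ v • x) = q x := by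
    intro x
    apply Quotient.sound'
    exact ⟨⟨gen Γ v, Subgroup.mem_zpowers _⟩, rfl⟩
  have h2 := congrArg (Finsupp.mapDomain q) h1
  have h3 : Finsupp.mapDomain q (act (gen Γ v) (δ g)) = Finsupp.mapDomain q (δ g) := by
    unfold act
    rw [← Finsupp.mapDomain_comp]
    congr 1
    ext x
    exact hq x
  rw [Finsupp.mapDomain_add, Finsupp.mapDomain_add, h3, add_comm, add_left_inj,
    Finsupp.mapDomain_single, Finsupp.mapDomain_single] at h2
  have h4 : q (g • e) = q e := by
    by_contra hne
    have := congrArg (fun f => f (q e)) h2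
    simp [Finsupp.single_apply, hne] at this
  obtain ⟨⟨z, n, rfl⟩, hz⟩ := Quotient.exact' h4
  refine ⟨n, (gen Γ v ^ n)⁻¹ * g, ?_, by simp⟩
  have hz' : (((gen Γ v ^ n * 1 : RAAG Γ)) : RAAG Γ ⧸ C) = ((g * 1 : RAAG Γ) : RAAG Γ ⧸ C) := hz
  rw [QuotientGroup.eq] at hz'
  simpa using hz'

end Crossed

end RaagProof

namespace RaagProof

section TreeSec

/-- A connected graph with an action and a potential detecting its edges (a tree). -/
structure TreeD (G E X : Type*) [Group G] [MulAction G E] [MulAction G X] where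
  d0 : E → X
  d1 : E → X
  d0_smul : ∀ (g : G) e, d0 (g • e) = g • d0 e
  d1_smul : ∀ (g : G) e, d1 (g • e) = g • d1 e
  o : X
  dl : G → (E →₀ ℤ)
  db : X → (E →₀ ℤ)
  dl_mul : ∀ g h, dl (g * h) = dl g + act g (dl h)
  db_smul : ∀ g x, db (g • x) = dl g + act g (db x)
  db_o : db o = 0
  edge : ∀ e, db (d1 e) - db (d0 e) = Finsupp.single e 1
  conn : ∀ x y, Relation.ReflTransGen
    (fun x y => ∃ e, (d0 e = x ∧ d1 e = y) ∨ (d0 e = y ∧ d1 e = x)) x y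

variable {G E X : Type*} [Group G] [MulAction G E] [MulAction G X] (T : TreeD G E X)

namespace TreeD

/-- The adjacency relation. -/
def J (e : E) (x y : X) : Prop := (T.d0 e = x ∧ T.d1 e = y) ∨ (T.d0 e = y ∧ T.d1 e = x)

theorem J_db {e : E} {x y : X} (h : T.J e x y) :
    ∃ s : ℤ, s.natAbs = 1 ∧ T.db y - T.db x = Finsupp.single e s := by
  rcases h with ⟨rfl, rfl⟩ | ⟨rfl, rfl⟩
  · exact ⟨1, rfl, T.edge e⟩
  · refine ⟨-1, rfl, ?_⟩
    rw [← neg_sub, T.edge e, Finsupp.single_neg]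

theorem J_ne {e : E} {x y : X} (h : T.J e x y) : x ≠ y := by
  rintro rfl
  obtain ⟨s, hs, h⟩ := T.J_db h
  rw [sub_self] at h
  have := Finsupp.single_eq_zero.mp h.symm
  subst this
  simp at hs

/-- The underlying simple graph. -/
def gr : SimpleGraph X where
  Adj x y := ∃ e, T.J e x y
  symm := ⟨by rintro x y ⟨e, h⟩; exact ⟨e, h.symm⟩⟩
  loopless := ⟨by rintro x ⟨e, h⟩; exact T.J_ne h rfl⟩

theorem reach (x y : X) : T.gr.Reachable x y := by
  have := T.conn x y
  induction this with
  | refl => exact SimpleGraph.Reachable.refl _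
  | tail _ h ih =>
    exact ih.trans (SimpleGraph.Adj.reachable (by exact h))

theorem walk_support {x y : X} (p : T.gr.Walk x y) (e : E) (he : (T.db y - T.db x) e ≠ 0) :
    T.d0 e ∈ p.support ∧ T.d1 e ∈ p.support := by
  induction p with
  | nil => simp at he
  | @cons x x' y h p ih =>
    by_cases h1 : (T.db y - T.db x') e ≠ 0
    · have := ih h1
      simp [this]
    · obtain ⟨e', h'⟩ := h
      obtain ⟨s, hs, hse⟩ := T.J_db h'
      have h2 : (T.db x' - T.db x) e ≠ 0 := by
        intro h3
        apply he
        push Not at h1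
        have : T.db y - T.db x = (T.db y - T.db x') + (T.db x' - T.db x) := by abel
        rw [this, Finsupp.add_apply, h1, h3, add_zero]
      rw [hse] at h2
      have : e' = e := by
        by_contra hne
        apply h2
        classical
        rw [Finsupp.single_apply, if_neg hne]
      subst this
      rcases h' with ⟨rfl, rfl⟩ | ⟨rfl, rfl⟩
      · exact ⟨SimpleGraph.Walk.start_mem_support _, List.mem_cons_of_mem _ p.start_mem_support⟩
      · exact ⟨List.mem_cons_of_mem _ p.start_mem_support, SimpleGraph.Walk.start_mem_support _⟩

theorem T1 {x y : X} (hxy : x ≠ y) : ∃ e x' s, T.J e x x' ∧ s.natAbs = 1 ∧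
    T.db x' - T.db x = Finsupp.single e s ∧ (T.db y - T.db x) e = s ∧
    ∀ e', (T.d0 e' = x ∨ T.d1 e' = x) → (T.db y - T.db x) e' ≠ 0 → e' = e := by
  classical
  obtain ⟨p, hp⟩ := (T.reach x y).exists_isPath
  cases p with
  | nil => exact absurd rfl hxy
  | @cons _ x' _ h p =>
    rw [SimpleGraph.Walk.cons_isPath_iff] at hp
    obtain ⟨e, h⟩ := h
    obtain ⟨s, hs, hse⟩ := T.J_db h
    have key : ∀ e', (T.d0 e' = x ∨ T.d1 e' = x) →
        (T.db y - T.db x) e' = Finsupp.single e s e' := by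
      intro e' he'
      have h0 : (T.db y - T.db x') e' = 0 := by
        by_contra h1
        have := T.walk_support p e' h1
        rcases he' with rfl | rfl
        · exact hp.2 this.1
        · exact hp.2 this.2
      have : T.db y - T.db x = (T.db y - T.db x') + (T.db x' - T.db x) := by abel
      rw [this, Finsupp.add_apply, h0, zero_add, hse]
    refine ⟨e, x', s, h, hs, hse, ?_, ?_⟩
    · rw [key e, Finsupp.single_eq_same]
      rcases h with h | h
      · exact Or.inl h.1
      · exact Or.inr h.2
    · intro e' he' hne
      rw [key e' he'] at hne
      by_contra h1
      apply hne
      rw [Finsupp.single_apply, if_neg (Ne.symm h1)]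

theorem T2 {x y : X} (hxy : x ≠ y) : ∃ e, (T.d0 e = x ∨ T.d1 e = x) ∧
    ∀ h : G, h • x = x → h • y = y → h • e = e := by
  obtain ⟨e, x', s, hj, hs, -, hs', hu⟩ := T.T1 hxy
  have hinc : T.d0 e = x ∨ T.d1 e = x := by
    rcases hj with h | h
    · exact Or.inl h.1
    · exact Or.inr h.2
  refine ⟨e, hinc, fun h hx hy => ?_⟩
  have h1 : act h (T.db y - T.db x) = T.db y - T.db x := by
    have h2 := T.db_smul h x
    have h3 := T.db_smul h y
    rw [hx] at h2
    rw [hy] at h3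
    rw [act_sub]
    conv_rhs => rw [h2, h3]
    abel
  apply hu
  · rw [T.d0_smul, T.d1_smul]
    rcases hinc with h | h
    · left; rw [h, hx]
    · right; rw [h, hx]
  · rw [← h1, act_apply, hs']
    rintro rfl
    simp at hs

end TreeD

/-- The sum of absolute values. -/
noncomputable def nrm (f : E →₀ ℤ) : ℕ := f.sum (fun _ a => a.natAbs)

theorem nrm_act (g : G) (f : E →₀ ℤ) : nrm (act g f) = nrm f := by
  unfold nrm act
  exact Finsupp.sum_mapDomain_index_inj (MulAction.injective g)

theorem nrm_lt (f : E →₀ ℤ) (e : E) (h : (f e).natAbs = 1) :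
    nrm (f - Finsupp.single e (f e)) < nrm f := by
  have h1 : f - Finsupp.single e (f e) = f.erase e := by
    rw [sub_eq_iff_eq_add]
    exact (Finsupp.erase_add_single e f).symm
  have h2 := Finsupp.add_sum_erase' f e (fun _ a => a.natAbs) (by simp)
  rw [h1]
  unfold nrm
  rw [← h2]
  omega

/-- Coboundaries. -/
theorem exists_cob_zpow (z : G) (e : E) (n : ℤ) (m : ℤ) :
    ∃ u : E →₀ ℤ, Finsupp.single e n - Finsupp.single (z ^ m • e) n = u - act z u := by
  induction m using Int.induction_on with
  | zero => exact ⟨0, by simp [act_zero]⟩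
  | succ i ih =>
    obtain ⟨u, hu⟩ := ih
    refine ⟨u + Finsupp.single (z ^ (i : ℤ) • e) n, ?_⟩
    rw [act_add, act_single, smul_smul, ← zpow_one_add, add_comm (1 : ℤ), add_sub_add_comm, ← hu]
    abel
  | pred i ih =>
    obtain ⟨u, hu⟩ := ih
    refine ⟨u - Finsupp.single (z ^ (-(i : ℤ) - 1) • e) n, ?_⟩
    rw [act_sub, act_single, smul_smul, ← zpow_one_add, add_sub_cancel, sub_sub_sub_comm, ← hu]
    abel

theorem exists_cob (z : G) (f : E →₀ ℤ)
    (hf : Finsupp.mapDomain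
      (Quotient.mk'' : E → MulAction.orbitRel.Quotient (Subgroup.zpowers z) E) f = 0) :
    ∃ u : E →₀ ℤ, f = u - act z u := by
  let q : E → MulAction.orbitRel.Quotient (Subgroup.zpowers z) E := Quotient.mk''
  have key : ∀ f : E →₀ ℤ, ∃ u : E →₀ ℤ,
      f - Finsupp.mapDomain Quotient.out (Finsupp.mapDomain q f) = u - act z u := by
    intro f
    induction f using Finsupp.induction_linear with
    | zero => exact ⟨0, by simp [act_zero]⟩
    | add f g hf hg =>
      obtain ⟨u, hu⟩ := hf
      obtain ⟨v, hv⟩ := hg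
      refine ⟨u + v, ?_⟩
      rw [Finsupp.mapDomain_add, Finsupp.mapDomain_add, act_add, add_sub_add_comm,
        add_sub_add_comm, hu, hv]
    | single e n =>
      rw [Finsupp.mapDomain_single, Finsupp.mapDomain_single]
      have : q (q e).out = q e := Quotient.out_eq' (q e)
      obtain ⟨⟨_, m, rfl⟩, hm⟩ := Quotient.exact' this
      have hm : z ^ m • e = (q e).out := hm
      rw [← hm]
      exact exists_cob_zpow z e n m
  obtain ⟨u, hu⟩ := key f
  refine ⟨u, ?_⟩
  rw [hf, Finsupp.mapDomain_zero, sub_zero] at hu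
  exact hu

theorem TreeD.exists_u_central (K : Subgroup G) (z b w : G) (hb : b ∈ K) (hw : w ∈ K)
    (hz : ∀ k ∈ K, Commute k z)
    (hab : ∀ (e : E) (g h : G), g • e = e → h • e = e → Commute g h)
    (hnc : ∀ n m : ℕ, 0 < n → 0 < m → ¬ Commute (b ^ n) (w ^ m)) :
    ∃ u : E →₀ ℤ, T.dl z = u - act z u := by
  apply exists_cob
  let q : E → MulAction.orbitRel.Quotient (Subgroup.zpowers z) E := Quotient.mk''
  change Finsupp.mapDomain q (T.dl z) = 0
  set D := Finsupp.mapDomain q (T.dl z) with hD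
  have hqz : ∀ x : E, q (z • x) = q x := by
    intro x
    apply Quotient.sound'
    exact ⟨⟨z, Subgroup.mem_zpowers _⟩, rfl⟩
  have hq_iff : ∀ x y : E, q x = q y ↔ ∃ m : ℤ, z ^ m • y = x := by
    intro x y
    constructor
    · intro h
      obtain ⟨⟨_, m, rfl⟩, hm⟩ := Quotient.exact' h
      exact ⟨m, hm⟩
    · rintro ⟨m, rfl⟩
      exact Quotient.sound' ⟨⟨z ^ m, m, rfl⟩, rfl⟩
  have hinv : ∀ k ∈ K, ∀ e, D (q (k • e)) = D (q e) := by
    intro k hk e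
    have hcz : ∀ m : ℤ, k * z ^ m = z ^ m * k := fun m => ((hz k hk).zpow_right m).eq
    let kb : MulAction.orbitRel.Quotient (Subgroup.zpowers z) E →
        MulAction.orbitRel.Quotient (Subgroup.zpowers z) E :=
      Quotient.lift (fun e => q (k • e)) (by
        intro x y hxy
        have hxy' : q x = q y := Quotient.sound hxy
        obtain ⟨m, rfl⟩ := (hq_iff x y).mp hxy'
        exact (hq_iff _ _).mpr ⟨m, by rw [smul_smul, smul_smul, hcz]⟩)
    have hkb : ∀ e, kb (q e) = q (k • e) := fun e => rfl
    have hinj : Function.Injective kb := by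
      intro x y
      induction x using Quotient.inductionOn'
      induction y using Quotient.inductionOn'
      rename_i x y
      intro h
      obtain ⟨m, hm⟩ := (hq_iff (k • x) (k • y)).mp h
      refine (hq_iff _ _).mpr ⟨m, ?_⟩
      rw [smul_smul, ← hcz, ← smul_smul] at hm
      exact MulAction.injective k hm
    have h1 := T.dl_mul k z
    rw [(hz k hk).eq, T.dl_mul] at h1
    have h2 := congrArg (Finsupp.mapDomain q) h1
    have h3 : ∀ f : E →₀ ℤ, Finsupp.mapDomain q (act z f) = Finsupp.mapDomain q f := by
      intro f
      unfold act
      rw [← Finsupp.mapDomain_comp]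
      congr 1
      ext x
      exact hqz x
    rw [Finsupp.mapDomain_add, Finsupp.mapDomain_add, h3, add_comm, add_right_inj] at h2
    have h4 : Finsupp.mapDomain q (act k (T.dl z)) = Finsupp.mapDomain kb D := by
      unfold act
      rw [hD, ← Finsupp.mapDomain_comp, ← Finsupp.mapDomain_comp]
      rfl
    rw [h4] at h2
    have h5 : D (kb (q e)) = Finsupp.mapDomain kb D (kb (q e)) := by rw [← h2]
    rw [← hkb, h5, Finsupp.mapDomain_apply hinj]
  by_contra hne
  obtain ⟨y, hy⟩ := Finsupp.ne_iff.mp hne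
  induction y using Quotient.inductionOn'
  rename_i e
  change D (q e) ≠ 0 at hy
  have pig : ∀ k ∈ K, ∃ n : ℕ, 0 < n ∧ ∃ m : ℤ, (k ^ n * z ^ m) • e = e := by
    intro k hk
    have hmem : ∀ n : ℕ, q (k ^ n • e) ∈ D.support := by
      intro n
      rw [Finsupp.mem_support_iff, hinv _ (K.pow_mem hk n)]
      exact hy
    obtain ⟨i, j, hij, h⟩ := Finite.exists_ne_map_eq_of_infinite
      (fun n : ℕ => (⟨q (k ^ n • e), hmem n⟩ : D.support))
    wlog hlt : i < j generalizing i j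
    · exact this j i hij.symm h.symm (by omega)
    have h' : q (k ^ i • e) = q (k ^ j • e) := congrArg Subtype.val h
    obtain ⟨m, hm⟩ := (hq_iff _ _).mp h'
    refine ⟨j - i, by omega, m, ?_⟩
    apply MulAction.injective (k ^ i)
    change k ^ i • _ = k ^ i • e
    rw [← hm, smul_smul, smul_smul, ← mul_assoc, ← pow_add, Nat.add_sub_cancel' hlt.le,
      (((hz k hk).pow_left j).zpow_right m).eq]
  obtain ⟨n, hn, m, h1⟩ := pig b hb
  obtain ⟨n', hn', m', h2⟩ := pig w hw
  apply hnc n n' hn hn'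
  have h3 := hab e _ _ h1 h2
  have c1 : Commute (b ^ n) (z ^ m') := ((hz b hb).pow_left n).zpow_right m'
  have c2 : Commute (w ^ n') (z ^ m) := ((hz w hw).pow_left n').zpow_right m
  have c3 : Commute (z ^ m) (z ^ m') := (Commute.refl z).zpow_zpow m m'
  have h4 : Commute (b ^ n * z ^ m * (z ^ m)⁻¹) (w ^ n' * z ^ m' * (z ^ m')⁻¹) := by
    apply Commute.mul_left
    · apply Commute.mul_right h3
      exact (c1.mul_left c3).inv_right
    · apply Commute.inv_left
      apply Commute.mul_right
      · exact c2.symm.mul_right c3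
      · exact c3.inv_right
  simpa using h4

theorem TreeD.exists_fix (T : TreeD G E X) (K : Subgroup G) (z₁ z₂ b w : G) (hb : b ∈ K) (hw : w ∈ K)
    (hz₁ : ∀ k ∈ K, Commute k z₁) (hz₂ : ∀ k ∈ K, Commute k z₂)
    (hcyc : ∀ (e : E), ∃ c : G, ∀ g : G, g • e = e → g ∈ Subgroup.zpowers c)
    (hind : ∀ n m : ℤ, z₁ ^ n = z₂ ^ m → n = 0 ∧ m = 0)
    (hnc : ∀ n m : ℕ, 0 < n → 0 < m → ¬ Commute (b ^ n) (w ^ m)) :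
    ∃ x : X, ∀ k ∈ K, k • x = x := by
  classical
  have hab : ∀ (e : E) (g h : G), g • e = e → h • e = e → Commute g h := by
    intro e g h hg hh
    obtain ⟨c, hc⟩ := hcyc e
    obtain ⟨n, rfl⟩ := hc g hg
    obtain ⟨m, rfl⟩ := hc h hh
    exact (Commute.refl c).zpow_zpow n m
  obtain ⟨u₁, hu₁⟩ := T.exists_u_central K z₁ b w hb hw hz₁ hab hnc
  obtain ⟨u₂, hu₂⟩ := T.exists_u_central K z₂ b w hb hw hz₂ hab hnc
  have eta : ∀ (z : G) (u : E →₀ ℤ), (∀ k ∈ K, Commute k z) → T.dl z = u - act z u →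
      ∀ k ∈ K, ∀ e, (∀ n : ℕ, 0 < n → z ^ n • e ≠ e) → T.dl k e = u e - act k u e := by
    intro z u hz hu k hk e he
    set η := T.dl k - (u - act k u) with hη
    have hinv : act z η = η := by
      have h1 := T.dl_mul k z
      rw [(hz k hk).eq, T.dl_mul, hu, act_sub, ← act_mul k z, (hz k hk).eq, act_mul z k] at h1
      rw [hη, act_sub, act_sub]
      have h2 : act z (T.dl k) = T.dl k + (act k u - act z (act k u)) - (u - act z u) := by
        rw [← h1]; abel
      rw [h2]; abel
    have hpow : ∀ n : ℕ, η (z ^ n • e) = η e := by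
      intro n
      induction n with
      | zero => simp
      | succ n ih => rw [pow_succ', mul_smul, ← ih]; conv_lhs => rw [← hinv]
                     exact act_apply _ _ _
    have h0 : η e = 0 := by
      by_contra hne
      obtain ⟨i, j, hij, h⟩ := Finite.exists_ne_map_eq_of_infinite
        (fun n : ℕ => (⟨z ^ n • e, by
          rw [Finsupp.mem_support_iff, hpow]; exact hne⟩ : η.support))
      wlog hlt : i < j generalizing i j
      · exact this j i hij.symm h.symm (by omega)
      have h' : z ^ i • e = z ^ j • e := congrArg Subtype.val h
      apply he (j - i) (by omega)
      apply MulAction.injective (z ^ i)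
      change z ^ i • _ = z ^ i • e
      rw [h', smul_smul, ← pow_add, Nat.add_sub_cancel' hlt.le]
    rw [hη, Finsupp.sub_apply, Finsupp.sub_apply] at h0
    linarith
  let P : E → Prop := fun e => ∀ n : ℕ, 0 < n → z₁ ^ n • e ≠ e
  let u : E →₀ ℤ := Finsupp.filter P u₁ + Finsupp.filter (fun e => ¬ P e) u₂
  have huP : ∀ e, P e → u e = u₁ e := by
    intro e he
    change (Finsupp.filter P u₁ + Finsupp.filter (fun e => ¬ P e) u₂) e = _
    rw [Finsupp.add_apply, Finsupp.filter_apply_pos _ _ he, Finsupp.filter_apply_neg, add_zero]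
    simpa using he
  have huN : ∀ e, ¬ P e → u e = u₂ e := by
    intro e he
    change (Finsupp.filter P u₁ + Finsupp.filter (fun e => ¬ P e) u₂) e = _
    rw [Finsupp.add_apply, Finsupp.filter_apply_neg _ _ he,
      Finsupp.filter_apply_pos (fun e => ¬ P e) _ he,
      zero_add]
  have hPK : ∀ k ∈ K, ∀ e, P e → P (k • e) := by
    intro k hk e he n hn h
    apply he n hn
    rw [smul_smul, ← ((hz₁ k hk).pow_right n).eq, ← smul_smul] at h
    exact MulAction.injective k h
  have hP2 : ∀ e, ¬ P e → ∀ n : ℕ, 0 < n → z₂ ^ n • e ≠ e := by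
    intro e he n hn h
    change ¬ (∀ n : ℕ, 0 < n → z₁ ^ n • e ≠ e) at he
    push Not at he
    obtain ⟨m, hm, h1⟩ := he
    obtain ⟨c, hc⟩ := hcyc e
    obtain ⟨p, hp⟩ := hc _ h1
    obtain ⟨r, hr⟩ := hc _ h
    simp only at hp hr
    have h2 : z₁ ^ ((m : ℤ) * r) = z₂ ^ ((n : ℤ) * p) := by
      rw [zpow_mul, zpow_mul, zpow_natCast, zpow_natCast, ← hp, ← hr, ← zpow_mul, ← zpow_mul,
        mul_comm]
    have h3 := (hind _ _ h2).1
    have hr0 : r = 0 := by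
      rcases mul_eq_zero.mp h3 with h | h
      · omega
      · exact h
    rw [hr0, zpow_zero] at hr
    have h4 := (hind 0 n (by rw [zpow_zero, zpow_natCast, ← hr])).2
    omega
  have hu : ∀ k ∈ K, T.dl k = u - act k u := by
    intro k hk
    ext e
    rw [Finsupp.sub_apply, act_apply']
    by_cases he : P e
    · rw [huP e he, huP _ (hPK _ (K.inv_mem hk) e he), eta z₁ u₁ hz₁ hu₁ k hk e he, act_apply']
    · have he' : ¬ P (k⁻¹ • e) := by
        intro h
        apply he
        have := hPK k hk _ h
        rwa [smul_inv_smul] at this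
      rw [huN e he, huN _ he', eta z₂ u₂ hz₂ hu₂ k hk e (hP2 e he), act_apply']
  let F : X → ℕ := fun x => nrm (u - T.db x)
  have hF : ∀ k ∈ K, ∀ x, F (k • x) = F x := by
    intro k hk x
    change nrm (u - T.db (k • x)) = nrm (u - T.db x)
    rw [← nrm_act k (u - T.db x), T.db_smul, hu k hk, act_sub]
    congr 1
    abel
  have : Nonempty X := ⟨T.o⟩
  let M : Set X := {x | ∀ y, F x ≤ F y}
  have hMne : M.Nonempty := ⟨Function.argmin F, fun y => Function.argmin_le F y⟩
  have hMfin : M.Finite := by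
    apply Set.Finite.subset (s := {T.o} ∪ (T.d0 '' (u.support : Set E) ∪ T.d1 '' (u.support : Set E)))
    · exact (Set.finite_singleton _).union
        ((u.support.finite_toSet.image _).union (u.support.finite_toSet.image _))
    · intro y hy
      by_cases hyo : y = T.o
      · left; exact hyo
      right
      obtain ⟨e, y', s, hj, hs, hd, hs', -⟩ := T.T1 hyo
      have hue : u e ≠ 0 := by
        intro h0
        have h1 : (u - T.db y) e = s := by
          rw [Finsupp.sub_apply, h0, ← hs', T.db_o, Finsupp.sub_apply]; rfl
        have h2 := nrm_lt (u - T.db y) e (by rw [h1]; exact hs)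
        have h3 : u - T.db y - Finsupp.single e ((u - T.db y) e) = u - T.db y' := by
          rw [h1, ← hd]; abel
        rw [h3] at h2
        have h4 := hy y'
        exact absurd h2 (not_lt.mpr h4)
      rcases hj with h | h
      · left; exact ⟨e, Finsupp.mem_support_iff.mpr hue, h.1⟩
      · right; exact ⟨e, Finsupp.mem_support_iff.mpr hue, h.2⟩
  have hMK : ∀ k ∈ K, ∀ x ∈ M, k • x ∈ M := by
    intro k hk x hx y
    rw [hF k hk]
    exact hx y
  have pig : ∀ k ∈ K, ∀ x ∈ M, ∃ n : ℕ, 0 < n ∧ k ^ n • x = x := by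
    intro k hk x hx
    have : Finite M := hMfin
    obtain ⟨i, j, hij, h⟩ := Finite.exists_ne_map_eq_of_infinite
      (fun n : ℕ => (⟨k ^ n • x, hMK _ (K.pow_mem hk n) x hx⟩ : M))
    wlog hlt : i < j generalizing i j
    · exact this j i hij.symm h.symm (by omega)
    have h' : k ^ i • x = k ^ j • x := congrArg Subtype.val h
    refine ⟨j - i, by omega, ?_⟩
    apply MulAction.injective (k ^ i)
    change k ^ i • _ = k ^ i • x
    rw [h', smul_smul, ← pow_add, Nat.add_sub_cancel' hlt.le]
  have powfix : ∀ (g : G) (x : X) (n m : ℕ), g ^ n • x = x → g ^ (n * m) • x = x := by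
    intro g x n m h
    rw [pow_mul]
    induction m with
    | zero => simp
    | succ m ih => rw [pow_succ, mul_smul, h, ih]
  obtain ⟨x, hx⟩ := hMne
  refine ⟨x, fun k hk => ?_⟩
  by_contra hne
  obtain ⟨e, -, he⟩ := T.T2 (Ne.symm hne)
  have pig2 : ∀ g ∈ K, ∃ n : ℕ, 0 < n ∧ g ^ n • e = e := by
    intro g hg
    obtain ⟨n, hn, h1⟩ := pig g hg x hx
    obtain ⟨m, hm, h2⟩ := pig g hg (k • x) (hMK k hk x hx)
    refine ⟨n * m, Nat.mul_pos hn hm, he _ (powfix g x n m h1) ?_⟩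
    rw [mul_comm]
    exact powfix g _ m n h2
  obtain ⟨n, hn, h1⟩ := pig2 b hb
  obtain ⟨m, hm, h2⟩ := pig2 w hw
  exact hnc n m hn hm (hab e _ _ h1 h2)

end TreeSec

end RaagProof

namespace RaagProof

section Nielsen

open FreeGroup

variable {α : Type*}

theorem exists_cancel (L₁ : List (α × Bool)) : ∀ L₂ : List (α × Bool), IsReduced L₁ →
    IsReduced L₂ → ∃ P Q R, L₁ = P ++ Q ∧ L₂ = invRev Q ++ R ∧ IsReduced (P ++ R) := by
  classical
  induction L₁ using List.reverseRecOn with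
  | nil => intro L₂ _ h; exact ⟨[], [], L₂, by simp [h]⟩
  | append_singleton P₀ a ih =>
    intro L₂ h1 h2
    have hP₀ : IsReduced P₀ := List.IsChain.left_of_append h1
    cases L₂ with
    | nil => exact ⟨P₀ ++ [a], [], [], by simp, by simp, by simpa using h1⟩
    | cons b R₀ =>
      by_cases hab : a.1 = b.1 → a.2 = b.2
      · refine ⟨P₀ ++ [a], [], b :: R₀, by simp, by simp, ?_⟩
        have h3 : IsReduced ([a] ++ b :: R₀) := isReduced_cons_cons.mpr ⟨hab, h2⟩
        simpa using IsReduced.append_overlap h1 h3 (by simp)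
      · push Not at hab
        have hR₀ : IsReduced R₀ := List.IsChain.right_of_append (l₁ := [b]) h2
        obtain ⟨P, Q, R, rfl, rfl, hr⟩ := ih R₀ hP₀ hR₀
        refine ⟨P, Q ++ [a], R, by simp, ?_, hr⟩
        have : b = (a.1, !a.2) := by
          ext1
          · exact hab.1.symm
          · have := hab.2
            revert this
            cases a.2 <;> cases b.2 <;> simp
        simp [invRev, this]

/-- Nonbacktracking products. -/
inductive Good (U : Set (List (α × Bool))) : FreeGroup α → List (α × Bool) → Prop
  | base (u) (hu : u ∈ U) : Good U (mk u) u
  | step (g u u') (hg : Good U g u) (hu' : u' ∈ U) (hne : (FreeGroup.mk u) * FreeGroup.mk u' ≠ 1) :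
      Good U (g * mk u') u'

theorem good_inv {U : Set (List (α × Bool))} {q : ℕ} (hlen : ∀ u ∈ U, u.length = 2 * q + 1)
    (hred : ∀ u ∈ U, IsReduced u) (hinv : ∀ u ∈ U, invRev u ∈ U)
    (htake : ∀ u ∈ U, ∀ u' ∈ U, u.take (q + 1) = u'.take (q + 1) → u = u')
    {g : FreeGroup α} {u : List (α × Bool)} (h : Good U g u) :
    u ∈ U ∧ ∃ W' A B, IsReduced (W' ++ B) ∧ g = mk (W' ++ B) ∧ u = A ++ B ∧ B.length = q + 1 ∧
      q ≤ W'.length := by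
  induction h with
  | base u hu =>
    refine ⟨hu, u.take q, u.take q, u.drop q, ?_, ?_, ?_, ?_, ?_⟩
    · simpa using hred u hu
    · simp
    · simp
    · simp [hlen u hu]; omega
    · simp [hlen u hu]; omega
  | step g u u' hg hu' hne ih =>
    obtain ⟨hu, W', A, B, hr, rfl, rfl, hB, hW'⟩ := ih
    refine ⟨hu', ?_⟩
    obtain ⟨P, Q, R, h1, rfl, hPR⟩ := exists_cancel _ _ hr (hred u' hu')
    have hl := hlen _ hu'
    have hl1 := congrArg List.length h1
    simp only [List.length_append, invRev_length] at hl hl1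
    have hQ : Q.length ≤ q := by
      by_contra hQ
      apply hne
      obtain ⟨Q', rfl⟩ : B <:+ Q :=
        List.suffix_of_suffix_length_le (List.suffix_append _ _) ⟨P, h1.symm⟩ (by omega)
      have : invRev (A ++ B) = invRev (Q' ++ B) ++ R := by
        apply htake _ (hinv _ hu) _ hu'
        rw [invRev_append, invRev_append, List.append_assoc, List.take_append_of_le_length,
          List.take_append_of_le_length] <;> simp [hB]
      rw [← this, ← inv_mk, mul_inv_cancel]
    refine ⟨P ++ R.take (R.length - (q + 1)), invRev Q ++ R.take (R.length - (q + 1)),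
      R.drop (R.length - (q + 1)), ?_, ?_, ?_, ?_, ?_⟩
    · simpa using hPR
    · rw [h1, List.append_assoc, List.take_append_drop, ← mul_mk, ← mul_mk, ← mul_mk, ← inv_mk]
      group
    · simp
    · simp; omega
    · simp; omega

theorem norm_ge {U : Set (List (α × Bool))} {q : ℕ} (hlen : ∀ u ∈ U, u.length = 2 * q + 1)
    (hred : ∀ u ∈ U, IsReduced u) (hinv : ∀ u ∈ U, invRev u ∈ U)
    (htake : ∀ u ∈ U, ∀ u' ∈ U, u.take (q + 1) = u'.take (q + 1) → u = u')
    {g : FreeGroup α} (hg : g ∈ Subgroup.closure (mk '' U)) :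
    g = 1 ∨ ∃ W, IsReduced W ∧ g = mk W ∧ 2 * q + 1 ≤ W.length := by
  have mulr : ∀ g u', u' ∈ U → (g = 1 ∨ ∃ u, Good U g u) →
      (g * mk u' = 1 ∨ ∃ u, Good U (g * mk u') u) := by
    rintro g u' hu' (rfl | ⟨u, h⟩)
    · right; exact ⟨u', by rw [one_mul]; exact Good.base u' hu'⟩
    · by_cases hne : mk u * mk u' = 1
      · cases h with
        | base _ hu => left; exact hne
        | step g u₀ _ hg' hu hne' =>
          right
          refine ⟨u₀, ?_⟩
          rw [mul_assoc, hne, mul_one]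
          exact hg'
      · right; exact ⟨u', Good.step g u u' h hu' hne⟩
  have : g = 1 ∨ ∃ u, Good U g u := by
    induction hg using Subgroup.closure_induction_right with
    | one => left; rfl
    | mul_right g _ y hy ih =>
      obtain ⟨u, hu, rfl⟩ := hy
      exact mulr g u hu ih
    | mul_inv_cancel g _ y hy ih =>
      obtain ⟨u, hu, rfl⟩ := hy
      rw [inv_mk]
      exact mulr g _ (hinv u hu) ih
  rcases this with rfl | ⟨u, h⟩
  · left; rfl
  · right
    obtain ⟨-, W', A, B, h1, h2, -, h3, h4⟩ := good_inv hlen hred hinv htake h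
    exact ⟨_, h1, h2, by simp; omega⟩

variable {M : Type*} [Group M]

/-- Translation action. -/
def trans : M →* MulAut (FreeGroup M) where
  toFun c := FreeGroup.freeGroupCongr (Equiv.mulLeft c)
  map_one' := by ext x; induction x using FreeGroup.induction_on <;> simp_all
  map_mul' c d := by
    apply MulEquiv.toMonoidHom_injective
    ext x
    simp [mul_assoc]

theorem trans_of (c d : M) : trans c (of d) = of (c * d) := by
  simp [trans]

theorem trans_mk (c : M) (L : List (M × Bool)) :
    trans c (mk L) = mk (L.map (fun x => (c * x.1, x.2))) := by
  simp [trans, FreeGroup.freeGroupCongr]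

theorem generator_translates {y : FreeGroup M}
    (h : of 1 ∈ Subgroup.closure (Set.range fun c => trans c y)) :
    ∃ c : M, y = of c ∨ y = (of c)⁻¹ := by
  classical
  set Y := y.toWord with hY
  have hYr : IsReduced Y := isReduced_toWord
  let tr : M → List (M × Bool) → List (M × Bool) := fun c L => L.map (fun x => (c * x.1, x.2))
  have hymk : mk Y = y := mk_toWord
  -- odd length
  have hodd : Odd Y.length := by
    let p : FreeGroup M →* Multiplicative (ZMod 2) := FreeGroup.lift (fun _ => Multiplicative.ofAdd 1)
    have hp : ∀ L : List (M × Bool), p (mk L) = Multiplicative.ofAdd (L.length : ZMod 2) := by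
      intro L
      induction L with
      | nil => simp [← FreeGroup.one_eq_mk]
      | cons a L ih =>
        have : mk (a :: L) = mk [a] * mk L := by rw [mul_mk]; rfl
        rw [this, _root_.map_mul, ih]
        have h1 : p (mk [a]) = Multiplicative.ofAdd (1 : ZMod 2) := by
          obtain ⟨a, b⟩ := a
          cases b
          · simp only [p, FreeGroup.lift_mk]; simp; decide
          · simp only [p, FreeGroup.lift_mk]; simp
        rw [h1, ← ofAdd_add]
        simp [add_comm]
    by_contra hne
    rw [Nat.not_odd_iff_even] at hne
    have hle : Subgroup.closure (Set.range fun c => trans c y) ≤ p.ker := by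
      rw [Subgroup.closure_le]
      rintro _ ⟨c, rfl⟩
      change p (trans c y) = 1
      rw [← hymk, trans_mk, hp, List.length_map, (ZMod.natCast_eq_zero_iff_even).mpr hne]
      rfl
    have h1 : p (of 1) = 1 := hle h
    have h2 : p (of 1) = Multiplicative.ofAdd 1 := by simp [p]
    rw [h2] at h1
    revert h1
    decide
  obtain ⟨q, hq⟩ := hodd
  let U : Set (List (M × Bool)) := {u | ∃ c, u = tr c Y ∨ u = invRev (tr c Y)}
  have htrl : ∀ c L, (tr c L).length = L.length := fun c L => by simp [tr]
  have htrr : ∀ c, IsReduced (tr c Y) := by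
    intro c
    change List.IsChain _ (List.map _ _)
    rw [List.isChain_map]
    simpa [FreeGroup.IsReduced] using hYr
  have hYq : q < Y.length := by omega
  have hlen : ∀ u ∈ U, u.length = 2 * q + 1 := by
    rintro u ⟨c, rfl | rfl⟩
    · rw [htrl, hq]
    · rw [invRev_length, htrl, hq]
  have hred : ∀ u ∈ U, IsReduced u := by
    rintro u ⟨c, rfl | rfl⟩
    · exact htrr c
    · rw [isReduced_iff_reduce_eq, reduce_invRev, (htrr c).reduce_eq]
  have hinv : ∀ u ∈ U, invRev u ∈ U := by
    rintro u ⟨c, rfl | rfl⟩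
    · exact ⟨c, Or.inr rfl⟩
    · exact ⟨c, Or.inl (by simp)⟩
  have hget : ∀ (u u' : List (M × Bool)), u.take (q + 1) = u'.take (q + 1) →
      ∀ i, i ≤ q → u[i]? = u'[i]? := by
    intro u u' h i hi
    have := congrArg (fun l => l[i]?) h
    simpa [List.getElem?_take, Nat.lt_succ_of_le hi] using this
  have gpos : ∀ c i (hi : i < Y.length), (tr c Y)[i]? = some (c * Y[i].1, Y[i].2) := by
    intro c i hi
    simp [tr, hi]
  have gneg : ∀ c i (hi : i < Y.length), (invRev (tr c Y))[i]? =
      some (c * Y[Y.length - 1 - i].1, !Y[Y.length - 1 - i].2) := by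
    intro c i hi
    have : Y.length - 1 - i < Y.length := by omega
    simp [tr, invRev, hi, List.getElem?_reverse, this]
  have hmid : Y.length - 1 - q = q := by omega
  have htake : ∀ u ∈ U, ∀ u' ∈ U, u.take (q + 1) = u'.take (q + 1) → u = u' := by
    rintro u ⟨c, hu⟩ u' ⟨c', hu'⟩ h
    have h0 := hget u u' h 0 (by omega)
    have hm := hget u u' h q le_rfl
    rcases hu with rfl | rfl <;> rcases hu' with rfl | rfl
    · rw [gpos c 0 (by omega), gpos c' 0 (by omega)] at h0
      simp at h0
      rw [h0]
    · rw [gpos c q hYq, gneg c' q hYq] at hm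
      simp [hmid] at hm
    · rw [gneg c q hYq, gpos c' q hYq] at hm
      simp [hmid] at hm
    · rw [gneg c 0 (by omega), gneg c' 0 (by omega)] at h0
      simp at h0
      rw [h0]
  have hmem : of 1 ∈ Subgroup.closure (mk '' U) := by
    refine Subgroup.closure_mono ?_ h
    rintro _ ⟨c, rfl⟩
    refine ⟨tr c Y, ⟨c, Or.inl rfl⟩, ?_⟩
    change _ = trans c y
    rw [← hymk, trans_mk]
  have hq0 : q = 0 := by
    rcases norm_ge hlen hred hinv htake hmem with h1 | ⟨W, hW, h1, h2⟩
    · exact absurd h1 (of_ne_one 1)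
    · have := congrArg toWord h1
      rw [toWord_of, toWord_mk, hW.reduce_eq] at this
      rw [← this] at h2
      simp at h2
      exact h2
  subst hq0
  obtain ⟨a, ha⟩ := List.length_eq_one_iff.mp hq
  obtain ⟨c, b⟩ := a
  refine ⟨c, ?_⟩
  rw [← hymk, ha]
  cases b
  · right
    rw [← FreeGroup.mk_toWord (x := (of c)⁻¹), toWord_inv, toWord_of]
    rfl
  · left; rfl

/-- Lemma F. -/
theorem lemmaF (s : FreeGroup M ⋊[trans] M)
    (h : SemidirectProduct.inl (of 1) ∈ Subgroup.closure
      (Set.range (SemidirectProduct.inr : M →* FreeGroup M ⋊[trans] M) ∪ {s})) :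
    ∃ m m' : M, s = SemidirectProduct.inr m * SemidirectProduct.inl (of 1) * SemidirectProduct.inr m'
      ∨ s = SemidirectProduct.inr m * (SemidirectProduct.inl (of 1))⁻¹ *
        SemidirectProduct.inr m' := by
  set N := Subgroup.closure (Set.range fun c => trans c s.left) with hN
  have hNi : ∀ c, ∀ x ∈ N, trans c x ∈ N := by
    intro c x hx
    induction hx using Subgroup.closure_induction with
    | mem x hx =>
      obtain ⟨d, rfl⟩ := hx
      apply Subgroup.subset_closure
      exact ⟨c * d, by simp⟩
    | one => rw [_root_.map_one]; exact N.one_mem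
    | mul x y _ _ hx hy => rw [_root_.map_mul]; exact N.mul_mem hx hy
    | inv x _ hx => rw [_root_.map_inv]; exact N.inv_mem hx
  let Q : Subgroup (FreeGroup M ⋊[trans] M) :=
    { carrier := {x | x.left ∈ N}
      mul_mem' := fun {a b} ha hb => N.mul_mem ha (hNi _ _ hb)
      one_mem' := N.one_mem
      inv_mem' := fun {a} ha => hNi _ _ (N.inv_mem ha) }
  have hle : Subgroup.closure
      (Set.range (SemidirectProduct.inr : M →* FreeGroup M ⋊[trans] M) ∪ {s}) ≤ Q := by
    rw [Subgroup.closure_le]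
    rintro _ (⟨m, rfl⟩ | rfl)
    · exact N.one_mem
    · apply Subgroup.subset_closure
      exact ⟨1, by simp⟩
  have h1 : of 1 ∈ N := hle h
  obtain ⟨c, hc⟩ := generator_translates h1
  refine ⟨c, c⁻¹ * s.right, ?_⟩
  have hs := SemidirectProduct.inl_left_mul_inr_right s
  have hc1 : (SemidirectProduct.inl (of c) : FreeGroup M ⋊[trans] M) =
      SemidirectProduct.inr c * SemidirectProduct.inl (of 1) * SemidirectProduct.inr c⁻¹ := by
    rw [← SemidirectProduct.inl_aut, trans_of, mul_one]
  rcases hc with hc | hc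
  · left
    rw [← hs, hc, hc1]
    simp [mul_assoc]
  · right
    rw [← hs, hc, _root_.map_inv, hc1]
    simp [mul_assoc]

end Nielsen

section LemmaG

variable {V : Type*} {Λ : SimpleGraph V}

/-- Lemma G. -/
theorem lemmaG (t : V) (hZ : ∀ z, Λ.Adj t z → ∀ v, v ≠ z → Λ.Adj z v)
    (θ : RAAG Λ →* RAAG Λ) (hθ : Function.Surjective θ)
    (hid : ∀ v, v ≠ t → θ (gen Λ v) = gen Λ v) :
    ∃ g ∈ Subgroup.closure (gen Λ '' {v | v ≠ t ∧ ¬ Λ.Adj t v}),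
    ∃ g' ∈ Subgroup.closure (gen Λ '' {v | v ≠ t ∧ ¬ Λ.Adj t v}),
    ∃ z ∈ Subgroup.closure (gen Λ '' {v | Λ.Adj t v}),
      θ (gen Λ t) = g * gen Λ t * g' * z ∨ θ (gen Λ t) = g * (gen Λ t)⁻¹ * g' * z := by
  classical
  let Y : Set V := {v | v ≠ t ∧ ¬ Λ.Adj t v}
  let M := RAAG (Λ.induce Y)
  let S := FreeGroup M ⋊[trans] M
  let kf : V → S := fun v => if v = t then SemidirectProduct.inl (FreeGroup.of 1) else
    if h : v ∈ Y then SemidirectProduct.inr (gen (Λ.induce Y) ⟨v, h⟩) else 1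
  have kft : kf t = SemidirectProduct.inl (FreeGroup.of 1) := by simp [kf]
  have kfY : ∀ v (h : v ∈ Y), kf v = SemidirectProduct.inr (gen (Λ.induce Y) ⟨v, h⟩) := by
    intro v h
    have h1 : v ≠ t := h.1
    simp [kf, h1, h]
  have kfZ : ∀ v, Λ.Adj t v → kf v = 1 := by
    intro v h
    have h1 : v ≠ t := h.ne'
    have h2 : v ∉ Y := fun hY => hY.2 h
    simp [kf, h1, h2]
  let κ : RAAG Λ →* S := lift kf (by
    intro v w h
    by_cases hv : Λ.Adj t v
    · rw [kfZ v hv]; exact Commute.one_left _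
    by_cases hw : Λ.Adj t w
    · rw [kfZ w hw]; exact Commute.one_right _
    have hvt : v ≠ t := by rintro rfl; exact hw h
    have hwt : w ≠ t := by rintro rfl; exact hv h.symm
    rw [kfY v ⟨hvt, hv⟩, kfY w ⟨hwt, hw⟩]
    apply Commute.map (gen_comm _)
    exact h)
  have κg : ∀ v, κ (gen Λ v) = kf v := fun v => lift_gen _ _ _
  let j : M →* RAAG Λ := lift (fun v => gen Λ v.1) (fun v w h => gen_comm h)
  have jg : ∀ v, j (gen _ v) = gen Λ v.1 := fun v => lift_gen _ _ _
  have jmem : ∀ m, j m ∈ Subgroup.closure (gen Λ '' Y) := by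
    intro m
    induction m using gen_induction with
    | one => rw [map_one]; exact Subgroup.one_mem _
    | gen_mul v x ih =>
      rw [map_mul, jg]
      exact Subgroup.mul_mem _ (Subgroup.subset_closure ⟨v.1, v.2, rfl⟩) ih
    | inv_mul v x ih =>
      rw [map_mul, map_inv, jg]
      exact Subgroup.mul_mem _ (Subgroup.inv_mem _ (Subgroup.subset_closure ⟨v.1, v.2, rfl⟩)) ih
  let σ : S →* RAAG Λ := SemidirectProduct.lift
    (FreeGroup.lift (fun m => j m * gen Λ t * (j m)⁻¹)) j (by
      intro m
      ext x
      simp [trans_of, mul_assoc])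
  have σr : ∀ m, σ (SemidirectProduct.inr m) = j m := fun m => SemidirectProduct.lift_inr _ _ _ _
  have σl : σ (SemidirectProduct.inl (FreeGroup.of 1)) = gen Λ t := by
    change SemidirectProduct.lift _ _ _ _ = _
    rw [SemidirectProduct.lift_inl]
    simp
  set Z := Subgroup.closure (gen Λ '' {v | Λ.Adj t v}) with hZdef
  have hcen : ∀ z ∈ Z, ∀ x, Commute z x := by
    intro z hz x
    induction hz using Subgroup.closure_induction with
    | mem z hz =>
      obtain ⟨z, hz, rfl⟩ := hz
      have hg : ∀ v, Commute (gen Λ z) (gen Λ v) := by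
        intro v
        by_cases h : v = z
        · rw [h]
        · exact gen_comm (hZ z hz v h)
      induction x using gen_induction with
      | one => exact Commute.one_right _
      | gen_mul v x ih => exact (hg v).mul_right ih
      | inv_mul v x ih => exact (hg v).inv_right.mul_right ih
    | one => exact Commute.one_left _
    | mul a b _ _ ha hb => exact ha.mul_left hb
    | inv a _ ha => exact ha.inv_left
  have hdec : ∀ x, ∃ z ∈ Z, x = σ (κ x) * z := by
    have hg : ∀ v, ∃ z ∈ Z, gen Λ v = σ (κ (gen Λ v)) * z := by
      intro v
      by_cases hv : v = t
      · subst hv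
        exact ⟨1, Z.one_mem, by rw [κg, kft, σl, mul_one]⟩
      · by_cases hv' : Λ.Adj t v
        · exact ⟨gen Λ v, Subgroup.subset_closure ⟨v, hv', rfl⟩, by
            rw [κg, kfZ v hv', map_one, one_mul]⟩
        · exact ⟨1, Z.one_mem, by rw [κg, kfY v ⟨hv, hv'⟩, σr, jg, mul_one]⟩
    intro x
    induction x using gen_induction with
    | one => exact ⟨1, Z.one_mem, by simp⟩
    | gen_mul v x ih =>
      obtain ⟨z, hz, h⟩ := ih
      obtain ⟨z', hz', h'⟩ := hg v
      refine ⟨z' * z, Z.mul_mem hz' hz, ?_⟩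
      conv_lhs => rw [h, h']
      rw [map_mul, map_mul, mul_assoc, mul_assoc, ← mul_assoc z', (hcen z' hz' (σ (κ x))).eq,
        mul_assoc]
    | inv_mul v x ih =>
      obtain ⟨z, hz, h⟩ := ih
      obtain ⟨z', hz', h'⟩ := hg v
      refine ⟨z'⁻¹ * z, Z.mul_mem (Z.inv_mem hz') hz, ?_⟩
      conv_lhs => rw [h, h', (hcen z' hz' _).symm.eq, mul_inv_rev]
      rw [map_mul, map_mul, map_inv, map_inv, mul_assoc, mul_assoc, ← mul_assoc z'⁻¹,
        ((hcen z' hz' (σ (κ x))).inv_left).eq, mul_assoc]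
  have hmem : SemidirectProduct.inl (FreeGroup.of 1) ∈ Subgroup.closure
      (Set.range (SemidirectProduct.inr : M →* S) ∪ {κ (θ (gen Λ t))}) := by
    have hall : ∀ x, κ (θ x) ∈ Subgroup.closure
        (Set.range (SemidirectProduct.inr : M →* S) ∪ {κ (θ (gen Λ t))}) := by
      have hg : ∀ v, κ (θ (gen Λ v)) ∈ Subgroup.closure
          (Set.range (SemidirectProduct.inr : M →* S) ∪ {κ (θ (gen Λ t))}) := by
        intro v
        by_cases hv : v = t
        · subst hv; exact Subgroup.subset_closure (Or.inr rfl)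
        · rw [hid v hv, κg]
          by_cases hv' : Λ.Adj t v
          · rw [kfZ v hv']; exact Subgroup.one_mem _
          · rw [kfY v ⟨hv, hv'⟩]; exact Subgroup.subset_closure (Or.inl ⟨_, rfl⟩)
      intro x
      induction x using gen_induction with
      | one => rw [map_one, map_one]; exact Subgroup.one_mem _
      | gen_mul v x ih => rw [map_mul, map_mul]; exact Subgroup.mul_mem _ (hg v) ih
      | inv_mul v x ih =>
        rw [map_mul, map_mul, map_inv, map_inv]
        exact Subgroup.mul_mem _ (Subgroup.inv_mem _ (hg v)) ih
    obtain ⟨x, hx⟩ := hθ (gen Λ t)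
    have := hall x
    rwa [hx, κg, kft] at this
  obtain ⟨m, m', hs⟩ := lemmaF _ hmem
  obtain ⟨z, hz, hz'⟩ := hdec (θ (gen Λ t))
  refine ⟨j m, jmem m, j m', jmem m', z, hz, ?_⟩
  rcases hs with hs | hs
  · left
    rw [hz', hs, map_mul, map_mul, σr, σr, σl]
  · right
    rw [hz', hs, map_mul, map_mul, map_inv, σr, σr, σl]

end LemmaG

end RaagProof

namespace RaagProof

section Concrete

/-- The core graph. -/
def gH : SimpleGraph (Fin 5) where
  Adj v w := v ≠ w ∧ ¬ ((v = 4 ∧ (w = 2 ∨ w = 3)) ∨ (w = 4 ∧ (v = 2 ∨ v = 3)))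
  symm := ⟨by decide⟩
  loopless := ⟨by decide⟩

instance : DecidableRel gH.Adj := fun v w => by unfold gH; infer_instance

/-- The adjacency predicate of the full graph. -/
def gGAdj : Fin 5 ⊕ Fin 5 → Fin 5 ⊕ Fin 5 → Prop
  | .inl v, .inl w => gH.Adj v w
  | .inl v, .inr w => v = w
  | .inr v, .inl w => v = w
  | .inr _, .inr _ => False

/-- The full graph: one leaf is attached to every vertex of the core. -/
def gG : SimpleGraph (Fin 5 ⊕ Fin 5) where
  Adj := gGAdj
  symm := ⟨by
    rintro (v | v) (w | w) h
    · exact SimpleGraph.Adj.symm (G := gH) h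
    · exact Eq.symm h
    · exact Eq.symm h
    · exact h⟩
  loopless := ⟨by
    rintro (v | v) h
    · exact gH.loopless.irrefl v h
    · exact h⟩

/-- The core group. -/
abbrev H0 := RAAG gH
/-- The full group. -/
abbrev AG := RAAG gG

/-- Leaf generators. -/
def lf (v : Fin 5) : AG := gen gG (.inr v)

/-- Inclusion of the core. -/
def io : H0 →* AG := lift (fun v => gen gG (.inl v)) (fun _ _ h => gen_comm h)

@[simp] theorem io_gen (v : Fin 5) : io (gen gH v) = gen gG (.inl v) := lift_gen _ _ _

/-- Retraction to the core. -/
def ro : AG →* H0 := lift (Sum.elim (fun v => gen gH v) (fun _ => 1)) (by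
  rintro (v | v) (w | w) h
  · exact gen_comm h
  · exact Commute.one_right _
  · exact Commute.one_left _
  · exact Commute.one_left _)

@[simp] theorem ro_inl (v : Fin 5) : ro (gen gG (.inl v)) = gen gH v := lift_gen _ _ _
@[simp] theorem ro_lf (v : Fin 5) : ro (lf v) = 1 := lift_gen _ _ _

@[simp] theorem ro_io (x : H0) : ro (io x) = x := by
  have : ro.comp io = MonoidHom.id _ := hom_ext (fun v => by simp)
  exact DFunLike.congr_fun this x

theorem io_inj : Function.Injective io := Function.LeftInverse.injective ro_io

theorem io_lf_comm (v : Fin 5) : Commute (io (gen gH v)) (lf v) := by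
  rw [io_gen]
  exact gen_comm (Γ := gG) (v := .inl v) (w := .inr v) (by exact rfl)

theorem lf_not_mem (v : Fin 5) : lf v ∉ io.range := by
  rintro ⟨x, hx⟩
  have h1 : (chi gG (.inr v)).comp io = 1 := hom_ext (fun w => by
    simp only [MonoidHom.comp_apply, io_gen, MonoidHom.one_apply]
    exact chi_ne (by simp))
  have h2 := DFunLike.congr_fun h1 x
  rw [MonoidHom.comp_apply, hx, lf, chi_self] at h2
  exact absurd (show Multiplicative.ofAdd (1 : ℤ) = 1 from h2) (by decide)

/-- Edges. -/
abbrev EE := Σ i : Fin 5, AG ⧸ Subgroup.zpowers (io (gen gH i))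
/-- Vertices. -/
abbrev XX := AG ⧸ io.range

theorem smul_EE (g : AG) (i : Fin 5) (h : AG) :
    g • (⟨i, (h : AG ⧸ Subgroup.zpowers (io (gen gH i)))⟩ : EE) = ⟨i, ((g * h : AG) : _ ⧸ _)⟩ := rfl

theorem fix_EE (g : AG) (i : Fin 5) (h : AG) :
    g • (⟨i, (h : AG ⧸ Subgroup.zpowers (io (gen gH i)))⟩ : EE) = ⟨i, (h : _ ⧸ _)⟩ ↔
      ∃ n : ℤ, g = h * io (gen gH i) ^ n * h⁻¹ := by
  rw [smul_EE]
  have : ((⟨i, ((g * h : AG) : AG ⧸ Subgroup.zpowers (io (gen gH i)))⟩ : EE) =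
      ⟨i, (h : AG ⧸ Subgroup.zpowers (io (gen gH i)))⟩) ↔
      ((g * h : AG) : AG ⧸ Subgroup.zpowers (io (gen gH i))) = (h : _ ⧸ _) := by
    constructor
    · intro h; exact eq_of_heq (Sigma.mk.inj h).2
    · intro h; rw [h]
  rw [this, eq_comm, QuotientGroup.eq, Subgroup.mem_zpowers_iff]
  constructor
  · rintro ⟨n, hn⟩
    exact ⟨n, by rw [hn]; group⟩
  · rintro ⟨n, rfl⟩
    exact ⟨n, by group⟩

theorem fix_XX (g h : AG) : g • (h : XX) = (h : XX) ↔ h⁻¹ * g * h ∈ io.range := by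
  change ((g * h : AG) : XX) = (h : XX) ↔ _
  rw [eq_comm, QuotientGroup.eq, mul_assoc]

theorem fix_o (g : AG) : g • ((1 : AG) : XX) = ((1 : AG) : XX) ↔ g ∈ io.range := by
  rw [fix_XX]; simp

theorem exists_tree : ∃ T : TreeD AG EE XX, T.o = ((1 : AG) : XX) ∧
    (∀ i (g : AG), T.d0 ⟨i, (g : _ ⧸ _)⟩ = (g : XX)) ∧
    (∀ i (g : AG), T.d1 ⟨i, (g : _ ⧸ _)⟩ = ((g * lf i : AG) : XX)) := by
  classical
  let e0 : Fin 5 → EE := fun i => ⟨i, ((1 : AG) : _ ⧸ _)⟩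
  obtain ⟨δ, hδ, hδv⟩ := exists_crossed (E := EE) (Γ := gG)
    (Sum.elim (fun _ => 0) (fun i => Finsupp.single (e0 i) 1)) (by
      have key : ∀ i, gen gG (.inl i) • e0 i = e0 i := by
        intro i
        rw [← io_gen]
        exact (fix_EE _ _ _).mpr ⟨1, by simp⟩
      rintro (v | v) (w | w) h
      · simp [act_zero]
      · obtain rfl : v = w := h
        simp [act_zero, act_single, key]
      · obtain rfl : v = w := h
        simp [act_zero, act_single, key]
      · exact h.elim)
  have hδc : ∀ v, δ (gen gG (.inl v)) = 0 := fun v => by rw [hδv]; rfl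
  have hδl : ∀ v, δ (lf v) = Finsupp.single (e0 v) 1 := fun v => by rw [lf, hδv]; rfl
  have hδi : ∀ x ∈ io.range, δ x = 0 := by
    rintro _ ⟨x, rfl⟩
    induction x using gen_induction with
    | one => rw [map_one]; exact crossed_one hδ
    | gen_mul v x ih => rw [map_mul, hδ, ih, act_zero, io_gen, hδc, add_zero]
    | inv_mul v x ih =>
      rw [map_mul, hδ, ih, act_zero, map_inv, crossed_inv hδ, io_gen, hδc, act_zero, neg_zero,
        add_zero]
  let db : XX → (EE →₀ ℤ) := fun x => δ x.out
  have hdb : ∀ g : AG, db (g : XX) = δ g := by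
    intro g
    change δ (Quotient.out (g : XX)) = _
    obtain ⟨h, hh⟩ := QuotientGroup.mk_out_eq_mul io.range g
    rw [hh, hδ, hδi _ h.2, act_zero, add_zero]
  let d0 : EE → XX := fun e => Quotient.liftOn' e.2 (fun g => (g : XX)) (by
    intro g h hgh
    rw [QuotientGroup.leftRel_apply] at hgh
    rw [QuotientGroup.eq]
    obtain ⟨n, hn⟩ := hgh
    exact ⟨gen gH e.1 ^ n, by rw [map_zpow]; exact hn⟩)
  let d1 : EE → XX := fun e => Quotient.liftOn' e.2 (fun g => ((g * lf e.1 : AG) : XX)) (by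
    intro g h hgh
    rw [QuotientGroup.leftRel_apply] at hgh
    rw [QuotientGroup.eq]
    obtain ⟨n, hn⟩ := hgh
    refine ⟨gen gH e.1 ^ n, ?_⟩
    rw [map_zpow]
    have h1 : g⁻¹ * h = io (gen gH e.1) ^ n := hn.symm
    rw [mul_inv_rev, mul_assoc, ← mul_assoc g⁻¹, h1, ((io_lf_comm e.1).zpow_left n).eq]
    group)
  have hd0 : ∀ i (g : AG), d0 ⟨i, (g : _ ⧸ _)⟩ = (g : XX) := fun _ _ => rfl
  have hd1 : ∀ i (g : AG), d1 ⟨i, (g : _ ⧸ _)⟩ = ((g * lf i : AG) : XX) := fun _ _ => rfl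
  have hd0s : ∀ (g : AG) e, d0 (g • e) = g • d0 e := by
    rintro g ⟨i, x⟩
    induction x using QuotientGroup.induction_on
    rfl
  have hd1s : ∀ (g : AG) e, d1 (g • e) = g • d1 e := by
    rintro g ⟨i, x⟩
    induction x using QuotientGroup.induction_on
    rename_i x
    rw [smul_EE, hd1, hd1, mul_assoc]
    rfl
  let R : XX → XX → Prop := fun x y => ∃ e, (d0 e = x ∧ d1 e = y) ∨ (d0 e = y ∧ d1 e = x)
  have hRs : Std.Symm R := ⟨by
    rintro x y ⟨e, h⟩
    exact ⟨e, h.symm⟩⟩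
  have hRR : ∀ x y, Relation.ReflTransGen R x y → Relation.ReflTransGen R y x :=
    (Relation.ReflTransGen.stdSymm (r := R)).symm
  have hRg : ∀ (g : AG) x y, Relation.ReflTransGen R x y →
      Relation.ReflTransGen R (g • x) (g • y) := by
    intro g x y h
    refine Relation.ReflTransGen.lift (g • ·) ?_ _ _ h
    rintro x y ⟨e, h⟩
    refine ⟨g • e, ?_⟩
    rw [hd0s, hd1s]
    rcases h with ⟨rfl, rfl⟩ | ⟨rfl, rfl⟩
    · left; exact ⟨rfl, rfl⟩
    · right; exact ⟨rfl, rfl⟩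
  have hRo : ∀ g : AG, Relation.ReflTransGen R ((1 : AG) : XX) (g : XX) := by
    have hv : ∀ v, Relation.ReflTransGen R ((1 : AG) : XX) (gen gG v • ((1 : AG) : XX)) := by
      rintro (v | v)
      · rw [(fix_o _).mpr ⟨gen gH v, io_gen v⟩]
      · apply Relation.ReflTransGen.single
        refine ⟨e0 v, Or.inl ⟨rfl, ?_⟩⟩
        rw [hd1, one_mul]
        change _ = ((lf v * 1 : AG) : XX)
        rw [mul_one]
    intro g
    induction g using gen_induction with
    | one => exact Relation.ReflTransGen.refl
    | gen_mul v x ih => exact (hv v).trans (hRg (gen gG v) _ _ ih)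
    | inv_mul v x ih =>
      have h1 := hRg (gen gG v)⁻¹ _ _ (hv v)
      rw [inv_smul_smul] at h1
      exact (hRR _ _ h1).trans (hRg (gen gG v)⁻¹ _ _ ih)
  refine ⟨{ d0 := d0, d1 := d1, d0_smul := hd0s, d1_smul := hd1s, o := ((1 : AG) : XX), dl := δ,
            db := db, dl_mul := hδ, db_smul := ?_, db_o := ?_, edge := ?_, conn := ?_ },
          rfl, hd0, hd1⟩
  · intro g x
    induction x using QuotientGroup.induction_on
    rename_i x
    change db ((g * x : AG) : XX) = _
    rw [hdb, hdb, hδ]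
  · rw [hdb, crossed_one hδ]
  · rintro ⟨i, x⟩
    induction x using QuotientGroup.induction_on
    rename_i x
    rw [hd0, hd1, hdb, hdb, hδ, hδl, act_single, smul_EE, mul_one]
    simp
  · intro x y
    induction x using QuotientGroup.induction_on
    induction y using QuotientGroup.induction_on
    exact (hRR _ _ (hRo _)).trans (hRo _)

theorem cyc_EE (e : EE) : ∃ c : AG, ∀ g : AG, g • e = e → g ∈ Subgroup.zpowers c := by
  obtain ⟨i, x⟩ := e
  induction x using QuotientGroup.induction_on
  rename_i x
  refine ⟨x * io (gen gH i) * x⁻¹, fun g hg => ?_⟩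
  obtain ⟨n, rfl⟩ := (fix_EE _ _ _).mp hg
  exact ⟨n, by simp only [conj_zpow]⟩

/-- Stabilizers of pairs of vertices. -/
theorem pair_stab {y : AG} (hy : y ∉ io.range) : ∃ i : Fin 5, ∃ k : H0, ∀ h : H0,
    io h • (y : XX) = (y : XX) → ∃ n : ℤ, h = k * gen gH i ^ n * k⁻¹ := by
  obtain ⟨T, ho, h0, h1⟩ := exists_tree
  have hne : ((1 : AG) : XX) ≠ (y : XX) := by
    intro h
    rw [QuotientGroup.eq] at h
    simp only [inv_one, one_mul] at h
    exact hy h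
  obtain ⟨⟨i, x⟩, hinc, hfix⟩ := T.T2 hne
  induction x using QuotientGroup.induction_on
  rename_i x
  rw [h0, h1] at hinc
  have hx : ∃ k : H0, x = io k ∨ x = io k * (lf i)⁻¹ := by
    rcases hinc with h | h
    · rw [eq_comm, QuotientGroup.eq] at h
      obtain ⟨k, hk⟩ := h
      exact ⟨k, Or.inl (by rw [hk]; simp)⟩
    · rw [eq_comm, QuotientGroup.eq] at h
      obtain ⟨k, hk⟩ := h
      exact ⟨k, Or.inr (by rw [hk]; simp)⟩
  obtain ⟨k, hk⟩ := hx
  refine ⟨i, k, fun h hh => ?_⟩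
  have h2 := hfix (io h) ((fix_o _).mpr ⟨h, rfl⟩) hh
  obtain ⟨n, hn⟩ := (fix_EE _ _ _).mp h2
  refine ⟨n, io_inj ?_⟩
  rw [hn]
  rcases hk with rfl | rfl
  · simp
  · have := ((io_lf_comm i).zpow_left n).inv_right.eq
    rw [mul_assoc (io k), ← this]
    simp [mul_assoc]

theorem not_comm (n m : ℕ) (hn : 0 < n) (hm : 0 < m) :
    ¬ Commute (gen gH 2 ^ n) (gen gH 4 ^ m) := by
  let B : Matrix.SpecialLinearGroup (Fin 2) ℤ := ⟨!![1, 1; 0, 1], by simp [Matrix.det_fin_two]⟩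
  let W : Matrix.SpecialLinearGroup (Fin 2) ℤ := ⟨!![1, 0; 1, 1], by simp [Matrix.det_fin_two]⟩
  let f : Fin 5 → Matrix.SpecialLinearGroup (Fin 2) ℤ := ![1, 1, B, 1, W]
  let r : H0 →* Matrix.SpecialLinearGroup (Fin 2) ℤ := lift f (by
    intro v w h
    have : f v = 1 ∨ f w = 1 ∨ v = w := by
      revert h
      revert v w
      simp only [Fin.forall_fin_succ]
      simp [f, gH]
    rcases this with h | h | h
    · rw [h]; exact Commute.one_left _
    · rw [h]; exact Commute.one_right _
    · rw [h]; exact Commute.refl _)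
  intro hc
  have h1 := hc.map r
  have hB : ∀ n : ℕ, ((B ^ n : Matrix.SpecialLinearGroup (Fin 2) ℤ) : Matrix (Fin 2) (Fin 2) ℤ) =
      !![1, (n : ℤ); 0, 1] := by
    intro n
    induction n with
    | zero => simp [Matrix.one_fin_two]
    | succ n ih =>
      rw [pow_succ, Matrix.SpecialLinearGroup.coe_mul, ih]
      simp [B, add_comm]
  have hW : ∀ n : ℕ, ((W ^ n : Matrix.SpecialLinearGroup (Fin 2) ℤ) : Matrix (Fin 2) (Fin 2) ℤ) =
      !![1, 0; (n : ℤ), 1] := by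
    intro n
    induction n with
    | zero => simp [Matrix.one_fin_two]
    | succ n ih =>
      rw [pow_succ, Matrix.SpecialLinearGroup.coe_mul, ih]
      simp [W]
  have hb : r (gen gH 2) = B := lift_gen _ _ _
  have hw : r (gen gH 4) = W := lift_gen _ _ _
  rw [map_pow, map_pow, hb, hw] at h1
  have h2 := congrArg (fun M : Matrix.SpecialLinearGroup (Fin 2) ℤ =>
    (M : Matrix (Fin 2) (Fin 2) ℤ)) h1.eq
  simp only [Matrix.SpecialLinearGroup.coe_mul] at h2
  rw [hB, hW] at h2
  have h3 := congrFun (congrFun h2 0) 0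
  simp at h3
  omega

theorem not_comm1 : ¬ Commute (gen gH 2) (gen gH 4) := by
  have := not_comm 1 1 one_pos one_pos
  simpa using this

/-- The core has a unique fixed vertex. -/
theorem fix_unique {y : AG} (hy : ∀ h : H0, io h • (y : XX) = (y : XX)) : y ∈ io.range := by
  by_contra hne
  obtain ⟨i, k, h⟩ := pair_stab hne
  obtain ⟨n, hn⟩ := h (gen gH 2) (hy _)
  obtain ⟨m, hm⟩ := h (gen gH 4) (hy _)
  apply not_comm1
  rw [hn, hm, ← conj_zpow, ← conj_zpow]
  exact (Commute.refl _).zpow_zpow n m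

theorem zindep (n m : ℤ) (h : gen gH 0 ^ n = gen gH 1 ^ m) : n = 0 ∧ m = 0 := by
  constructor
  · have h1 := congrArg (chi gH 0) h
    rw [chi_self_zpow, map_zpow, chi_ne (by decide), one_zpow] at h1
    exact h1
  · have h1 := congrArg (chi gH 1) h
    rw [chi_self_zpow, map_zpow, chi_ne (by decide), one_zpow] at h1
    exact h1.symm

theorem gen0_central (x : H0) : Commute (gen gH 0) x ∧ Commute (gen gH 1) x := by
  have h : ∀ v, Commute (gen gH 0) (gen gH v) ∧ Commute (gen gH 1) (gen gH v) := by
    have key : ∀ a v : Fin 5, (a = v ∨ gH.Adj a v) → Commute (gen gH a) (gen gH v) := by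
      rintro a v (rfl | h)
      · exact Commute.refl _
      · exact gen_comm h
    intro v
    exact ⟨key 0 v (by revert v; decide), key 1 v (by revert v; decide)⟩
  induction x using gen_induction with
  | one => exact ⟨Commute.one_right _, Commute.one_right _⟩
  | gen_mul v x ih => exact ⟨(h v).1.mul_right ih.1, (h v).2.mul_right ih.2⟩
  | inv_mul v x ih => exact ⟨(h v).1.inv_right.mul_right ih.1, (h v).2.inv_right.mul_right ih.2⟩

theorem exists_fix_hom (f : H0 →* AG) (hf : Function.Injective f) :
    ∃ y : AG, ∀ h, f h • (y : XX) = (y : XX) := by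
  obtain ⟨T, -⟩ := exists_tree
  obtain ⟨x, hx⟩ := T.exists_fix f.range (f (gen gH 0)) (f (gen gH 1)) (f (gen gH 2))
    (f (gen gH 4)) ⟨_, rfl⟩ ⟨_, rfl⟩
    (by rintro _ ⟨x, rfl⟩; exact ((gen0_central x).1.symm).map f)
    (by rintro _ ⟨x, rfl⟩; exact ((gen0_central x).2.symm).map f)
    cyc_EE
    (by intro n m h; rw [← map_zpow, ← map_zpow] at h; exact zindep n m (hf h))
    (by
      intro n m hn hm h
      apply not_comm n m hn hm
      apply hf
      simpa using h.eq)
  induction x using QuotientGroup.induction_on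
  rename_i y
  exact ⟨y, fun h => hx _ ⟨h, rfl⟩⟩

/-- Normalizing an automorphism so that it preserves the core. -/
theorem exists_core (φ : MulAut AG) : ∃ g : AG,
    (∀ h, (MulAut.conj g * φ) (io h) ∈ io.range) ∧
    (∀ h, (MulAut.conj g * φ)⁻¹ (io h) ∈ io.range) := by
  obtain ⟨y, hy⟩ := exists_fix_hom ((φ : AG →* AG).comp io) (φ.injective.comp io_inj)
  refine ⟨y⁻¹, ?_⟩
  have h1 : ∀ h, (MulAut.conj y⁻¹ * φ) (io h) ∈ io.range := by
    intro h
    have := (fix_XX _ _).mp (hy h)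
    simpa [MulAut.conj_apply] using this
  refine ⟨h1, ?_⟩
  set ψ := MulAut.conj y⁻¹ * φ with hψ
  obtain ⟨y', hy'⟩ := exists_fix_hom (((ψ⁻¹ : MulAut AG) : AG →* AG).comp io)
    ((ψ⁻¹ : MulAut AG).injective.comp io_inj)
  have h2 : y' ∈ io.range := by
    apply fix_unique
    intro h
    obtain ⟨h', hh'⟩ := h1 h
    have := hy' h'
    have h3 : ψ⁻¹ (io h') = io h := by rw [hh']; exact ψ.symm_apply_apply _
    change ψ⁻¹ (io h') • _ = _ at this
    rwa [h3] at this
  intro h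
  have h3 := (fix_XX _ _).mp (hy' h)
  have h4 : y' * (y'⁻¹ * (ψ⁻¹ (io h)) * y') * y'⁻¹ ∈ io.range :=
    io.range.mul_mem (io.range.mul_mem h2 h3) (io.range.inv_mem h2)
  have h5 : y' * (y'⁻¹ * (ψ⁻¹ (io h)) * y') * y'⁻¹ = ψ⁻¹ (io h) := by group
  rwa [h5] at h4

end Concrete

end RaagProof

namespace RaagProof

section Tri

/-- Trivial action on homomorphisms to the cyclic group of order three. -/
def Tri (ψ : MulAut AG) : Prop := ∀ (χ : AG →* Multiplicative (ZMod 3)) (x : AG), χ (ψ x) = χ x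

theorem Tri.conj {φ : MulAut AG} (h : Tri φ) (g : AG) : Tri (MulAut.conj g * φ) := by
  intro χ x
  rw [MulAut.mul_apply, MulAut.conj_apply, map_mul, map_mul, map_inv, mul_comm (χ g),
    mul_inv_cancel_right, h χ x]

theorem Tri.inv {φ : MulAut AG} (h : Tri φ) : Tri φ⁻¹ := by
  intro χ x
  rw [← h χ (φ⁻¹ x), MulAut.apply_inv_self]

/-- Exponent sum modulo three. -/
noncomputable def chi3 (v : Fin 5 ⊕ Fin 5) : AG →* Multiplicative (ZMod 3) :=
  (AddMonoidHom.toMultiplicative (Int.castAddHom (ZMod 3))).comp (chi gG v)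

theorem chi3_self_zpow (v : Fin 5 ⊕ Fin 5) (n : ℤ) :
    chi3 v (gen gG v ^ n) = Multiplicative.ofAdd (n : ZMod 3) := by
  rw [chi3, MonoidHom.comp_apply, chi_self_zpow]; rfl

theorem chi3_self (v : Fin 5 ⊕ Fin 5) :
    chi3 v (gen gG v) = Multiplicative.ofAdd (1 : ZMod 3) := by
  have := chi3_self_zpow v 1
  simpa using this

theorem chi3_ne {v w : Fin 5 ⊕ Fin 5} (h : w ≠ v) : chi3 v (gen gG w) = 1 := by
  rw [chi3, MonoidHom.comp_apply, chi_ne h, map_one]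

theorem step3_aux (ψ : MulAut AG) (h3 : Tri ψ) (h1 : ∀ h, ψ (io h) ∈ io.range)
    (h2 : ∀ h, ψ⁻¹ (io h) ∈ io.range) (i : Fin 5) :
    ∃ (k : H0) (n : ℤ), ψ (io (gen gH i)) = io (k * gen gH i ^ n * k⁻¹) ∧ (n : ZMod 3) = 1 := by
  have hn : ψ (lf i) ∉ io.range := by
    rintro ⟨x, hx⟩
    have := h2 x
    rw [hx, MulAut.inv_apply_self] at this
    exact lf_not_mem i this
  obtain ⟨j, k, hk⟩ := pair_stab hn
  obtain ⟨x, hx⟩ := h1 (gen gH i)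
  obtain ⟨n, hxn⟩ := hk x (by
    rw [fix_XX, hx, mul_assoc, ← map_mul, (io_lf_comm i).eq, map_mul, inv_mul_cancel_left]
    exact h1 _)
  have h4 : chi3 (.inl i) (ψ (io (gen gH i))) = chi3 (.inl i) (io (gen gH j)) ^ n := by
    rw [← hx, hxn, map_mul, map_mul, map_mul, map_mul, map_inv, map_inv, mul_comm (chi3 _ (io k)),
      mul_inv_cancel_right, map_zpow, map_zpow]
  rw [h3, io_gen, io_gen, chi3_self] at h4
  by_cases hij : j = i
  · subst hij
    refine ⟨k, n, by rw [← hx, hxn], ?_⟩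
    rw [← map_zpow, chi3_self_zpow] at h4
    exact (Multiplicative.ofAdd.injective h4).symm
  · rw [chi3_ne (by simpa using hij), one_zpow] at h4
    exact absurd (show (1 : ZMod 3) = 0 from h4) (by decide)

theorem step3 (ψ : MulAut AG) (h3 : Tri ψ) (h1 : ∀ h, ψ (io h) ∈ io.range)
    (h2 : ∀ h, ψ⁻¹ (io h) ∈ io.range) (i : Fin 5) :
    ∃ k : H0, ψ (io (gen gH i)) = io (k * gen gH i * k⁻¹) := by
  obtain ⟨k, n, hk, hn⟩ := step3_aux ψ h3 h1 h2 i
  obtain ⟨l, m, hl, hm⟩ := step3_aux ψ⁻¹ h3.inv h2 (by simpa using h1) i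
  obtain ⟨l', hl'⟩ := h2 k
  have h4 : ψ⁻¹ (ψ (io (gen gH i))) = io (gen gH i) := MulAut.inv_apply_self _ _ _
  rw [hk] at h4
  simp only [map_mul, map_zpow, map_inv] at h4
  rw [hl, ← hl'] at h4
  simp only [← map_mul, ← map_zpow, ← map_inv] at h4
  have h5 := congrArg (chi gH i) (io_inj h4)
  rw [chi_conj, conj_zpow, chi_conj, ← zpow_mul, chi_self_zpow, chi_self] at h5
  have h6 : m * n = 1 := Multiplicative.ofAdd.injective h5
  refine ⟨k, ?_⟩
  rcases Int.eq_one_or_neg_one_of_mul_eq_one (by rwa [mul_comm] at h6) with rfl | rfl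
  · rw [hk, zpow_one]
  · exact absurd hn (by decide)

end Tri

section Retr

variable {V : Type*} (Γ : SimpleGraph V) (S : Set V)

/-- Retraction onto a special subgroup. -/
noncomputable def retr : RAAG Γ →* RAAG Γ :=
  open Classical in
  lift (fun v => if v ∈ S then gen Γ v else 1) (by
    intro v w h
    split_ifs
    · exact gen_comm h
    · exact Commute.one_right _
    · exact Commute.one_left _
    · exact Commute.one_left _)

variable {Γ S}

theorem retr_mem {v : V} (h : v ∈ S) : retr Γ S (gen Γ v) = gen Γ v := by simp [retr, h]
theorem retr_not_mem {v : V} (h : v ∉ S) : retr Γ S (gen Γ v) = 1 := by simp [retr, h]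

theorem retr_closure {S' : Set V} (hS : S' ⊆ S) {x : RAAG Γ}
    (hx : x ∈ Subgroup.closure (gen Γ '' S')) : retr Γ S x = x := by
  have : Subgroup.closure (gen Γ '' S') ≤ (retr Γ S).eqLocus (MonoidHom.id _) := by
    rw [Subgroup.closure_le]
    rintro _ ⟨v, hv, rfl⟩
    exact retr_mem (hS hv)
  exact this hx

theorem retr_closure_disj {S' : Set V} (hS : ∀ v ∈ S', v ∉ S) {x : RAAG Γ}
    (hx : x ∈ Subgroup.closure (gen Γ '' S')) : retr Γ S x = 1 := by
  have : Subgroup.closure (gen Γ '' S') ≤ (retr Γ S).ker := by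
    rw [Subgroup.closure_le]
    rintro _ ⟨v, hv, rfl⟩
    exact retr_not_mem (hS v hv)
  exact this hx

theorem retr_range (x : RAAG Γ) : retr Γ S x ∈ Subgroup.closure (gen Γ '' S) := by
  have hg : ∀ v, retr Γ S (gen Γ v) ∈ Subgroup.closure (gen Γ '' S) := by
    intro v
    by_cases h : v ∈ S
    · rw [retr_mem h]; exact Subgroup.subset_closure ⟨v, h, rfl⟩
    · rw [retr_not_mem h]; exact Subgroup.one_mem _
  induction x using gen_induction with
  | one => rw [map_one]; exact Subgroup.one_mem _
  | gen_mul v x ih => rw [map_mul]; exact Subgroup.mul_mem _ (hg v) ih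
  | inv_mul v x ih =>
    rw [map_mul, map_inv]; exact Subgroup.mul_mem _ (Subgroup.inv_mem _ (hg v)) ih

theorem commute_closure {S' : Set V} {y x : RAAG Γ} (h : ∀ v ∈ S', Commute y (gen Γ v))
    (hx : x ∈ Subgroup.closure (gen Γ '' S')) : Commute y x := by
  induction hx using Subgroup.closure_induction with
  | mem x hx => obtain ⟨v, hv, rfl⟩ := hx; exact h v hv
  | one => exact Commute.one_right _
  | mul _ _ _ _ h1 h2 => exact h1.mul_right h2
  | inv _ _ h1 => exact h1.inv_right

end Retr

section Step4

theorem gH_comm {v w : Fin 5} (h : v = w ∨ gH.Adj v w) : Commute (gen gH v) (gen gH w) := by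
  rcases h with rfl | h
  · exact Commute.refl _
  · exact gen_comm h

theorem step4_a (θ : H0 →* H0) (hs : Function.Surjective θ)
    (h : ∀ v, ∃ k, θ (gen gH v) = k * gen gH v * k⁻¹) (hb : θ (gen gH 2) = gen gH 2) :
    ∃ k, ∀ x, θ x = k * x * k⁻¹ := by
  have h0 : θ (gen gH 0) = gen gH 0 := by
    obtain ⟨k, hk⟩ := h 0
    rw [hk, ← (gen0_central k).1.eq, mul_inv_cancel_right]
  have h1 : θ (gen gH 1) = gen gH 1 := by
    obtain ⟨k, hk⟩ := h 1
    rw [hk, ← (gen0_central k).2.eq, mul_inv_cancel_right]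
  have h3 : θ (gen gH 3) = gen gH 3 := by
    have hc : Commute (gen gH 2) (θ (gen gH 3)) := by
      have : Commute (gen gH 2) (gen gH 3) := gH_comm (by decide)
      have := this.map θ
      rwa [hb] at this
    obtain ⟨n, c, hcm, hcn⟩ := mem_of_commute_gen 2 hc
    have hr : retr gH {v | v ≠ 4} (θ (gen gH 3)) = θ (gen gH 3) := by
      rw [hcn, map_mul, map_zpow, retr_mem (by decide),
        retr_closure (S' := {w | gH.Adj 2 w}) _ hcm]
      intro v hv
      change v ≠ 4
      rintro rfl
      revert hv
      decide
    obtain ⟨k, hk⟩ := h 3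
    rw [← hr, hk, map_mul, map_mul, map_inv, retr_mem (by decide)]
    have : Commute (gen gH 3) (retr gH {v | v ≠ 4} k) := by
      refine commute_closure ?_ (retr_range k)
      intro v hv
      apply gH_comm
      change v ≠ 4 at hv
      revert v
      decide
    rw [← this.eq, mul_inv_cancel_right]
  have hid : ∀ v, v ≠ 4 → θ (gen gH v) = gen gH v := by
    intro v hv
    fin_cases v
    · exact h0
    · exact h1
    · exact hb
    · exact h3
    · exact absurd rfl hv
  obtain ⟨g, hg, g', hg', z, hz, hw⟩ := lemmaG (4 : Fin 5) (by decide) θ hs hid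
  obtain ⟨k, hk⟩ := h 4
  have hw' : θ (gen gH 4) = g * gen gH 4 * g' * z := by
    rcases hw with hw | hw
    · exact hw
    · exfalso
      have h5 := congrArg (chi gH 4) hw
      rw [hk, chi_conj, map_mul, map_mul, map_mul, map_inv, chi_self,
        chi_closure (S := {v | v ≠ 4 ∧ ¬ gH.Adj 4 v}) (by decide) hg,
        chi_closure (S := {v | v ≠ 4 ∧ ¬ gH.Adj 4 v}) (by decide) hg',
        chi_closure (S := {v | gH.Adj 4 v}) (by decide) hz] at h5
      revert h5
      decide
  have hz1 : z = 1 := by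
    have h5 := congrArg (retr gH {v | gH.Adj 4 v}) hw'
    rw [hk, map_mul, map_mul, map_mul, map_mul, map_mul, map_inv, retr_not_mem (by decide), mul_one,
      mul_inv_cancel, retr_closure_disj (S' := {v | v ≠ 4 ∧ ¬ gH.Adj 4 v}) (by decide) hg,
      retr_closure_disj (S' := {v | v ≠ 4 ∧ ¬ gH.Adj 4 v}) (by decide) hg',
      retr_closure (S' := {v | gH.Adj 4 v}) subset_rfl hz] at h5
    simpa using h5.symm
  have hg1 : g' = g⁻¹ := by
    have h5 := congrArg (retr gH {v | v ≠ 4 ∧ ¬ gH.Adj 4 v}) hw'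
    rw [hz1, hk, map_mul, map_mul, map_mul, map_mul, map_mul, map_inv,
      retr_not_mem (by decide), mul_one,
      mul_inv_cancel, retr_closure (S' := {v | v ≠ 4 ∧ ¬ gH.Adj 4 v}) subset_rfl hg,
      retr_closure (S' := {v | v ≠ 4 ∧ ¬ gH.Adj 4 v}) subset_rfl hg'] at h5
    rw [eq_comm]
    rw [map_one, mul_one, mul_one] at h5
    exact inv_eq_of_mul_eq_one_right h5.symm
  refine ⟨g, ?_⟩
  have : θ = (MulAut.conj g : H0 ≃* H0).toMonoidHom := by
    apply hom_ext
    intro v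
    change _ = g * gen gH v * g⁻¹
    by_cases hv : v = 4
    · subst hv; rw [hw', hz1, hg1, mul_one]
    · rw [hid v hv]
      have : Commute (gen gH v) g := by
        refine commute_closure ?_ hg
        intro u hu
        apply gH_comm
        change u ≠ 4 ∧ ¬ gH.Adj 4 u at hu
        revert u v
        decide
      rw [← this.eq, mul_inv_cancel_right]
  intro x
  rw [this]
  rfl

theorem step4 (θ : H0 →* H0) (hs : Function.Surjective θ)
    (h : ∀ v, ∃ k, θ (gen gH v) = k * gen gH v * k⁻¹) :
    ∃ k, ∀ x, θ x = k * x * k⁻¹ := by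
  obtain ⟨l, hl⟩ := h 2
  obtain ⟨k, hk⟩ := step4_a ((MulAut.conj l⁻¹ : H0 ≃* H0).toMonoidHom.comp θ)
    ((MulAut.conj l⁻¹ : H0 ≃* H0).surjective.comp hs) (by
      intro v
      obtain ⟨k, hk⟩ := h v
      refine ⟨l⁻¹ * k, ?_⟩
      change l⁻¹ * θ (gen gH v) * l⁻¹⁻¹ = _
      rw [hk]; group) (by
      change l⁻¹ * θ (gen gH 2) * l⁻¹⁻¹ = _
      rw [hl]; group)
  refine ⟨l * k, fun x => ?_⟩
  have h1 : l⁻¹ * θ x * l⁻¹⁻¹ = k * x * k⁻¹ := hk x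
  have h2 : θ x = l * (l⁻¹ * θ x * l⁻¹⁻¹) * l⁻¹ := by group
  rw [h2, h1]; group

/-- Normalizing an automorphism so that it fixes the core. -/
theorem exists_fixcore (φ : MulAut AG) (h3 : Tri φ) : ∃ g : AG,
    ∀ h, (MulAut.conj g * φ) (io h) = io h := by
  obtain ⟨g, h1, h2⟩ := exists_core φ
  set ψ := MulAut.conj g * φ with hψ
  have h3' : Tri ψ := h3.conj g
  let θ : H0 →* H0 := ro.comp ((ψ : AG →* AG).comp io)
  have hθ : ∀ h, io (θ h) = ψ (io h) := by
    intro h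
    obtain ⟨x, hx⟩ := h1 h
    change io (ro (ψ (io h))) = _
    rw [← hx, ro_io]
  obtain ⟨k, hk⟩ := step4 θ (by
    intro x
    obtain ⟨y, hy⟩ := h2 x
    refine ⟨y, io_inj ?_⟩
    rw [hθ, hy, MulAut.apply_inv_self]) (by
    intro v
    obtain ⟨k, hk⟩ := step3 ψ h3' h1 h2 v
    exact ⟨k, io_inj (by rw [hθ, hk])⟩)
  refine ⟨io k⁻¹ * g, fun h => ?_⟩
  rw [map_mul, mul_assoc, ← hψ, MulAut.mul_apply, ← hθ, hk, MulAut.conj_apply]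
  simp only [← map_mul, ← map_inv]
  congr 1
  group

end Step4

end RaagProof

namespace RaagProof

section Induce

variable {V : Type*} (Γ : SimpleGraph V) (S : Set V)

/-- Inclusion of an induced subgraph group. -/
def incl : RAAG (Γ.induce S) →* RAAG Γ :=
  lift (fun v => gen Γ v.1) (fun _ _ h => gen_comm h)

@[simp] theorem incl_gen (v : S) : incl Γ S (gen _ v) = gen Γ v.1 := lift_gen _ _ _

open Classical in
/-- Projection to an induced subgraph group. -/
noncomputable def prj : RAAG Γ →* RAAG (Γ.induce S) :=
  lift (fun v => if h : v ∈ S then gen _ ⟨v, h⟩ else 1) (by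
    intro v w h
    split_ifs with h1 h2
    · exact gen_comm h
    · exact Commute.one_right _
    · exact Commute.one_left _
    · exact Commute.one_left _)

theorem prj_mem {v : V} (h : v ∈ S) : prj Γ S (gen Γ v) = gen _ ⟨v, h⟩ := by
  simp [prj, h]

theorem incl_prj {x : RAAG Γ} (hx : x ∈ Subgroup.closure (gen Γ '' S)) :
    incl Γ S (prj Γ S x) = x := by
  induction hx using Subgroup.closure_induction with
  | mem x hx =>
    obtain ⟨v, hv, rfl⟩ := hx
    rw [prj_mem Γ S hv, incl_gen]
  | one => simp
  | mul x y _ _ hx hy => rw [map_mul, map_mul, hx, hy]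
  | inv x _ hx => rw [map_inv, map_inv, hx]

theorem prj_incl (x : RAAG (Γ.induce S)) : prj Γ S (incl Γ S x) = x := by
  have : (prj Γ S).comp (incl Γ S) = MonoidHom.id _ := by
    apply hom_ext
    intro v
    rw [MonoidHom.comp_apply, incl_gen, prj_mem Γ S v.2]
    rfl
  exact DFunLike.congr_fun this x

theorem incl_mem (x : RAAG (Γ.induce S)) : incl Γ S x ∈ Subgroup.closure (gen Γ '' S) := by
  induction x using gen_induction with
  | one => rw [map_one]; exact one_mem _
  | gen_mul v x ih =>
    rw [map_mul, incl_gen]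
    exact mul_mem (Subgroup.subset_closure ⟨_, v.2, rfl⟩) ih
  | inv_mul v x ih =>
    rw [map_mul, map_inv, incl_gen]
    exact mul_mem (inv_mem (Subgroup.subset_closure ⟨_, v.2, rfl⟩)) ih

end Induce

theorem map_closure_mem {G K : Type*} [Group G] [Group K] (f : G →* K) {A : Set G} {P : Subgroup K}
    (h : ∀ a ∈ A, f a ∈ P) {x : G} (hx : x ∈ Subgroup.closure A) : f x ∈ P := by
  have : Subgroup.closure A ≤ P.comap f := (Subgroup.closure_le _).2 h
  exact this hx

section Step5

/-- Star of a core vertex in the full graph. -/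
def stG (v : Fin 5) : Set (Fin 5 ⊕ Fin 5) := {x | x = .inl v ∨ gG.Adj (.inl v) x}

theorem lf_image_mem (ψ : MulAut AG) (hf : ∀ h, ψ (io h) = io h) (v : Fin 5) :
    ψ (lf v) ∈ Subgroup.closure (gen gG '' stG v) := by
  have hc : Commute (gen gG (.inl v)) (ψ (lf v)) := by
    have h2 : Commute (ψ (io (gen gH v))) (ψ (lf v)) := (io_lf_comm v).map ψ
    rw [hf, io_gen] at h2
    exact h2
  obtain ⟨n, c, hc, e⟩ := mem_of_commute_gen _ hc
  rw [e]
  have h1 : (Sum.inl v : Fin 5 ⊕ Fin 5) ∈ stG v := Or.inl rfl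
  have h2 : {w | gG.Adj (.inl v) w} ⊆ stG v := fun x hx => Or.inr hx
  have h3 : gen gG (.inl v) ∈ Subgroup.closure (gen gG '' stG v) :=
    Subgroup.subset_closure (Set.mem_image_of_mem _ h1)
  have h4 : c ∈ Subgroup.closure (gen gG '' stG v) :=
    Subgroup.closure_mono (Set.image_mono h2) hc
  exact mul_mem (zpow_mem h3 n) h4

theorem st_image_mem (ψ : MulAut AG) (hf : ∀ h, ψ (io h) = io h) (v : Fin 5) {x : AG}
    (hx : x ∈ Subgroup.closure (gen gG '' stG v)) :
    ψ x ∈ Subgroup.closure (gen gG '' stG v) := by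
  refine map_closure_mem (ψ : AG →* AG) ?_ hx
  rintro _ ⟨u | u, hu, rfl⟩
  · change ψ _ ∈ _
    rw [← io_gen, hf, io_gen]
    exact Subgroup.subset_closure ⟨_, hu, rfl⟩
  · rcases hu with hu | hu
    · cases hu
    · change v = u at hu
      subst hu
      exact lf_image_mem ψ hf v

theorem step5 (ψ : MulAut AG) (h3 : Tri ψ) (hf : ∀ h, ψ (io h) = io h) (v : Fin 5) :
    ∃ l ∈ Subgroup.closure (gen gH '' {u | gH.Adj v u}),
    ∃ r ∈ Subgroup.closure (gen gH '' {u | u = v ∨ gH.Adj v u}),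
      ψ (lf v) = io l * lf v * io r := by
  have hf' : ∀ h, ψ⁻¹ (io h) = io h := by
    intro h
    conv_lhs => rw [← hf h]
    rw [MulAut.inv_apply_self]
  let S := stG v
  let t : S := ⟨.inr v, Or.inr rfl⟩
  let θ : RAAG (gG.induce S) →* RAAG (gG.induce S) :=
    (prj gG S).comp ((ψ : AG →* AG).comp (incl gG S))
  have hθ : ∀ x, incl gG S (θ x) = ψ (incl gG S x) := fun x =>
    incl_prj gG S (st_image_mem ψ hf v (incl_mem gG S x))
  have hinj : Function.Injective (incl gG S) := Function.LeftInverse.injective (prj_incl gG S)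
  obtain ⟨g, hg, g', hg', z, hz, hw⟩ := lemmaG (Λ := gG.induce S) t (by
      rintro ⟨z | z, hz⟩ h ⟨w | w, hw⟩ hne
      · change v = z at h
        subst h
        rcases hw with hw | hw
        · cases hw; exact absurd rfl hne
        · exact hw
      · change v = z at h
        subst h
        rcases hw with hw | hw
        · cases hw
        · exact hw
      · exact h.elim
      · exact h.elim) θ (by
      intro y
      refine ⟨prj gG S (ψ⁻¹ (incl gG S y)), hinj ?_⟩
      rw [hθ, incl_prj gG S (st_image_mem ψ⁻¹ hf' v (incl_mem gG S y)), MulAut.apply_inv_self]) (by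
      rintro ⟨w | w, hw⟩ hne
      · apply hinj
        rw [hθ, incl_gen]
        change ψ (gen gG (.inl w)) = _
        rw [← io_gen, hf]
      · rcases hw with hw | hw
        · cases hw
        · change v = w at hw
          subst hw
          exact absurd rfl hne)
  have hL : ∀ x ∈ Subgroup.closure (gen (gG.induce S) '' {v | v ≠ t ∧ ¬ (gG.induce S).Adj t v}),
      incl gG S x ∈ (Subgroup.closure (gen gH '' {u | gH.Adj v u})).map io := by
    intro x hx
    refine map_closure_mem _ ?_ hx
    rintro _ ⟨⟨w | w, hw⟩, ⟨h1, h2⟩, rfl⟩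
    · rw [incl_gen]
      refine ⟨gen gH w, Subgroup.subset_closure ⟨w, ?_, rfl⟩, io_gen w⟩
      rcases hw with hw | hw
      · cases hw
        exact absurd rfl h2
      · exact hw
    · rcases hw with hw | hw
      · cases hw
      · change v = w at hw
        subst hw
        exact absurd rfl h1
  have hZ : ∀ x ∈ Subgroup.closure (gen (gG.induce S) '' {v | (gG.induce S).Adj t v}),
      incl gG S x ∈ (Subgroup.closure (gen gH '' {u | u = v ∨ gH.Adj v u})).map io := by
    intro x hx
    refine map_closure_mem _ ?_ hx
    rintro _ ⟨⟨w | w, hw⟩, h, rfl⟩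
    · rw [incl_gen]
      change v = w at h
      subst h
      exact ⟨gen gH v, Subgroup.subset_closure ⟨v, Or.inl rfl, rfl⟩, io_gen v⟩
    · exact h.elim
  have hm : Subgroup.closure (gen gH '' {u | gH.Adj v u}) ≤
      Subgroup.closure (gen gH '' {u | u = v ∨ gH.Adj v u}) :=
    Subgroup.closure_mono (Set.image_mono fun x hx => Or.inr hx)
  obtain ⟨l, hl, el⟩ := hL g hg
  obtain ⟨l', hl', el'⟩ := hL g' hg'
  obtain ⟨k, hk, ek⟩ := hZ z hz
  refine ⟨l, hl, l' * k, mul_mem (hm hl') hk, ?_⟩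
  have ht : incl gG S (gen _ t) = lf v := incl_gen _ _ _
  have e0 : incl gG S (θ (gen _ t)) = ψ (lf v) := by rw [hθ, ht]
  rcases hw with hw | hw
  · rw [← e0, hw]
    simp only [map_mul, ht, ← el, ← el', ← ek, mul_assoc]
  · exfalso
    have e1 : ψ (lf v) = io l * (lf v)⁻¹ * io (l' * k) := by
      rw [← e0, hw]
      simp only [map_mul, map_inv, ht, ← el, ← el', ← ek, mul_assoc]
    have hio : ∀ x, chi3 (.inr v) (io x) = 1 := by
      intro x
      have : (chi3 (.inr v)).comp io = 1 := by
        apply hom_ext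
        intro u
        rw [MonoidHom.comp_apply, io_gen, chi3_ne (by simp)]
        rfl
      exact DFunLike.congr_fun this x
    have e2 := h3 (chi3 (.inr v)) (lf v)
    rw [e1, map_mul, map_mul, hio, hio, map_inv, lf, chi3_self] at e2
    revert e2
    decide

theorem main4 (φ : MulAut AG) (h3 : Tri φ) : ∃ g : AG, ∃ L R : Fin 5 → H0, L 4 = 1 ∧
    (∀ v, L v ∈ Subgroup.closure (gen gH '' {u | gH.Adj v u})) ∧
    (∀ v, R v ∈ Subgroup.closure (gen gH '' {u | u = v ∨ gH.Adj v u})) ∧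
    (∀ h, (MulAut.conj g * φ) (io h) = io h) ∧
    ∀ v, (MulAut.conj g * φ) (lf v) = io (L v) * lf v * io (R v) := by
  obtain ⟨g, hg⟩ := exists_fixcore φ h3
  obtain ⟨l, hl, r, hr, e⟩ := step5 _ (h3.conj g) hg 4
  have hlc : ∀ x, Commute l x := by
    intro x
    refine (commute_closure ?_ hl).symm
    intro u hu
    change gH.Adj 4 u at hu
    have : u = 0 ∨ u = 1 := by revert u; decide
    rcases this with rfl | rfl
    · exact (gen0_central x).1.symm
    · exact (gen0_central x).2.symm
  have hg' : ∀ h, (MulAut.conj (io l⁻¹ * g) * φ) (io h) = io h := by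
    intro h
    rw [map_mul, mul_assoc, MulAut.mul_apply, hg, MulAut.conj_apply, ← map_mul, ← map_inv,
      ← map_mul]
    congr 1
    rw [inv_inv, mul_assoc, ← (hlc h).eq, inv_mul_cancel_left]
  choose L hL R hR hLR using step5 _ (h3.conj (io l⁻¹ * g)) hg'
  refine ⟨io l⁻¹ * g, Function.update L 4 1, Function.update R 4 (r * l), by simp, ?_, ?_, hg', ?_⟩
  · intro v
    by_cases hv : v = 4
    · subst hv; simp
    · rw [Function.update_of_ne hv]; exact hL v
  · intro v
    by_cases hv : v = 4
    · subst hv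
      rw [Function.update_self]
      exact mul_mem hr (Subgroup.closure_mono (Set.image_mono fun x hx => Or.inr hx) hl)
    · rw [Function.update_of_ne hv]; exact hR v
  · intro v
    by_cases hv : v = 4
    · subst hv
      rw [Function.update_self, Function.update_self, map_mul, mul_assoc, MulAut.mul_apply, e,
        MulAut.conj_apply, map_inv, map_one, map_mul]
      group
    · rw [Function.update_of_ne hv, Function.update_of_ne hv]; exact hLR v

end Step5

end RaagProof

namespace RaagProof

section Target

/-- Indices: a core vertex together with a side. -/
abbrev JJ := Fin 5 × Bool

/-- Allowed generators on each side. -/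
def inS (j : JJ) (u : Fin 5) : Prop :=
  (j.2 = true ∧ u = j.1) ∨ (gH.Adj j.1 u ∧ (j.2 = true ∨ j.1 ≠ 4))

instance (j : JJ) (u : Fin 5) : Decidable (inS j u) := by unfold inS; infer_instance

/-- Vertices of the target graph. -/
abbrev WW := {x : JJ × Fin 5 // inS x.1 x.2}

/-- The target graph. -/
def gD : SimpleGraph WW where
  Adj x y := x ≠ y ∧ (x.1.1 ≠ y.1.1 ∨ gH.Adj x.1.2 y.1.2)
  symm := ⟨fun x y h => ⟨h.1.symm, h.2.imp Ne.symm (fun h => SimpleGraph.Adj.symm h)⟩⟩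
  loopless := ⟨fun x h => h.1 rfl⟩

theorem gD_adj {x y : WW} : gD.Adj x y ↔ x ≠ y ∧ (x.1.1 ≠ y.1.1 ∨ gH.Adj x.1.2 y.1.2) := Iff.rfl

theorem inS_comm {j : JJ} {u : Fin 5} (h : inS j u) : Commute (gen gH j.1) (gen gH u) := by
  apply gH_comm
  rcases h with h | h
  · exact Or.inl h.2.symm
  · exact Or.inr h.1

/-- The product embedding. -/
def EJ : RAAG gD →* (JJ → H0) := lift (fun x => Pi.mulSingle x.1.1 (gen gH x.1.2)) (by
  intro x y h
  by_cases hj : x.1.1 = y.1.1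
  · rw [hj]
    have : Commute (gen gH x.1.2) (gen gH y.1.2) := gen_comm ((gD_adj.1 h).2.resolve_left (by simp [hj]))
    exact this.map (MonoidHom.mulSingle (fun _ : JJ => H0) y.1.1)
  · exact Pi.mulSingle_commute hj _ _)

theorem EJ_gen (x : WW) : EJ (gen gD x) = Pi.mulSingle x.1.1 (gen gH x.1.2) := lift_gen _ _ _

/-- Components of the left inverse. -/
def compD (j : JJ) : H0 →* RAAG gD :=
  lift (fun u => if h : inS j u then gen gD ⟨(j, u), h⟩ else 1) (by
    intro u w h
    split_ifs with h1 h2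
    · exact gen_comm (gD_adj.2 ⟨by
        intro e
        simp only [Subtype.mk.injEq, Prod.mk.injEq, true_and] at e
        exact SimpleGraph.Adj.ne h e, Or.inr h⟩)
    · exact Commute.one_right _
    · exact Commute.one_left _
    · exact Commute.one_left _)

theorem compD_gen {j : JJ} {u : Fin 5} (h : inS j u) :
    compD j (gen gH u) = gen gD ⟨(j, u), h⟩ := by
  simp [compD, h]

theorem compD_comm {j k : JJ} (h : j ≠ k) (x y : H0) : Commute (compD j x) (compD k y) := by
  have h1 : ∀ u w, Commute (compD j (gen gH u)) (compD k (gen gH w)) := by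
    intro u w
    simp only [compD, lift_gen]
    split_ifs
    · exact gen_comm (gD_adj.2 ⟨by
        intro e
        simp only [Subtype.mk.injEq, Prod.mk.injEq] at e
        exact h e.1, Or.inl h⟩)
    · exact Commute.one_right _
    · exact Commute.one_left _
    · exact Commute.one_left _
  have h2 : ∀ u, Commute (compD j (gen gH u)) (compD k y) := by
    intro u
    induction y using gen_induction with
    | one => simp
    | gen_mul v x ih => rw [map_mul]; exact (h1 u v).mul_right ih
    | inv_mul v x ih => rw [map_mul, map_inv]; exact (h1 u v).inv_right.mul_right ih
  induction x using gen_induction with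
  | one => simp
  | gen_mul v x ih => rw [map_mul]; exact (h2 v).mul_left ih
  | inv_mul v x ih => rw [map_mul, map_inv]; exact (h2 v).inv_left.mul_left ih

theorem compD_pw : Pairwise fun j k : JJ => ∀ x y : H0, Commute (compD j x) (compD k y) :=
  fun _ _ h x y => compD_comm h x y

/-- The left inverse of the product embedding. -/
noncomputable def backJ : (JJ → H0) →* RAAG gD :=
  MonoidHom.noncommPiCoprod compD compD_pw

theorem EJ_inj : Function.Injective EJ := by
  have : backJ.comp EJ = MonoidHom.id _ := by
    apply hom_ext
    intro x
    rw [MonoidHom.comp_apply, EJ_gen, backJ, MonoidHom.noncommPiCoprod_mulSingle, compD_gen x.2]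
    rfl
  exact Function.LeftInverse.injective (g := backJ) (DFunLike.congr_fun this)

theorem EJ_mem (x : RAAG gD) (j : JJ) :
    EJ x j ∈ Subgroup.closure (gen gH '' {u | inS j u}) := by
  have h : ∀ w : WW, EJ (gen gD w) j ∈ Subgroup.closure (gen gH '' {u | inS j u}) := by
    intro w
    rw [EJ_gen]
    by_cases hj : w.1.1 = j
    · subst hj
      rw [Pi.mulSingle_eq_same]
      exact Subgroup.subset_closure ⟨_, w.2, rfl⟩
    · rw [Pi.mulSingle_eq_of_ne' hj]
      exact one_mem _
  induction x using gen_induction with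
  | one => rw [map_one]; exact one_mem _
  | gen_mul v x ih => rw [map_mul]; exact mul_mem (h v) ih
  | inv_mul v x ih => rw [map_mul, map_inv]; exact mul_mem (inv_mem (h v)) ih

theorem EJ_range (f : JJ → H0)
    (hf : ∀ j, f j ∈ Subgroup.closure (gen gH '' {u | inS j u})) : ∃ x, EJ x = f := by
  change f ∈ EJ.range
  apply Subgroup.pi_mem_of_mulSingle_mem
  intro j
  refine map_closure_mem (MonoidHom.mulSingle (fun _ : JJ => H0) j) ?_ (hf j)
  rintro _ ⟨u, hu, rfl⟩
  exact ⟨gen gD ⟨(j, u), hu⟩, EJ_gen _⟩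

/-- Admissible families. -/
def DD : Subgroup (JJ → H0) where
  carrier := {f | ∀ j : JJ, Commute (gen gH j.1) (f j)}
  mul_mem' h1 h2 j := (h1 j).mul_right (h2 j)
  one_mem' j := Commute.one_right _
  inv_mem' h j := (h j).inv_right

/-- The leaf endomorphism attached to an admissible family. -/
def ed (f : DD) : AG →* AG :=
  lift (Sum.elim (fun v => gen gG (.inl v))
    (fun v => (io (f.1 (v, false)))⁻¹ * lf v * io (f.1 (v, true)))) (by
    have key : ∀ v : Fin 5, Commute (gen gG (.inl v))
        ((io (f.1 (v, false)))⁻¹ * lf v * io (f.1 (v, true))) := by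
      intro v
      have h0 := io_lf_comm v
      have h1 : Commute (io (gen gH v)) (io (f.1 (v, false))) := (f.2 (v, false)).map io
      have h2 : Commute (io (gen gH v)) (io (f.1 (v, true))) := (f.2 (v, true)).map io
      rw [io_gen] at h0 h1 h2
      exact (h1.inv_right.mul_right h0).mul_right h2
    rintro (v | v) (w | w) h
    · exact gen_comm h
    · change v = w at h
      subst h
      exact key v
    · change v = w at h
      subst h
      exact (key v).symm
    · exact h.elim)

theorem ed_inl (f : DD) (v : Fin 5) : ed f (gen gG (.inl v)) = gen gG (.inl v) := lift_gen _ _ _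

theorem ed_lf (f : DD) (v : Fin 5) :
    ed f (lf v) = (io (f.1 (v, false)))⁻¹ * lf v * io (f.1 (v, true)) := lift_gen _ _ _

theorem ed_io (f : DD) (x : H0) : ed f (io x) = io x := by
  have : (ed f).comp io = io := by
    apply hom_ext
    intro v
    rw [MonoidHom.comp_apply, io_gen, ed_inl]
  exact DFunLike.congr_fun this x

theorem AG_hom_ext {G : Type*} [Group G] {f g : AG →* G} (h1 : ∀ h, f (io h) = g (io h))
    (h2 : ∀ v, f (lf v) = g (lf v)) : f = g := by
  apply hom_ext
  rintro (v | v)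
  · rw [← io_gen]; exact h1 _
  · exact h2 v

theorem ed_one : ed 1 = MonoidHom.id AG := by
  apply AG_hom_ext
  · intro h; rw [ed_io]; rfl
  · intro v; rw [ed_lf]; simp

theorem ed_mul (f g : DD) : ed (f * g) = (ed f).comp (ed g) := by
  apply AG_hom_ext
  · intro h; rw [MonoidHom.comp_apply, ed_io, ed_io, ed_io]
  · intro v
    rw [MonoidHom.comp_apply, ed_lf, ed_lf, map_mul, map_mul, map_inv, ed_io, ed_io, ed_lf]
    simp [mul_assoc]

/-- The leaf automorphism. -/
def TT : DD →* MulAut AG where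
  toFun f := MonoidHom.toMulEquiv (ed f) (ed f⁻¹)
    (by rw [← ed_mul, inv_mul_cancel, ed_one]) (by rw [← ed_mul, mul_inv_cancel, ed_one])
  map_one' := by
    ext x
    exact DFunLike.congr_fun ed_one x
  map_mul' f g := by
    ext x
    exact DFunLike.congr_fun (ed_mul f g) x

theorem TT_apply (f : DD) (x : AG) : TT f x = ed f x := rfl

theorem EJ_DD (x : RAAG gD) : EJ x ∈ DD := by
  intro j
  refine commute_closure ?_ (EJ_mem x j)
  intro u hu
  exact inS_comm hu

/-- The homomorphism to the automorphism group. -/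
def TE : RAAG gD →* MulAut AG := TT.comp (EJ.codRestrict DD EJ_DD)

theorem TE_io (x : RAAG gD) (h : H0) : TE x (io h) = io h := ed_io _ h

theorem TE_lf (x : RAAG gD) (v : Fin 5) :
    TE x (lf v) = (io (EJ x (v, false)))⁻¹ * lf v * io (EJ x (v, true)) := ed_lf _ v

/-- Stabilizer of an edge at a leaf. -/
theorem leaf_stab (v : Fin 5) (x : H0) (h : (lf v)⁻¹ * io x * lf v ∈ io.range) :
    ∃ n : ℤ, x = gen gH v ^ n := by
  obtain ⟨i, k, hik⟩ := pair_stab (lf_not_mem v)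
  obtain ⟨m, hm⟩ := hik (gen gH v) (by
    rw [fix_XX, mul_assoc, (io_lf_comm v).eq, inv_mul_cancel_left]
    exact ⟨_, rfl⟩)
  obtain ⟨n, hn⟩ := hik x (by rw [fix_XX]; exact h)
  have hiv : i = v := by
    by_contra hne
    have := congrArg (chi gH v) hm
    rw [chi_conj, map_zpow, chi_ne hne, chi_self, one_zpow] at this
    exact absurd this (by decide)
  subst hiv
  have hm1 : m = 1 := by
    have := congrArg (chi gH i) hm
    rw [chi_conj, chi_self_zpow, chi_self] at this
    exact (Multiplicative.ofAdd.injective this).symm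
  subst hm1
  refine ⟨n, ?_⟩
  rw [hn]
  conv_rhs => rw [hm, zpow_one]
  rw [conj_zpow]

theorem TE_conj {x : RAAG gD} {g : AG} (h : TE x = MulAut.conj g) : x = 1 := by
  have hg : ∀ y, g * io y * g⁻¹ = io y := by
    intro y
    rw [← MulAut.conj_apply, ← h, TE_io]
  have hg' : ∀ y, g⁻¹ * io y * g = io y := by
    intro y
    conv_lhs => rw [← hg y]
    group
  obtain ⟨k, rfl⟩ : g ∈ io.range := by
    apply fix_unique
    intro y
    rw [fix_XX, hg']
    exact ⟨y, rfl⟩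
  have hk : ∀ y, Commute k y := by
    intro y
    have := hg y
    rw [← map_inv, ← map_mul, ← map_mul] at this
    have := io_inj this
    exact mul_inv_eq_iff_eq_mul.1 this
  have hl : ∀ v, (io (EJ x (v, false)))⁻¹ * lf v * io (EJ x (v, true)) =
      io k * lf v * (io k)⁻¹ := by
    intro v
    rw [← TE_lf, h, MulAut.conj_apply]
  have hn : ∀ v, ∃ n : ℤ, EJ x (v, false) * k = gen gH v ^ n := by
    intro v
    apply leaf_stab
    refine ⟨EJ x (v, true) * k, ?_⟩
    have e : lf v * io (EJ x (v, true)) * io k = io (EJ x (v, false)) * io k * lf v := by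
      have := hl v
      calc _ = io (EJ x (v, false)) * ((io (EJ x (v, false)))⁻¹ * lf v * io (EJ x (v, true))) *
            io k := by group
        _ = _ := by rw [this]; group
    rw [map_mul, map_mul, mul_assoc, ← e]
    group
  have hk1 : k = 1 := by
    obtain ⟨n, e⟩ := hn 4
    have h1 : EJ x ((4 : Fin 5), false) = 1 := by
      have := EJ_mem x (4, false)
      have h0 : {u | inS ((4 : Fin 5), false) u} = ∅ := by
        ext u
        simp only [Set.mem_ofPred_eq, Set.mem_empty_iff_false, iff_false]
        revert u
        decide
      rw [h0] at this
      simpa using this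
    rw [h1, one_mul] at e
    obtain ⟨m, c, hc, e2⟩ := mem_of_commute_gen 2 (hk (gen gH 2)).symm
    have e3 := congrArg (chi gH 4) e2
    rw [map_mul, map_zpow, chi_ne (by decide), chi_closure (by
      change ¬ gH.Adj 2 4
      decide) hc, e, chi_self_zpow, one_zpow, one_mul] at e3
    have : n = 0 := Multiplicative.ofAdd.injective e3
    rw [e, this, zpow_zero]
  subst hk1
  have hnv : ∀ v : Fin 5, v ∉ {u | inS (v, false) u} := by
    intro v
    change ¬ inS (v, false) v
    revert v
    decide
  have hL : ∀ v, EJ x (v, false) = 1 := by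
    intro v
    obtain ⟨n, e⟩ := hn v
    rw [mul_one] at e
    have e3 := congrArg (chi gH v) e
    rw [chi_closure (hnv v) (EJ_mem x (v, false)), chi_self_zpow] at e3
    have : n = 0 := (Multiplicative.ofAdd.injective e3).symm
    rw [e, this, zpow_zero]
  have hR : ∀ v, EJ x (v, true) = 1 := by
    intro v
    have := hl v
    rw [hL v] at this
    simp only [map_one, inv_one, one_mul, mul_one] at this
    apply io_inj
    rw [map_one]
    exact mul_eq_left.1 this
  apply EJ_inj
  rw [map_one]
  funext ⟨v, b⟩
  cases b
  · exact hL v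
  · exact hR v

end Target

end RaagProof

namespace RaagProof

section Final

/-- The action on homomorphisms to the cyclic group of order three. -/
def permAct : MulAut AG →* Equiv.Perm (AG →* Multiplicative (ZMod 3)) where
  toFun φ :=
    { toFun := fun χ => χ.comp ((φ⁻¹ : MulAut AG) : AG ≃* AG).toMonoidHom
      invFun := fun χ => χ.comp (φ : AG ≃* AG).toMonoidHom
      left_inv := by
        intro χ
        refine MonoidHom.ext fun x => ?_
        change χ (φ⁻¹ (φ x)) = χ x
        rw [MulAut.inv_apply_self]
      right_inv := by
        intro χ
        refine MonoidHom.ext fun x => ?_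
        change χ (φ (φ⁻¹ x)) = χ x
        rw [MulAut.apply_inv_self] }
  map_one' := by
    ext χ x
    rfl
  map_mul' φ ψ := by
    refine Equiv.ext fun χ => MonoidHom.ext fun x => ?_
    change χ ((φ * ψ)⁻¹ x) = χ (ψ⁻¹ (φ⁻¹ x))
    rw [mul_inv_rev]
    rfl

theorem permAct_apply (φ : MulAut AG) (χ : AG →* Multiplicative (ZMod 3)) (x : AG) :
    permAct φ χ x = χ (φ⁻¹ x) := rfl

instance : Finite (AG →* Multiplicative (ZMod 3)) := by
  have : Finite (Multiplicative (ZMod 3)) := inferInstanceAs (Finite (ZMod 3))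
  refine Finite.of_injective
    (fun χ : AG →* Multiplicative (ZMod 3) => fun v : Fin 5 ⊕ Fin 5 => χ (gen gG v)) ?_
  intro χ χ' h
  exact hom_ext (fun v => congrFun h v)

theorem tri_of_ker {φ : MulAut AG} (h : φ ∈ permAct.ker) : Tri φ := by
  intro χ x
  have h1 : permAct φ χ (φ x) = χ (φ x) := by
    rw [MonoidHom.mem_ker.1 h]; rfl
  rw [permAct_apply, MulAut.inv_apply_self] at h1
  exact h1.symm

/-- The quotient map to the outer automorphism group. -/
def outMk : MulAut AG →* Out AG := QuotientGroup.mk' (MulAut.conj : AG →* MulAut AG).range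

theorem outMk_surj : Function.Surjective outMk := QuotientGroup.mk'_surjective _

theorem outMk_ker (φ : MulAut AG) : outMk φ = 1 ↔ φ ∈ (MulAut.conj : AG →* MulAut AG).range :=
  QuotientGroup.eq_one_iff φ

/-- The embedding of the target group. -/
def PP : RAAG gD →* Out AG := outMk.comp TE

theorem PP_inj : Function.Injective PP := by
  rw [injective_iff_map_eq_one]
  intro x hx
  obtain ⟨g, hg⟩ := (outMk_ker (TE x)).1 hx
  exact TE_conj hg.symm

theorem PP_range : permAct.ker ≤ PP.range.comap outMk := by
  intro φ hφ
  obtain ⟨g, L, R, h4, hL, hR, hio, hlf⟩ := main4 φ (tri_of_ker hφ)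
  obtain ⟨x, hx⟩ := EJ_range (fun j => if j.2 = true then R j.1 else (L j.1)⁻¹) (by
    rintro ⟨v, b⟩
    cases b
    · by_cases hv : v = 4
      · subst hv
        simp [h4]
      · refine inv_mem (Subgroup.closure_mono (Set.image_mono ?_) (hL v))
        intro u hu
        exact Or.inr ⟨hu, Or.inr hv⟩
    · refine Subgroup.closure_mono (Set.image_mono ?_) (hR v)
      rintro u (hu | hu)
      · exact Or.inl ⟨rfl, hu⟩
      · exact Or.inr ⟨hu, Or.inl rfl⟩)
  have e : TE x = MulAut.conj g * φ := by
    apply MulEquiv.toMonoidHom_injective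
    apply AG_hom_ext
    · intro h
      exact (TE_io x h).trans (hio h).symm
    · intro v
      refine Eq.trans (TE_lf x v) (Eq.trans ?_ (hlf v).symm)
      rw [hx]
      simp
  refine ⟨x, ?_⟩
  change outMk (TE x) = outMk φ
  rw [e, map_mul, (outMk_ker (MulAut.conj g)).2 ⟨g, rfl⟩, one_mul]

theorem PP_index : PP.range.FiniteIndex := by
  have h1 : permAct.ker.FiniteIndex := Subgroup.finiteIndex_ker _
  have h2 : (PP.range.comap outMk).FiniteIndex := Subgroup.finiteIndex_of_le PP_range
  constructor
  rw [← Subgroup.index_comap_of_surjective PP.range outMk_surj]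
  exact h2.index_ne_zero

/-- The first clique condition. -/
def q1 (x : JJ × Fin 5) : Prop := ¬ (x.2 = 4 ∧ (x.1.1 = 0 ∨ x.1.1 = 1))

/-- The second clique condition. -/
def q2 (x : JJ × Fin 5) : Prop :=
  if x.1 = (0, false) then x.2 ≠ 2 ∧ x.2 ≠ 3 else q1 x

instance : DecidablePred q1 := fun x => by unfold q1; infer_instance
instance : DecidablePred q2 := fun x => by unfold q2; infer_instance

theorem maxClique_of {q : JJ × Fin 5 → Prop}
    (h1 : ∀ (j : JJ) (u w : Fin 5), inS j u → inS j w → q (j, u) → q (j, w) → u ≠ w → gH.Adj u w)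
    (h2 : ∀ (j : JJ) (u : Fin 5), inS j u → ¬ q (j, u) →
      ∃ w, inS j w ∧ q (j, w) ∧ u ≠ w ∧ ¬ gH.Adj u w) :
    IsMaxClique gD {x : WW | q x.1} := by
  refine ⟨?_, ?_⟩
  · rintro ⟨⟨j, u⟩, hu⟩ hqu ⟨⟨k, w⟩, hw⟩ hqw hne
    refine gD_adj.2 ⟨hne, ?_⟩
    by_cases hjk : j = k
    · subst hjk
      refine Or.inr (h1 j u w hu hw hqu hqw ?_)
      rintro rfl
      exact hne rfl
    · exact Or.inl hjk
  · intro K' hK' hsub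
    refine Set.Subset.antisymm ?_ hsub
    rintro ⟨⟨j, u⟩, hu⟩ hx
    by_contra hq
    obtain ⟨w, hw, hqw, hne, hadj⟩ := h2 j u hu hq
    have hy : (⟨(j, w), hw⟩ : WW) ∈ K' := hsub hqw
    have := gD_adj.1 (hK' hx hy (by
      intro e
      simp only [Subtype.mk.injEq, Prod.mk.injEq, true_and] at e
      exact hne e))
    rcases this.2 with h | h
    · exact h rfl
    · exact hadj h

theorem ncard_ne : {x : WW | q1 x.1}.ncard ≠ {x : WW | q2 x.1}.ncard := by
  have e1 : {x : WW | q1 x.1} = ((Finset.univ.filter fun x : WW => q1 x.1 : Finset WW) : Set WW) := by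
    ext x; simp
  have e2 : {x : WW | q2 x.1} = ((Finset.univ.filter fun x : WW => q2 x.1 : Finset WW) : Set WW) := by
    ext x; simp
  rw [e1, e2, Set.ncard_coe_finset, Set.ncard_coe_finset]
  decide +kernel

end Final

end RaagProof

theorem exists_out_raag_with_finiteIndex_nonduality_raag_subgroup :
    ∃ (V W : Type) (_ : Fintype V) (_ : Fintype W)
      (Γ : SimpleGraph V) (Δ : SimpleGraph W),
      (∃ H : Subgroup (Out (RAAG Γ)), H.FiniteIndex ∧ Nonempty (H ≃* RAAG Δ)) ∧
      ∃ K₁ K₂ : Set W, IsMaxClique Δ K₁ ∧ IsMaxClique Δ K₂ ∧ K₁.ncard ≠ K₂.ncard := by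
  refine ⟨Fin 5 ⊕ Fin 5, RaagProof.WW, inferInstance, inferInstance, RaagProof.gG, RaagProof.gD,
    ⟨RaagProof.PP.range, RaagProof.PP_index, ⟨(MonoidHom.ofInjective RaagProof.PP_inj).symm⟩⟩,
    _, _, RaagProof.maxClique_of (q := RaagProof.q1) ?_ ?_,
    RaagProof.maxClique_of (q := RaagProof.q2) ?_ ?_, RaagProof.ncard_ne⟩
  all_goals decide +kernel
end

section
/- Let Γ be a finite simple graph. The centre of the right-angled Artin group A_Γ is the subgroup generated by the images of those vertices v that are adjacent to every other vertex of Γ. In particular, if no vertex of Γ is adjacent to every other vertex, then the centre of A_Γ is trivial. -/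
open scoped commutatorElement

namespace RaagCenter

/-- Adjacent vertices commute. -/
lemma of_commute {V : Type} {Γ : SimpleGraph V} {v w : V} (h : Γ.Adj v w) :
    Commute (PresentedGroup.of (rels := raagRels Γ) v) (PresentedGroup.of w) := by
  have h1 : PresentedGroup.mk (raagRels Γ) ⁅FreeGroup.of v, FreeGroup.of w⁆ = 1 :=
    PresentedGroup.one_of_mem ⟨v, w, h, rfl⟩
  rw [map_commutatorElement, commutatorElement_eq_one_iff_commute] at h1
  exact h1

/-- Universal property. -/
lemma exists_hom {V : Type} (Γ : SimpleGraph V) {H : Type*} [Group H] (f : V → H)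
    (hf : ∀ v w, Γ.Adj v w → Commute (f v) (f w)) :
    ∃ F : RAAG Γ →* H, ∀ v, F (PresentedGroup.of v) = f v := by
  have h : ∀ r ∈ raagRels Γ, FreeGroup.lift f r = 1 := by
    rintro r ⟨v, w, hvw, rfl⟩
    rw [map_commutatorElement, commutatorElement_eq_one_iff_commute]
    simpa using hf v w hvw
  exact ⟨PresentedGroup.toGroup h, fun v => PresentedGroup.toGroup.of h⟩

/-- The permutation action on `X` induces an action on the free group. -/
def freeAct (G X : Type*) [Group G] [MulAction G X] : G →* MulAut (FreeGroup X) where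
  toFun g := FreeGroup.freeGroupCongr (MulAction.toPerm g)
  map_one' := by
    apply MulEquiv.ext
    intro x
    change FreeGroup.map _ x = x
    have : (⇑(MulAction.toPerm (1 : G)) : X → X) = id := by
      funext y
      simp
    rw [this, FreeGroup.map.id]
  map_mul' a b := by
    apply MulEquiv.ext
    intro x
    change FreeGroup.map _ x = FreeGroup.map _ (FreeGroup.map _ x)
    rw [FreeGroup.map.comp]
    congr 2
    funext y
    simp [mul_smul]

lemma freeAct_of {G X : Type*} [Group G] [MulAction G X] (g : G) (x : X) :
    freeAct G X g (FreeGroup.of x) = FreeGroup.of (g • x) := by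
  simp [freeAct]

lemma map_toWord {X : Type*} [DecidableEq X] (f : X → X) (hf : Function.Injective f)
    (k : FreeGroup X) :
    (FreeGroup.map f k).toWord = k.toWord.map (fun x => (f x.1, x.2)) := by
  conv_lhs => rw [← FreeGroup.mk_toWord (x := k), FreeGroup.map.mk, FreeGroup.toWord_mk]
  apply FreeGroup.IsReduced.reduce_eq
  have h := FreeGroup.isReduced_toWord (x := k)
  unfold FreeGroup.IsReduced at h ⊢
  rw [List.isChain_map]
  exact h.imp (fun a b hab e => hab (hf e))

lemma eq_one_of_fixed {G X : Type*} [Group G] [MulAction G X] [MulAction.IsPretransitive G X]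
    [Infinite X] (k : FreeGroup X) (hk : ∀ g : G, freeAct G X g k = k) : k = 1 := by
  classical
  by_contra hne
  have h1 : k.toWord ≠ [] := fun h => hne (FreeGroup.toWord_eq_nil_iff.1 h)
  obtain ⟨a, ha⟩ := List.exists_mem_of_ne_nil _ h1
  have h2 : ∀ y : X, y ∈ (k.toWord.map Prod.fst).toFinset := by
    intro y
    obtain ⟨g, rfl⟩ := MulAction.exists_smul_eq G a.1 y
    have h3 : (FreeGroup.map (fun x => g • x) k) = k := hk g
    have h4 := map_toWord (fun x : X => g • x) (MulAction.injective g) k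
    rw [h3] at h4
    rw [List.mem_toFinset, List.mem_map]
    refine ⟨(g • a.1, a.2), ?_, rfl⟩
    rw [h4]
    exact List.mem_map.2 ⟨a, ha, rfl⟩
  have : Finite X := Set.finite_univ_iff.1 ((Finset.finite_toSet _).subset (fun y _ => h2 y))
  exact not_finite X

/-- A retraction killing `v` fixes central elements if `v` has a non-neighbour `u`. -/
lemma ret_fix {V : Type} (Γ : SimpleGraph V) (v u : V) (huv : u ≠ v) (hadj : ¬ Γ.Adj v u)
    (ρ : RAAG Γ →* RAAG Γ) (hv : ρ (PresentedGroup.of v) = 1)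
    (hw : ∀ w, w ≠ v → ρ (PresentedGroup.of w) = PresentedGroup.of w)
    (g : RAAG Γ) (hg : g ∈ Subgroup.center (RAAG Γ)) : ρ g = g := by
  classical
  let L : Subgroup (RAAG Γ) := Subgroup.closure {x | ∃ w, Γ.Adj v w ∧ x = PresentedGroup.of w}
  have hL : ∀ x ∈ L, Commute x (PresentedGroup.of v) := by
    intro x hx
    have : L ≤ Subgroup.centralizer {PresentedGroup.of v} := by
      rw [Subgroup.closure_le]
      rintro _ ⟨w, hvw, rfl⟩
      rw [SetLike.mem_coe, Subgroup.mem_centralizer_singleton_iff]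
      exact (of_commute hvw).symm
    exact Subgroup.mem_centralizer_singleton_iff.1 (this hx)
  let M : Subgroup (RAAG Γ) := L.comap ρ
  -- the quotient is infinite
  obtain ⟨c, hc⟩ := exists_hom Γ (H := Multiplicative ℤ)
    (fun w => if w = u then Multiplicative.ofAdd 1 else 1) (fun _ _ _ => Commute.all _ _)
  have hcL : L ≤ c.ker := by
    rw [Subgroup.closure_le]
    rintro _ ⟨w, hvw, rfl⟩
    have : w ≠ u := by rintro rfl; exact hadj hvw
    simp [MonoidHom.mem_ker, hc, this]
  have hinf : Infinite (RAAG Γ ⧸ M) := by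
    apply Infinite.of_injective
      (fun n : ℤ => (((PresentedGroup.of u : RAAG Γ) ^ n : RAAG Γ) : RAAG Γ ⧸ M))
    intro a b hab
    have h1 := QuotientGroup.eq.1 hab
    have h2 : ρ (((PresentedGroup.of u : RAAG Γ) ^ a)⁻¹ * (PresentedGroup.of u) ^ b) ∈ L := h1
    have h3 := hcL h2
    rw [MonoidHom.mem_ker, map_mul, map_inv, map_zpow, map_zpow, hw u huv, map_mul, map_inv,
      map_zpow, map_zpow, hc, if_pos rfl, inv_mul_eq_one] at h3
    have h4 := congrArg Multiplicative.toAdd h3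
    simpa using h4
  -- the map back
  let f : RAAG Γ ⧸ M → RAAG Γ := fun q => ρ q.out * PresentedGroup.of v * (ρ q.out)⁻¹
  have hf : ∀ x : RAAG Γ, f (x : RAAG Γ ⧸ M) = ρ x * PresentedGroup.of v * (ρ x)⁻¹ := by
    intro x
    obtain ⟨m, hm⟩ := QuotientGroup.mk_out_eq_mul M x
    have h1 := hL (ρ m) m.2
    simp only [f]
    rw [hm, map_mul, mul_assoc (ρ x), h1.eq]
    group
  let Φ := freeAct (RAAG Γ) (RAAG Γ ⧸ M)
  let ψ : FreeGroup (RAAG Γ ⧸ M) ⋊[Φ] RAAG Γ →* RAAG Γ :=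
    SemidirectProduct.lift (FreeGroup.lift f) ρ (by
      intro x
      ext q
      obtain ⟨y, rfl⟩ := QuotientGroup.mk_surjective q
      change FreeGroup.lift f (freeAct _ _ x (FreeGroup.of _)) =
        ρ x * FreeGroup.lift f (FreeGroup.of _) * (ρ x)⁻¹
      rw [freeAct_of, MulAction.Quotient.smul_mk, FreeGroup.lift_apply_of, FreeGroup.lift_apply_of,
        hf, hf, smul_eq_mul, map_mul]
      group)
  obtain ⟨φ, hφ⟩ := exists_hom Γ (H := FreeGroup (RAAG Γ ⧸ M) ⋊[Φ] RAAG Γ)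
    (fun w => if w = v then SemidirectProduct.inl (FreeGroup.of ((1 : RAAG Γ) : RAAG Γ ⧸ M))
      else SemidirectProduct.inr (PresentedGroup.of w)) (by
      have key : ∀ w, Γ.Adj v w → Commute
          (SemidirectProduct.inl (FreeGroup.of ((1 : RAAG Γ) : RAAG Γ ⧸ M)) :
            FreeGroup (RAAG Γ ⧸ M) ⋊[Φ] RAAG Γ)
          (SemidirectProduct.inr (PresentedGroup.of w)) := by
        intro w h
        have h1 : Φ (PresentedGroup.of w) (FreeGroup.of ((1 : RAAG Γ) : RAAG Γ ⧸ M)) =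
            FreeGroup.of ((1 : RAAG Γ) : RAAG Γ ⧸ M) := by
          simp only [Φ]
          rw [freeAct_of, MulAction.Quotient.smul_mk, smul_eq_mul, mul_one]
          congr 1
          apply Eq.symm
          rw [QuotientGroup.eq, inv_one, one_mul]
          change ρ _ ∈ L
          rw [hw w h.ne']
          exact Subgroup.subset_closure ⟨w, h, rfl⟩
        apply SemidirectProduct.ext
        · simp [h1]
        · simp
      intro a b hab
      by_cases ha : a = v
      · subst ha
        simp only [if_true, if_neg hab.ne']
        exact key b hab
      · by_cases hb : b = v
        · subst hb
          simp only [if_true, if_neg hab.ne]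
          exact (key a hab.symm).symm
        · simp only [if_neg ha, if_neg hb]
          exact (of_commute hab).map SemidirectProduct.inr)
  have hψφ : ψ.comp φ = MonoidHom.id _ := by
    apply PresentedGroup.ext
    intro w
    rw [MonoidHom.comp_apply, hφ]
    by_cases h : w = v
    · subst h
      simp only [if_true, ψ]
      rw [SemidirectProduct.lift_inl, FreeGroup.lift_apply_of, hf]
      simp
    · simp only [if_neg h, ψ]
      rw [SemidirectProduct.lift_inr, hw w h]
      rfl
  have hright : SemidirectProduct.rightHom.comp φ = ρ := by
    apply PresentedGroup.ext
    intro w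
    rw [MonoidHom.comp_apply, hφ]
    by_cases h : w = v
    · subst h
      simp [hv]
    · simp [h, hw w h]
  -- the free part of `g`
  have hfix : ∀ x : RAAG Γ, Φ x (φ g).left = (φ g).left := by
    let S : Subgroup (RAAG Γ) :=
      (MulAction.stabilizer (MulAut (FreeGroup (RAAG Γ ⧸ M))) (φ g).left).comap Φ
    intro x
    have hx : x ∈ S := by
      apply PresentedGroup.generated_by
      intro w
      change Φ _ (φ g).left = (φ g).left
      by_cases h : w = v
      · subst h
        have h1 : (Φ (PresentedGroup.of w)).toMonoidHom = MonoidHom.id _ := by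
          ext q
          obtain ⟨y, rfl⟩ := QuotientGroup.mk_surjective q
          change freeAct _ _ _ (FreeGroup.of _) = FreeGroup.of _
          rw [freeAct_of, MulAction.Quotient.smul_mk, smul_eq_mul]
          congr 1
          apply Eq.symm
          rw [QuotientGroup.eq]
          change ρ _ ∈ L
          simp [hv]
        exact DFunLike.congr_fun h1 _
      · have h1 : φ (PresentedGroup.of w) * φ g = φ g * φ (PresentedGroup.of w) := by
          rw [← map_mul, ← map_mul, Subgroup.mem_center_iff.1 hg]
        rw [hφ, if_neg h] at h1
        have h2 := congrArg SemidirectProduct.left h1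
        simpa using h2
    exact hx
  have hk : (φ g).left = 1 := eq_one_of_fixed (G := RAAG Γ) _ hfix
  have h1 : ψ (φ g) = g := DFunLike.congr_fun hψφ g
  have h2 : (φ g).right = ρ g := DFunLike.congr_fun hright g
  have h3 : ψ (φ g) = FreeGroup.lift f (φ g).left * ρ (φ g).right := rfl
  have h4 : ρ.comp ρ = ρ := by
    apply PresentedGroup.ext
    intro w
    by_cases h : w = v
    · subst h; simp [hv]
    · simp [hw w h]
  rw [h1, hk, map_one, one_mul, h2] at h3
  rw [h3]
  exact (DFunLike.congr_fun h4 (ρ g)).trans rfl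

end RaagCenter

open RaagCenter

theorem center_raag_eq_closure_of_dominating_vertices {V : Type} [Fintype V]
    (Γ : SimpleGraph V) :
    Subgroup.center (RAAG Γ) =
      Subgroup.closure {x : RAAG Γ | ∃ v : V, (∀ w : V, w ≠ v → Γ.Adj v w) ∧
        x = PresentedGroup.of (rels := raagRels Γ) v} ∧
    ((¬ ∃ v : V, ∀ w : V, w ≠ v → Γ.Adj v w) → Subgroup.center (RAAG Γ) = ⊥) := by
  classical
  have main : Subgroup.center (RAAG Γ) =
      Subgroup.closure {x : RAAG Γ | ∃ v : V, (∀ w : V, w ≠ v → Γ.Adj v w) ∧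
        x = PresentedGroup.of (rels := raagRels Γ) v} := by
    apply le_antisymm
    · intro g hg
      have hret : ∀ s : Finset V, ∃ F : RAAG Γ →* RAAG Γ, ∀ w, F (PresentedGroup.of w) =
          if w ∈ s then 1 else PresentedGroup.of w := by
        intro s
        apply exists_hom
        intro a b hab
        by_cases ha : a ∈ s
        · simp [ha]
        · by_cases hb : b ∈ s
          · simp [hb]
          · simpa [ha, hb] using of_commute hab
      choose F hF using hret
      have hind : ∀ s : Finset V, (∀ v ∈ s, ¬ ∀ w : V, w ≠ v → Γ.Adj v w) → F s g = g := by
        intro s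
        induction s using Finset.induction_on with
        | empty =>
          intro _
          have : F ∅ = MonoidHom.id _ := by
            apply PresentedGroup.ext
            intro w
            simp [hF]
          rw [this]; rfl
        | insert v s hvs ih =>
          intro h
          have h1 : F (insert v s) = (F s).comp (F {v}) := by
            apply PresentedGroup.ext
            intro w
            rw [MonoidHom.comp_apply, hF, hF]
            by_cases hwv : w = v
            · simp [hwv]
            · simp [hwv, hF]
          have h2 := h v (Finset.mem_insert_self _ _)
          push Not at h2
          obtain ⟨u, hu, hadj⟩ := h2
          rw [h1, MonoidHom.comp_apply, ret_fix Γ v u hu hadj (F {v}) (by simp [hF])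
            (fun w hw => by simp [hF, hw]) g hg]
          exact ih (fun x hx => h x (Finset.mem_insert_of_mem hx))
      let N : Finset V := Finset.univ.filter (fun v => ¬ ∀ w : V, w ≠ v → Γ.Adj v w)
      have hN : F N g = g := hind N (fun v hv => (Finset.mem_filter.1 hv).2)
      rw [← hN]
      rw [← Subgroup.mem_comap]
      apply PresentedGroup.generated_by
      intro w
      rw [Subgroup.mem_comap, hF]
      split_ifs with h
      · exact one_mem _
      · apply Subgroup.subset_closure
        refine ⟨w, ?_, rfl⟩
        by_contra h'
        exact h (Finset.mem_filter.2 ⟨Finset.mem_univ _, h'⟩)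
    · rw [Subgroup.closure_le]
      rintro _ ⟨v, hv, rfl⟩
      rw [SetLike.mem_coe, Subgroup.mem_center_iff]
      intro x
      have : x ∈ Subgroup.centralizer {(PresentedGroup.of v : RAAG Γ)} := by
        apply PresentedGroup.generated_by
        intro w
        rw [Subgroup.mem_centralizer_singleton_iff]
        by_cases h : w = v
        · rw [h]
        · exact (of_commute (hv w h)).symm
      exact Subgroup.mem_centralizer_singleton_iff.1 this
  refine ⟨main, fun h => ?_⟩
  rw [main]
  convert Subgroup.closure_empty
  ext x
  simp only [Set.mem_ofPred_eq, Set.mem_empty_iff_false, iff_false]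
  rintro ⟨v, hv, _⟩
  exact h ⟨v, hv⟩
end

section
/- Let G be the free product ℤ² ∗ ℤ³ ∗ ℤ⁴ (the coproduct, over i ∈ Fin 3, of the free abelian groups of ranks 2, 3 and 4, with canonical inclusions ι_i of the factors). Consider the set of elements of Out(G) that are represented by an automorphism φ of G for which there exist elements g₀, g₁, g₂ ∈ G with φ(ι_i(x)) = g_i · ι_i(x) · g_i⁻¹ for all i ∈ Fin 3 and all x in the i-th factor. This set is a subgroup of Out(G), and it is isomorphic to G = ℤ² ∗ ℤ³ ∗ ℤ⁴. -/
/-- The natural projection from the automorphism group onto the outer automorphism group. -/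
def toOut (G : Type*) [Group G] : MulAut G →* Out G :=
  QuotientGroup.mk' _

/-- The factors of the free product ℤ² ∗ ℤ³ ∗ ℤ⁴. -/
abbrev FRFactor (i : Fin 3) : Type := Multiplicative (Fin ((i : ℕ) + 2) → ℤ)

/-- The free product ℤ² ∗ ℤ³ ∗ ℤ⁴. -/
abbrev FRGroup : Type := Monoid.CoprodI FRFactor

open Monoid

section words

variable {G : Fin 3 → Type} [∀ i, CommGroup (G i)] [∀ i, DecidableEq (G i)]

def frL (g : CoprodI G) : List (Σ i, G i) := (CoprodI.Word.equiv g).toList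

def frHd (i : Fin 3) (g : CoprodI G) : G i :=
  (CoprodI.Word.equivPair i (CoprodI.Word.equiv g)).head

theorem frL_unique (g : CoprodI G) (w : CoprodI.Word G) (h : w.prod = g) : frL g = w.toList := by
  subst h
  have : CoprodI.Word.equiv w.prod = w := CoprodI.Word.equiv.apply_symm_apply w
  simp [frL, this]

theorem frL_prod (g : CoprodI G) : ((frL g).map fun l => CoprodI.of l.2).prod = g :=
  CoprodI.Word.equiv.symm_apply_apply g

theorem frL_inv (g : CoprodI G) :
    frL g⁻¹ = ((frL g).map fun l => (⟨l.1, l.2⁻¹⟩ : Σ i, G i)).reverse := by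
  refine frL_unique _ ⟨_, ?_, ?_⟩ ?_
  · intro l hl
    replace hl := List.mem_map.1 (List.mem_reverse.1 hl)
    obtain ⟨a, ha, rfl⟩ := hl
    simpa using (CoprodI.Word.equiv g).ne_one a ha
  · refine List.isChain_reverse.2 ((List.isChain_map _).2 ?_)
    refine (CoprodI.Word.equiv g).chain_ne.imp ?_
    intro a b h
    simpa using h.symm
  · conv_rhs => rw [← frL_prod g]
    rw [List.prod_inv_reverse]
    simp [CoprodI.Word.prod, Function.comp_def]

theorem frHd_eq_one_iff {i : Fin 3} {g : CoprodI G} :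
    frHd i g = 1 ↔ ∀ a ∈ (frL g).head?, a.1 ≠ i := by
  have hne := (CoprodI.Word.equiv g).ne_one
  unfold frHd frL
  rw [CoprodI.Word.equivPair_head]
  generalize CoprodI.Word.equiv g = w at *
  rcases h : w.toList with _ | ⟨⟨k, x⟩, l⟩
  · simp
  · have hx : x ≠ 1 := hne ⟨k, x⟩ (by simp [h])
    by_cases hk : k = i
    · subst hk
      simp [hx]
    · simp [hk]

def frAux (i : Fin 3) : Option (Σ i, G i) → G i
  | none => 1
  | some a => if h : a.1 = i then h ▸ a.2 else 1

theorem frHd_eq_aux (i : Fin 3) (g : CoprodI G) : frHd i g = frAux i (frL g).head? := by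
  unfold frHd frL
  rw [CoprodI.Word.equivPair_head]
  generalize CoprodI.Word.equiv g = w at *
  rcases h : w.toList with _ | ⟨⟨k, x⟩, l⟩
  · simp [frAux]
  · by_cases hk : k = i
    · subst hk
      simp [frAux]
    · simp [hk, frAux]

theorem frHd_congr {i : Fin 3} {g h : CoprodI G} (e : (frL g).head? = (frL h).head?) :
    frHd i g = frHd i h := by
  rw [frHd_eq_aux, frHd_eq_aux, e]

theorem frHd_inv_eq_one_iff {i : Fin 3} {g : CoprodI G} :
    frHd i g⁻¹ = 1 ↔ ∀ a ∈ (frL g).getLast?, a.1 ≠ i := by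
  rw [frHd_eq_one_iff, frL_inv, List.head?_reverse]
  simp only [List.getLast?_map]
  cases (frL g).getLast? <;> simp

theorem frHd_append {i : Fin 3} {g d : CoprodI G} {m : List (Σ i, G i)}
    (e : frL g = frL d ++ m) (hm : ∀ a ∈ m.head?, a.1 ≠ i) : frHd i g = frHd i d := by
  by_cases hd : frL d = []
  · have h1 : frHd i d = 1 := by rw [frHd_eq_one_iff, hd]; simp
    rw [h1, frHd_eq_one_iff, e, hd]
    simpa using hm
  · apply frHd_congr
    rw [e]
    cases h : frL d
    · exact absurd h hd
    · simp

theorem frL_mul {g h : CoprodI G} (H : ∀ i, frHd i g⁻¹ = 1 ∨ frHd i h = 1) :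
    frL (g * h) = frL g ++ frL h := by
  refine frL_unique _ ⟨_, ?_, ?_⟩ ?_
  · intro l hl
    rcases List.mem_append.1 hl with hl | hl
    · exact (CoprodI.Word.equiv g).ne_one l hl
    · exact (CoprodI.Word.equiv h).ne_one l hl
  · refine List.IsChain.append (CoprodI.Word.equiv g).chain_ne (CoprodI.Word.equiv h).chain_ne ?_
    intro x hx y hy e
    rcases H x.1 with H | H
    · exact frHd_inv_eq_one_iff.1 H x hx rfl
    · exact frHd_eq_one_iff.1 H y hy e.symm
  · simp [CoprodI.Word.prod, frL_prod]

theorem frL_one : frL (1 : CoprodI G) = [] := frL_unique _ CoprodI.Word.empty rfl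

theorem frL_of {i : Fin 3} {x : G i} (hx : x ≠ 1) : frL (CoprodI.of x) = [⟨i, x⟩] :=
  frL_unique _ ⟨[⟨i, x⟩], by simpa using hx, List.isChain_singleton _⟩ (by simp [CoprodI.Word.prod])

theorem frL_of_head {i j : Fin 3} (h : i ≠ j) (x : G i) :
    ∀ a ∈ (frL (CoprodI.of x)).head?, a.1 ≠ j := by
  by_cases hx : x = 1
  · subst hx; simp [frL_one]
  · simp [frL_of hx, h]

theorem frL_eq_nil {g : CoprodI G} (h : frL g = []) : g = 1 := by
  rw [← frL_prod g, h]; simp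

theorem frHd_one (i : Fin 3) : frHd i (1 : CoprodI G) = 1 := by
  rw [frHd_eq_one_iff]; simp [frL_one]

theorem frHd_of_mul {i : Fin 3} (x : G i) (g : CoprodI G) :
    frHd i (CoprodI.of x * g) = x * frHd i g := by
  unfold frHd
  have : CoprodI.Word.equiv (CoprodI.of x * g) = CoprodI.of x • CoprodI.Word.equiv g :=
    mul_smul (CoprodI.of x) g (CoprodI.Word.empty : CoprodI.Word G)
  rw [this, CoprodI.Word.equivPair_smul_same]

theorem frHd_of {i : Fin 3} (x : G i) : frHd i (CoprodI.of x) = x := by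
  have := frHd_of_mul x (1 : CoprodI G)
  simpa [frHd_one] using this

theorem frHd_of_ne {i j : Fin 3} (h : i ≠ j) (x : G i) : frHd j (CoprodI.of x) = 1 :=
  frHd_eq_one_iff.2 (frL_of_head h x)

/-- removing the head letter -/
theorem frHd_strip (i : Fin 3) (g : CoprodI G) :
    ∃ g', g = CoprodI.of (frHd i g) * g' ∧ frHd i g' = 1 := by
  refine ⟨CoprodI.of (frHd i g)⁻¹ * g, ?_, ?_⟩
  · rw [← mul_assoc, ← map_mul]; simp
  · rw [frHd_of_mul]; simp

theorem frHd_strip_right (i : Fin 3) (g : CoprodI G) :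
    ∃ g' x, g = g' * CoprodI.of (x : G i) ∧ frHd i g'⁻¹ = 1 := by
  obtain ⟨h, e, hh⟩ := frHd_strip i g⁻¹
  refine ⟨h⁻¹, (frHd i g⁻¹)⁻¹, ?_, by simpa using hh⟩
  rw [← inv_inj]; simpa using e

theorem frL_of_mul {i : Fin 3} (x : G i) {g : CoprodI G} (h : frHd i g = 1) :
    frL (CoprodI.of x * g) = frL (CoprodI.of x) ++ frL g := by
  apply frL_mul
  intro j
  by_cases hj : i = j
  · subst hj; exact Or.inr h
  · left; rw [← map_inv]; exact frHd_of_ne hj _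

theorem frL_mul_of {i : Fin 3} (x : G i) {g : CoprodI G} (h : frHd i g⁻¹ = 1) :
    frL (g * CoprodI.of x) = frL g ++ frL (CoprodI.of x) := by
  apply frL_mul
  intro j
  by_cases hj : i = j
  · subst hj; exact Or.inl h
  · right; exact frHd_of_ne hj _

theorem frHd_mul_of {i j : Fin 3} (h : j ≠ i) (g : CoprodI G) (y : G j) :
    frHd i (g * CoprodI.of y) = frHd i g := by
  obtain ⟨d, x, rfl, hd⟩ := frHd_strip_right j g
  rw [frHd_append (frL_mul_of x hd) (frL_of_head h x), mul_assoc, ← map_mul,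
    frHd_append (frL_mul_of (x * y) hd) (frL_of_head h _)]

/-- reduced triple product -/
theorem frL_triple {i : Fin 3} {p q : CoprodI G} {z : G i} (hz : z ≠ 1) (hp : frHd i p = 1)
    (hq : frHd i q = 1) :
    frL (p⁻¹ * (CoprodI.of z * q)) = frL p⁻¹ ++ (⟨i, z⟩ :: frL q) := by
  have h1 : frL (CoprodI.of z * q) = ⟨i, z⟩ :: frL q := by
    rw [frL_of_mul _ hq, frL_of hz]; rfl
  rw [frL_mul, h1]
  intro j
  by_cases hj : i = j
  · subst hj; left; simpa using hp
  · right; rw [frHd_eq_one_iff, h1]; simpa using hj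

theorem frHd_between {i j : Fin 3} (hij : i ≠ j) {p q : CoprodI G} (h : frHd i p ≠ frHd i q) :
    frHd j (p⁻¹ * q) = frHd j p⁻¹ := by
  obtain ⟨p', ep, hp⟩ := frHd_strip i p
  obtain ⟨q', eq, hq⟩ := frHd_strip i q
  have hz : (frHd i p)⁻¹ * frHd i q ≠ 1 := by
    intro hz; exact h (inv_mul_eq_one.1 hz)
  have e : p⁻¹ * q = p'⁻¹ * (CoprodI.of ((frHd i p)⁻¹ * frHd i q) * q') := by
    conv_lhs => rw [ep, eq]
    simp [mul_assoc]
  have e2 : p⁻¹ = p'⁻¹ * CoprodI.of (frHd i p)⁻¹ := by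
    conv_lhs => rw [ep]
    simp
  rw [e, frHd_append (frL_triple hz hp hq) (by simpa using hij)]
  conv_rhs => rw [e2]
  rw [frHd_mul_of hij]

theorem fr_centralizer {i : Fin 3} {x : G i} (hx : x ≠ 1) {c : CoprodI G}
    (h : c * CoprodI.of x * c⁻¹ = CoprodI.of x) : ∃ y : G i, c = CoprodI.of y := by
  obtain ⟨d, y, rfl, hd⟩ := frHd_strip_right i c
  refine ⟨y, ?_⟩
  have e : d⁻¹⁻¹ * (CoprodI.of x * d⁻¹) = CoprodI.of x := by
    refine Eq.trans ?_ h
    rw [mul_inv_rev, ← map_inv]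
    have : (CoprodI.of y * CoprodI.of x * CoprodI.of y⁻¹ : CoprodI G) = CoprodI.of x := by
      rw [← map_mul, ← map_mul]; congr 1; simp [mul_comm]
    conv_lhs => rw [← this]
    simp only [mul_assoc, inv_inv]
  have := frL_triple hx hd hd
  rw [e, frL_of hx] at this
  have h2 := congrArg List.length this
  simp at h2
  have : frL d = [] := by
    apply List.eq_nil_of_length_eq_zero; omega
  rw [frL_eq_nil this, one_mul]

end words
section auts

set_option linter.unusedSectionVars false

variable {G : Fin 3 → Type} [∀ i, CommGroup (G i)] [∀ i, DecidableEq (G i)]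

theorem fr_fin1 (i : Fin 3) : i ≠ i + 1 := by decide +revert
theorem fr_fin2 (i : Fin 3) : i ≠ i + 2 := by decide +revert
theorem fr_fin3 (i : Fin 3) : i + 2 ≠ i + 1 := by decide +revert
theorem fr_fin4 (i j : Fin 3) (h : i ≠ j) : j = i + 1 ∨ j = i + 2 := by decide +revert

theorem fr_add11 (i : Fin 3) : i + 1 + 1 = i + 2 := by decide +revert

theorem fr_add12 (i : Fin 3) : i + 1 + 2 = i := by decide +revert

theorem fr_add21 (i : Fin 3) : i + 2 + 1 = i := by decide +revert

theorem fr_add22 (i : Fin 3) : i + 2 + 2 = i + 1 := by decide +revert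

def FrTup (φ : MulAut (CoprodI G)) (g : Fin 3 → CoprodI G) : Prop :=
  ∀ (i : Fin 3) (x : G i), φ (CoprodI.of x) = g i * CoprodI.of x * (g i)⁻¹

def frT (i : Fin 3) (x : G i) (j : Fin 3) : CoprodI G := if j = i + 1 then CoprodI.of x else 1

def frA (i : Fin 3) (x : G i) : CoprodI G →* CoprodI G :=
  CoprodI.lift fun j => (MulAut.conj (frT i x j)).toMonoidHom.comp CoprodI.of

theorem frA_of (i : Fin 3) (x : G i) (j : Fin 3) (y : G j) :
    frA i x (CoprodI.of y) = frT i x j * CoprodI.of y * (frT i x j)⁻¹ := by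
  simp [frA]

theorem frA_fix (i : Fin 3) (x y : G i) : frA i x (CoprodI.of y) = CoprodI.of y := by
  rw [frA_of]; simp [frT]

theorem frA_one (i : Fin 3) : frA i (1 : G i) = MonoidHom.id _ := by
  refine CoprodI.ext_hom _ _ fun j => MonoidHom.ext fun y => ?_
  simp [frA_of, frT]

theorem frA_mul (i : Fin 3) (x y : G i) : frA i (x * y) = (frA i x).comp (frA i y) := by
  refine CoprodI.ext_hom _ _ fun j => MonoidHom.ext fun z => ?_
  simp only [MonoidHom.comp_apply, frA_of, map_mul, map_inv]
  have h : frA i x (frT i y j) = frT i y j := by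
    unfold frT
    split_ifs
    · exact frA_fix _ _ _
    · simp
  rw [h]
  by_cases hj : j = i + 1
  · have h1 : frT i (x * y) j = frT i y j * frT i x j := by
      simp only [frT, if_pos hj]; rw [mul_comm, map_mul]
    rw [h1]; group
  · simp [frT, hj]

def frF (i : Fin 3) : G i →* MulAut (CoprodI G) where
  toFun x := (frA i x).toMulEquiv (frA i x⁻¹)
    (by rw [← frA_mul]; simp [frA_one]) (by rw [← frA_mul]; simp [frA_one])
  map_one' := by ext z; simp [frA_one]
  map_mul' x y := by ext z; simp [frA_mul]

theorem frF_of (i : Fin 3) (x : G i) (j : Fin 3) (y : G j) :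
    frF i x (CoprodI.of y) = frT i x j * CoprodI.of y * (frT i x j)⁻¹ := frA_of i x j y

theorem frTup_F (i : Fin 3) (x : G i) : FrTup (frF i x) (frT i x) := fun j y => frF_of i x j y

theorem frTup_mul {φ ψ : MulAut (CoprodI G)} {g h : Fin 3 → CoprodI G} (hg : FrTup φ g)
    (hh : FrTup ψ h) : FrTup (φ * ψ) (fun i => φ (h i) * g i) := by
  intro i x
  rw [MulAut.mul_apply, hh, map_mul, map_mul, hg, map_inv]
  group

theorem frTup_one : FrTup (1 : MulAut (CoprodI G)) (fun _ => 1) := by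
  intro i x; simp

theorem frTup_inv {φ : MulAut (CoprodI G)} {g : Fin 3 → CoprodI G} (hg : FrTup φ g) :
    FrTup φ⁻¹ (fun i => (φ⁻¹ (g i))⁻¹) := by
  intro i x
  apply φ.injective
  simp only [map_mul, map_inv, MulAut.apply_inv_self, hg i x]
  group

theorem frTup_mulF {φ : MulAut (CoprodI G)} {g : Fin 3 → CoprodI G} (hg : FrTup φ g)
    (i : Fin 3) (x : G i) : FrTup (φ * frF i x)
      (fun j => if j = i + 1 then g i * CoprodI.of x * (g i)⁻¹ * g j else g j) := by
  have := frTup_mul hg (frTup_F i x)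
  convert this using 2 with j
  unfold frT
  split_ifs
  · rw [hg]
  · simp

theorem frTup_right {φ : MulAut (CoprodI G)} {g : Fin 3 → CoprodI G} (hg : FrTup φ g)
    (y : ∀ i, G i) : FrTup φ (fun i => g i * CoprodI.of (y i)) := by
  intro i x
  rw [hg]
  have : (CoprodI.of (y i) * CoprodI.of x * CoprodI.of (y i)⁻¹ : CoprodI G) = CoprodI.of x := by
    rw [← map_mul, ← map_mul]; congr 1; simp [mul_comm]
  conv_lhs => rw [← this]
  simp [mul_assoc]

/-! ### terminal lemma -/

theorem frL_neWord {i j : Fin 3} (W : CoprodI.NeWord G i j) : frL W.prod = W.toList :=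
  frL_unique _ W.toWord rfl

theorem frHd_neWord {i j : Fin 3} (W : CoprodI.NeWord G i j) (k : Fin 3) :
    frHd k W.prod = 1 ↔ i ≠ k := by
  rw [frHd_eq_one_iff, frL_neWord]; simp

theorem frHd_inv_neWord {i j : Fin 3} (W : CoprodI.NeWord G i j) (k : Fin 3) :
    frHd k W.prod⁻¹ = 1 ↔ j ≠ k := by
  rw [frHd_inv_eq_one_iff, frL_neWord]; simp

theorem fr_exists_neWord {g : CoprodI G} (hg : g ≠ 1) :
    ∃ (i j : Fin 3) (W : CoprodI.NeWord G i j), W.prod = g := by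
  obtain ⟨i, j, W, h⟩ := CoprodI.NeWord.of_word (CoprodI.Word.equiv g) (by
    intro h
    apply hg
    apply frL_eq_nil
    rw [frL, h]; rfl)
  refine ⟨i, j, W, ?_⟩
  rw [CoprodI.NeWord.prod, h]
  exact CoprodI.Word.equiv.symm_apply_apply g

theorem fr_term_word {φ : MulAut (CoprodI G)} {g : Fin 3 → CoprodI G} (hg : FrTup φ g)
    (H : ∀ i j, frHd i ((g i)⁻¹ * g j) = 1) {i j : Fin 3} (W : CoprodI.NeWord G i j) :
    ∃ W' : CoprodI.NeWord G i j, W'.prod = (g i)⁻¹ * φ W.prod * g j := by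
  induction W with
  | singleton x hx =>
    refine ⟨.singleton x hx, ?_⟩
    rw [CoprodI.NeWord.prod_singleton, hg]; group
  | @append i j k l W₁ hne W₂ ih₁ ih₂ =>
    obtain ⟨V₁, h₁⟩ := ih₁
    obtain ⟨V₂, h₂⟩ := ih₂
    by_cases hu : (g j)⁻¹ * g k = 1
    · refine ⟨.append V₁ hne V₂, ?_⟩
      rw [CoprodI.NeWord.append_prod, CoprodI.NeWord.append_prod, h₁, h₂, map_mul,
        inv_mul_eq_one.1 hu]
      group
    · obtain ⟨a, b, U, hU⟩ := fr_exists_neWord hu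
      have ha : j ≠ a := by
        have := H j k
        rw [← hU, frHd_neWord] at this
        exact this.symm
      have hb : b ≠ k := by
        have := H k j
        have e : (g k)⁻¹ * g j = U.prod⁻¹ := by rw [hU]; group
        rwa [e, frHd_inv_neWord] at this
      refine ⟨.append V₁ ha (.append U hb V₂), ?_⟩
      rw [CoprodI.NeWord.append_prod, CoprodI.NeWord.append_prod, CoprodI.NeWord.append_prod,
        h₁, h₂, hU, map_mul]
      group

theorem fr_terminal [∀ i, Nontrivial (G i)] {φ : MulAut (CoprodI G)} {g : Fin 3 → CoprodI G}
    (hg : FrTup φ g) (H : ∀ i j, frHd i ((g i)⁻¹ * g j) = 1) (k : Fin 3) : g k = g 0 := by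
  obtain ⟨y, hy⟩ := exists_ne (1 : G k)
  have hw : φ⁻¹ (g 0 * CoprodI.of y * (g 0)⁻¹) ≠ 1 := by
    intro h
    have h1 : g 0 * CoprodI.of y * (g 0)⁻¹ = 1 := by
      simpa using congrArg φ h
    have h2 : (CoprodI.of y : CoprodI G) = 1 := by simpa using h1
    have := frL_of hy
    rw [h2, frL_one] at this
    simp at this
  obtain ⟨i, j, W, hW⟩ := fr_exists_neWord hw
  obtain ⟨V, hV⟩ := fr_term_word hg H W
  rw [hW, MulAut.apply_inv_self] at hV
  have e : (CoprodI.of y : CoprodI G) = ((g i)⁻¹ * g 0)⁻¹ * (V.prod * ((g j)⁻¹ * g 0)) := by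
    rw [hV]; group
  have l1 : frL (V.prod * ((g j)⁻¹ * g 0)) = V.toList ++ frL ((g j)⁻¹ * g 0) := by
    rw [frL_mul, frL_neWord]
    intro l
    by_cases hl : j = l
    · subst hl; exact Or.inr (H _ _)
    · exact Or.inl ((frHd_inv_neWord _ _).2 hl)
  have l2 : frL (CoprodI.of y : CoprodI G)
      = frL ((g i)⁻¹ * g 0)⁻¹ ++ (V.toList ++ frL ((g j)⁻¹ * g 0)) := by
    rw [e, frL_mul, l1]
    intro l
    by_cases hl : i = l
    · subst hl; left; rw [inv_inv]; exact H _ _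
    · right
      rw [frHd_eq_one_iff, l1]
      simpa using hl
  rw [frL_of hy] at l2
  have hpos : 0 < V.toList.length := List.length_pos_iff.2 V.toList_ne_nil
  have hlen := congrArg List.length l2
  simp only [List.length_append, List.length_cons, List.length_nil] at hlen
  have z1 : frL ((g i)⁻¹ * g 0)⁻¹ = [] := List.eq_nil_of_length_eq_zero (by omega)
  have z2 : frL ((g j)⁻¹ * g 0) = [] := List.eq_nil_of_length_eq_zero (by omega)
  rw [z1, z2] at l2
  have hi : k = i := by
    have := congrArg List.head? l2
    simp at this
    exact this.1
  subst hi
  have := frL_eq_nil z1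
  rw [inv_eq_one, inv_mul_eq_one] at this
  exact this

/-! ### length reduction -/

def frN (i : Fin 3) (g : Fin 3 → CoprodI G) : ℕ :=
  (frL ((g i)⁻¹ * g (i + 1))).length + (frL ((g i)⁻¹ * g (i + 2))).length
    + (frL ((g (i + 1))⁻¹ * g (i + 2))).length

theorem fr_len_swap (a b : CoprodI G) : (frL (a⁻¹ * b)).length = (frL (b⁻¹ * a)).length := by
  have : b⁻¹ * a = (a⁻¹ * b)⁻¹ := by group
  rw [this, frL_inv]; simp

theorem frN_eq (i : Fin 3) (g : Fin 3 → CoprodI G) : frN i g = frN 0 g := by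
  have h1 := fr_len_swap (g 0) (g 1)
  have h2 := fr_len_swap (g 0) (g 2)
  have h3 := fr_len_swap (g 1) (g 2)
  fin_cases i
  · rfl
  · change (frL ((g 1)⁻¹ * g 2)).length + (frL ((g 1)⁻¹ * g 0)).length
      + (frL ((g 2)⁻¹ * g 0)).length = (frL ((g 0)⁻¹ * g 1)).length
      + (frL ((g 0)⁻¹ * g 2)).length + (frL ((g 1)⁻¹ * g 2)).length
    omega
  · change (frL ((g 2)⁻¹ * g 0)).length + (frL ((g 2)⁻¹ * g 1)).length
      + (frL ((g 0)⁻¹ * g 1)).length = (frL ((g 0)⁻¹ * g 1)).length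
      + (frL ((g 0)⁻¹ * g 2)).length + (frL ((g 1)⁻¹ * g 2)).length
    omega

theorem fr_len_of_le {i : Fin 3} (x : G i) : (frL (CoprodI.of x)).length ≤ 1 := by
  by_cases hx : x = 1
  · subst hx; simp [frL_one]
  · simp [frL_of hx]

theorem fr_len_of_mul_le {i : Fin 3} (x : G i) (h : CoprodI G) :
    (frL (CoprodI.of x * h)).length ≤ 1 + (frL h).length := by
  obtain ⟨h', e, hh⟩ := frHd_strip i h
  have e2 : CoprodI.of x * h = CoprodI.of (x * frHd i h) * h' := by
    conv_lhs => rw [e]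
    rw [map_mul, mul_assoc]
  have l1 := congrArg List.length (frL_of_mul (frHd i h) hh)
  rw [← e, List.length_append] at l1
  have l2 := congrArg List.length (frL_of_mul (x * frHd i h) hh)
  rw [← e2, List.length_append] at l2
  have := fr_len_of_le (x * frHd i h)
  omega

theorem fr_len_list_mul_le (l : List (Σ i, G i)) (h : CoprodI G) :
    (frL ((l.map fun a => CoprodI.of a.2).prod * h)).length ≤ l.length + (frL h).length := by
  induction l with
  | nil => simp
  | cons a l ih =>
    rw [List.map_cons, List.prod_cons, mul_assoc, List.length_cons]
    have := fr_len_of_mul_le a.2 ((l.map fun a => CoprodI.of a.2).prod * h)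
    omega

theorem fr_len_mul_le (g h : CoprodI G) :
    (frL (g * h)).length ≤ (frL g).length + (frL h).length := by
  have := fr_len_list_mul_le (frL g) h
  rwa [frL_prod] at this

theorem fr_reduce {φ : MulAut (CoprodI G)} {g : Fin 3 → CoprodI G} (hg : FrTup φ g) (i : Fin 3)
    (H : ¬ (frHd i ((g i)⁻¹ * g (i + 1)) = 1 ∧ frHd i ((g i)⁻¹ * g (i + 2)) = 1)) :
    ∃ (x : G i) (g' : Fin 3 → CoprodI G), FrTup (φ * frF i x) g' ∧ frN i g' < frN i g := by
  obtain ⟨p, ep, hp⟩ := frHd_strip i ((g i)⁻¹ * g (i + 1))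
  obtain ⟨q, eq, hq⟩ := frHd_strip i ((g i)⁻¹ * g (i + 2))
  set x := frHd i ((g i)⁻¹ * g (i + 1)) with hx
  set x' := frHd i ((g i)⁻¹ * g (i + 2)) with hx'
  refine ⟨x' * x⁻¹, _, frTup_right (frTup_mulF hg i (x' * x⁻¹)) (Pi.mulSingle i x'), ?_⟩
  have n1 : (i = i + 1) = False := by simp [fr_fin1]
  have n2 : (i + 2 = i + 1) = False := by simp [fr_fin3]
  have s1 : (Pi.mulSingle i x' : ∀ i, G i) (i + 1) = 1 :=
    Pi.mulSingle_eq_of_ne (fr_fin1 i).symm _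
  have s2 : (Pi.mulSingle i x' : ∀ i, G i) (i + 2) = 1 :=
    Pi.mulSingle_eq_of_ne (fr_fin2 i).symm _
  have E1 : g (i + 1) = g i * (CoprodI.of x * p) := by rw [← ep]; group
  have E2 : g (i + 2) = g i * (CoprodI.of x' * q) := by rw [← eq]; group
  have E3 : (g (i + 1))⁻¹ * g (i + 2) = p⁻¹ * (CoprodI.of (x⁻¹ * x') * q) := by
    rw [E1, E2, map_mul, map_inv]; group
  unfold frN
  simp only [n1, n2, s1, s2, if_true, if_false, Pi.mulSingle_eq_same, map_one, mul_one]
  have F1 : (g i * CoprodI.of x')⁻¹ * (g i * CoprodI.of (x' * x⁻¹) * (g i)⁻¹ * g (i + 1)) = p := by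
    rw [E1, map_mul, map_inv]; group
  have F2 : (g i * CoprodI.of x')⁻¹ * g (i + 2) = q := by
    rw [E2]; group
  have F3 : (g i * CoprodI.of (x' * x⁻¹) * (g i)⁻¹ * g (i + 1))⁻¹ * g (i + 2) = p⁻¹ * q := by
    rw [E1, E2, map_mul, map_inv]; group
  rw [F1, F2, F3, E3, ep, eq, frL_of_mul x hp, frL_of_mul x' hq]
  simp only [List.length_append]
  by_cases hz : x⁻¹ * x' = 1
  · have hxx : x = x' := inv_mul_eq_one.1 hz
    have hx1 : x ≠ 1 := by
      intro h1
      exact H ⟨h1, hxx ▸ h1⟩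
    rw [hz, map_one, one_mul, frL_of hx1]
    simp only [List.length_cons, List.length_nil]
    omega
  · rw [frL_triple hz hp hq]
    have h1 := fr_len_mul_le p⁻¹ q
    simp only [List.length_append, List.length_cons]
    omega

def frO (i : Fin 3) : G i →* Out (CoprodI G) := (toOut _).comp (frF i)

theorem fr_surj [∀ i, Nontrivial (G i)] (n : ℕ) : ∀ (φ : MulAut (CoprodI G))
    (g : Fin 3 → CoprodI G), FrTup φ g → frN 0 g = n →
      toOut _ φ ∈ (CoprodI.lift (frO (G := G))).range := by
  induction n using Nat.strong_induction_on with
  | _ n ih =>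
    intro φ g hg hn
    by_cases H : ∀ i, frHd i ((g i)⁻¹ * g (i + 1)) = 1 ∧ frHd i ((g i)⁻¹ * g (i + 2)) = 1
    · have H' : ∀ i j, frHd i ((g i)⁻¹ * g j) = 1 := by
        intro i j
        by_cases hij : i = j
        · subst hij; rw [inv_mul_cancel, frHd_one]
        · rcases fr_fin4 i j hij with rfl | rfl
          · exact (H i).1
          · exact (H i).2
      have hk := fr_terminal hg H'
      have : φ = MulAut.conj (g 0) := by
        apply MulEquiv.toMonoidHom_injective
        refine CoprodI.ext_hom _ _ fun j => MonoidHom.ext fun y => ?_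
        have := hg j y
        rw [hk j] at this
        simpa using this
      have h1 : toOut _ φ = 1 := (QuotientGroup.eq_one_iff _).2 ⟨g 0, this.symm⟩
      rw [h1]
      exact one_mem _
    · push Not at H
      obtain ⟨i, hi⟩ := H
      obtain ⟨x, g', hg', hlt⟩ := fr_reduce hg i (by tauto)
      rw [frN_eq i, frN_eq i, hn] at hlt
      have := ih _ hlt _ _ hg' rfl
      rw [map_mul] at this
      refine (Subgroup.mul_mem_cancel_right _ ?_).1 this
      exact ⟨CoprodI.of x, by rw [CoprodI.lift_of]; rfl⟩

/-! ### injectivity -/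

def frR (i : Fin 3) (g : Fin 3 → CoprodI G) : G i :=
  (frHd i ((g i)⁻¹ * g (i + 1)))⁻¹ * frHd i ((g i)⁻¹ * g (i + 2))

theorem frR_unique [∀ i, Nontrivial (G i)] {φ φ' : MulAut (CoprodI G)} {g g' : Fin 3 → CoprodI G}
    (hg : FrTup φ g) (hg' : FrTup φ' g') (h : toOut _ φ = toOut _ φ') (i : Fin 3) :
    frR i g = frR i g' := by
  obtain ⟨k, hk⟩ := QuotientGroup.eq.1 h
  have hφ : ∀ z, φ' z = φ k * φ z * (φ k)⁻¹ := by
    intro z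
    have : φ' = φ * MulAut.conj k := by rw [hk]; group
    rw [this]; simp
  have hy : ∀ j, ∃ y : G j, g' j = φ k * g j * CoprodI.of y := by
    intro j
    obtain ⟨x, hx⟩ := exists_ne (1 : G j)
    have h1 := hg' j x
    rw [hφ, hg] at h1
    obtain ⟨y, hy⟩ := fr_centralizer hx (c := (φ k * g j)⁻¹ * g' j) (by
      have : (φ k * g j)⁻¹ * g' j * CoprodI.of x * ((φ k * g j)⁻¹ * g' j)⁻¹ =
        (φ k * g j)⁻¹ * (g' j * CoprodI.of x * (g' j)⁻¹) * (φ k * g j) := by group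
      rw [this, ← h1]; group)
    exact ⟨y, by rw [← hy]; group⟩
  choose y hy using hy
  have key : ∀ j, j ≠ i → frHd i ((g' i)⁻¹ * g' j) = (y i)⁻¹ * frHd i ((g i)⁻¹ * g j) := by
    intro j hj
    have : (g' i)⁻¹ * g' j = CoprodI.of (y i)⁻¹ * ((g i)⁻¹ * g j * CoprodI.of (y j)) := by
      rw [hy i, hy j, map_inv]; group
    rw [this, frHd_of_mul, frHd_mul_of hj]
  unfold frR
  rw [key _ (fr_fin1 i).symm, key _ (fr_fin2 i).symm]
  simp

theorem frR_disj {g : Fin 3 → CoprodI G} {i j : Fin 3} (hij : i ≠ j) (h : frR i g ≠ 1) :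
    frR j g = 1 := by
  have h' : frHd i ((g i)⁻¹ * g (i + 1)) ≠ frHd i ((g i)⁻¹ * g (i + 2)) := by
    intro e; exact h (by rw [frR, e]; simp)
  unfold frR
  rw [inv_mul_eq_one]
  rcases fr_fin4 i j hij with rfl | rfl
  · have e1 : i + 1 + 1 = i + 2 := fr_add11 i
    have e2 : i + 1 + 2 = i := fr_add12 i
    rw [e1, e2]
    have := frHd_between hij h'
    have a1 : ((g i)⁻¹ * g (i + 1))⁻¹ * ((g i)⁻¹ * g (i + 2)) = (g (i + 1))⁻¹ * g (i + 2) := by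
      group
    have a2 : ((g i)⁻¹ * g (i + 1))⁻¹ = (g (i + 1))⁻¹ * g i := by group
    rwa [a1, a2] at this
  · have e1 : i + 2 + 1 = i := fr_add21 i
    have e2 : i + 2 + 2 = i + 1 := fr_add22 i
    rw [e1, e2]
    have := frHd_between hij h'.symm
    have a1 : ((g i)⁻¹ * g (i + 2))⁻¹ * ((g i)⁻¹ * g (i + 1)) = (g (i + 2))⁻¹ * g (i + 1) := by
      group
    have a2 : ((g i)⁻¹ * g (i + 2))⁻¹ = (g (i + 2))⁻¹ * g i := by group
    rw [a1, a2] at this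
    exact this.symm

theorem frR_move (g : Fin 3 → CoprodI G) (i : Fin 3) (x : G i) :
    frR i (fun j => if j = i + 1 then g i * CoprodI.of x * (g i)⁻¹ * g j else g j)
      = x⁻¹ * frR i g := by
  have n1 : (i = i + 1) = False := by simp [fr_fin1]
  have n2 : (i + 2 = i + 1) = False := by simp [fr_fin3]
  unfold frR
  simp only [n1, n2, if_true, if_false]
  have : (g i)⁻¹ * (g i * CoprodI.of x * (g i)⁻¹ * g (i + 1))
    = CoprodI.of x * ((g i)⁻¹ * g (i + 1)) := by group
  rw [this, frHd_of_mul, mul_inv, mul_assoc]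

def frY (i : Fin 3) : Set (Out (CoprodI G)) :=
  {Φ | ∃ (φ : MulAut (CoprodI G)) (g : Fin 3 → CoprodI G), toOut _ φ = Φ⁻¹ ∧ FrTup φ g ∧ frR i g ≠ 1}

open scoped Pointwise in
theorem fr_inj [∀ i, Nontrivial (G i)] : Function.Injective (CoprodI.lift (frO (G := G))) := by
  refine CoprodI.lift_injective_of_ping_pong (frO (G := G)) (Or.inl (by simp)) (frY (G := G)) ?_ ?_ ?_
  · intro i
    obtain ⟨x, hx⟩ := exists_ne (1 : G i)
    refine ⟨(toOut _ (1 * frF i x))⁻¹, _, _, (inv_inv _).symm, frTup_mulF frTup_one i x, ?_⟩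
    intro h
    have h2 := (frR_move (fun _ => (1 : CoprodI G)) i x).symm.trans h
    simp [frR] at h2
    exact hx h2
  · intro i j hij
    rw [Function.onFun, Set.disjoint_left]
    rintro Φ ⟨φ, g, e, hg, h⟩ ⟨φ', g', e', hg', h'⟩
    rw [← frR_unique hg hg' (e.trans e'.symm)] at h'
    exact h' (frR_disj hij h)
  · rintro i j hij x hx _ ⟨Φ, ⟨φ, g, e, hg, h⟩, rfl⟩
    refine ⟨φ * frF i x⁻¹, _, ?_, frTup_mulF hg i x⁻¹, ?_⟩
    · rw [map_mul, e, map_inv]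
      change _ = (frO i x * Φ)⁻¹
      rw [mul_inv_rev]; rfl
    · rw [frR_move, frR_disj hij.symm h]
      simpa using hx

theorem fr_main [∀ i, Nontrivial (G i)] :
    ∃ H : Subgroup (Out (CoprodI G)),
      (H : Set (Out (CoprodI G))) =
        {Φ : Out (CoprodI G) | ∃ φ : MulAut (CoprodI G), toOut (CoprodI G) φ = Φ ∧
          ∃ g : Fin 3 → CoprodI G, ∀ (i : Fin 3) (x : G i),
            φ (CoprodI.of x) = g i * CoprodI.of x * (g i)⁻¹} ∧
      Nonempty (H ≃* CoprodI G) := by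
  refine ⟨(CoprodI.lift (frO (G := G))).range, ?_, ⟨(MonoidHom.ofInjective fr_inj).symm⟩⟩
  ext Φ
  constructor
  · rintro ⟨w, rfl⟩
    change ∃ φ, toOut (CoprodI G) φ = _ ∧ ∃ g, FrTup φ g
    induction w using CoprodI.induction_on with
    | one => exact ⟨1, by simp, _, frTup_one⟩
    | of i x => exact ⟨frF i x, by rw [CoprodI.lift_of]; rfl, _, frTup_F i x⟩
    | mul a b ha hb =>
      obtain ⟨φ, e, g, hg⟩ := ha
      obtain ⟨ψ, e', g', hg'⟩ := hb
      exact ⟨φ * ψ, by rw [map_mul, map_mul, e, e'], _, frTup_mul hg hg'⟩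
  · rintro ⟨φ, rfl, g, hg⟩
    exact fr_surj _ φ g hg rfl

end auts

theorem pso_z2_z3_z4_iso :
    ∃ H : Subgroup (Out FRGroup),
      (H : Set (Out FRGroup)) =
        {Φ : Out FRGroup | ∃ φ : MulAut FRGroup, toOut FRGroup φ = Φ ∧
          ∃ g : Fin 3 → FRGroup, ∀ (i : Fin 3) (x : FRFactor i),
            φ (Monoid.CoprodI.of x) = g i * Monoid.CoprodI.of x * (g i)⁻¹} ∧
      Nonempty (H ≃* FRGroup) := by
  exact fr_main (G := FRFactor)
end

section
/- Let Γ be a finite simple graph such that for all vertices u, v, if lk(u) ⊆ st(v) then u = v (i.e. Out(A_Γ) contains no transvections). Then the set of elements of Out(A_Γ) that are represented by an automorphism φ of A_Γ sending, for each vertex v, the generator PresentedGroup.of v to a conjugate of itself, is a subgroup of finite index in Out(A_Γ). -/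
open scoped commutatorElement

/-- The star of a vertex: the vertex together with its neighbours
(the link being the neighbour set `Γ.neighborSet u`). -/
def star {V : Type*} (Γ : SimpleGraph V) (u : V) : Set V :=
  insert u (Γ.neighborSet u)

namespace PSOAux

open Classical

section Basic

variable {V : Type} {Γ : SimpleGraph V}

/-- The generator of the RAAG attached to a vertex. -/
noncomputable abbrev gen (Γ : SimpleGraph V) (v : V) : RAAG Γ :=
  PresentedGroup.of (rels := raagRels Γ) v

/-- Universal property of the RAAG. -/
noncomputable def rlift {G : Type*} [Group G] (f : V → G)
    (hf : ∀ v w, Γ.Adj v w → Commute (f v) (f w)) : RAAG Γ →* G :=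
  PresentedGroup.toGroup (rels := raagRels Γ) (f := f) (by
    rintro r ⟨v, w, hvw, rfl⟩
    rw [map_commutatorElement, FreeGroup.lift_apply_of, FreeGroup.lift_apply_of,
      commutatorElement_eq_one_iff_commute]
    exact hf v w hvw)

@[simp] theorem rlift_gen {G : Type*} [Group G] (f : V → G)
    (hf : ∀ v w, Γ.Adj v w → Commute (f v) (f w)) (v : V) :
    rlift f hf (gen Γ v) = f v :=
  PresentedGroup.toGroup.of _

theorem gen_commute {v w : V} (h : Γ.Adj v w) : Commute (gen Γ v) (gen Γ w) := by
  rw [← commutatorElement_eq_one_iff_commute]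
  have : (PresentedGroup.mk (raagRels Γ)) ⁅FreeGroup.of v, FreeGroup.of w⁆ = 1 :=
    PresentedGroup.one_of_mem ⟨v, w, h, rfl⟩
  rw [map_commutatorElement] at this
  exact this

theorem rhom_ext {G : Type*} [Group G] {f g : RAAG Γ →* G}
    (h : ∀ v, f (gen Γ v) = g (gen Γ v)) : f = g :=
  PresentedGroup.ext h

theorem rind {P : RAAG Γ → Prop} (h1 : P 1) (hg : ∀ v, P (gen Γ v))
    (hinv : ∀ x, P x → P x⁻¹) (hmul : ∀ x y, P x → P y → P (x * y)) (x : RAAG Γ) : P x := by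
  induction x using PresentedGroup.induction_on with
  | _ z =>
  induction z using FreeGroup.induction_on with
  | C1 => simpa using h1
  | of v => exact hg v
  | inv_of v ih => rw [map_inv]; exact hinv _ ih
  | mul x y hx hy => rw [map_mul]; exact hmul _ _ hx hy

/-- Exponent sum of a vertex. -/
noncomputable def ex (Γ : SimpleGraph V) (u : V) : RAAG Γ →* Multiplicative ℤ :=
  rlift (fun v => if v = u then Multiplicative.ofAdd 1 else 1) (fun _ _ _ => Commute.all _ _)

@[simp] theorem ex_gen (u v : V) :
    ex Γ u (gen Γ v) = if v = u then Multiplicative.ofAdd 1 else 1 := by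
  simp [ex]

/-- Retraction onto the standard subgroup on a set of vertices. -/
noncomputable def ret (Γ : SimpleGraph V) (S : Set V) : RAAG Γ →* RAAG Γ :=
  rlift (fun v => if v ∈ S then gen Γ v else 1) (fun v w h => by
    have := gen_commute h
    split_ifs <;> simp [this])

@[simp] theorem ret_gen (S : Set V) (v : V) :
    ret Γ S (gen Γ v) = if v ∈ S then gen Γ v else 1 := by
  simp [ret]

theorem ret_ret (S T : Set V) (g : RAAG Γ) : ret Γ S (ret Γ T g) = ret Γ (S ∩ T) g := by
  have : (ret Γ S).comp (ret Γ T) = ret Γ (S ∩ T) := by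
    apply rhom_ext
    intro v
    by_cases h1 : v ∈ S <;> by_cases h2 : v ∈ T <;> simp [h1, h2]
  exact DFunLike.congr_fun this g

theorem isConj_inter {S T : Set V} {g : RAAG Γ} (hS : IsConj g (ret Γ S g))
    (hT : IsConj g (ret Γ T g)) : IsConj g (ret Γ (S ∩ T) g) := by
  have := MonoidHom.map_isConj (ret Γ S) hT
  rw [ret_ret] at this
  exact hS.trans this

theorem isConj_superset {S T : Set V} (hST : S ⊆ T) {g : RAAG Γ} (hS : IsConj g (ret Γ S g)) :
    IsConj g (ret Γ T g) := by
  have := MonoidHom.map_isConj (ret Γ T) hS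
  rw [ret_ret, Set.inter_eq_right.2 hST] at this
  exact hS.trans this.symm

theorem ret_singleton (w : V) (g : RAAG Γ) :
    ret Γ {w} g = gen Γ w ^ (Multiplicative.toAdd (ex Γ w g)) := by
  have : ret Γ {w} = (zpowersHom (RAAG Γ) (gen Γ w)).comp (ex Γ w) := by
    apply rhom_ext
    intro v
    by_cases h : v = w <;> simp [h]
  rw [this]
  simp

end Basic

/-- The integral Heisenberg group. -/
@[ext] structure Heis where
  p : ℤ
  q : ℤ
  r : ℤ

namespace Heis

instance : Mul Heis := ⟨fun x y => ⟨x.p + y.p, x.q + y.q, x.r + y.r + x.p * y.q⟩⟩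
instance : One Heis := ⟨⟨0, 0, 0⟩⟩
instance : Inv Heis := ⟨fun x => ⟨-x.p, -x.q, -x.r + x.p * x.q⟩⟩

@[simp] theorem mul_p (x y : Heis) : (x * y).p = x.p + y.p := rfl
@[simp] theorem mul_q (x y : Heis) : (x * y).q = x.q + y.q := rfl
@[simp] theorem mul_r (x y : Heis) : (x * y).r = x.r + y.r + x.p * y.q := rfl
@[simp] theorem one_p : (1 : Heis).p = 0 := rfl
@[simp] theorem one_q : (1 : Heis).q = 0 := rfl
@[simp] theorem one_r : (1 : Heis).r = 0 := rfl
@[simp] theorem inv_p (x : Heis) : (x⁻¹).p = -x.p := rfl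
@[simp] theorem inv_q (x : Heis) : (x⁻¹).q = -x.q := rfl
@[simp] theorem inv_r (x : Heis) : (x⁻¹).r = -x.r + x.p * x.q := rfl

instance : Group Heis := Group.ofLeftAxioms
  (by intro x y z; ext <;> simp <;> ring)
  (by intro x; ext <;> simp)
  (by intro x; ext <;> simp)

/-- First coordinate. -/
def pHom : Heis →* Multiplicative ℤ where
  toFun x := Multiplicative.ofAdd x.p
  map_one' := rfl
  map_mul' _ _ := rfl

/-- Second coordinate. -/
def qHom : Heis →* Multiplicative ℤ where
  toFun x := Multiplicative.ofAdd x.q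
  map_one' := rfl
  map_mul' _ _ := rfl

end Heis

section Comm

variable {V : Type} {Γ : SimpleGraph V}

theorem ex_comm {g h : RAAG Γ} (hgh : Commute g h) {a b : V} (hab : a ≠ b) (hn : ¬ Γ.Adj a b) :
    (ex Γ a g).toAdd * (ex Γ b h).toAdd = (ex Γ b g).toAdd * (ex Γ a h).toAdd := by
  let f : V → Heis := fun v => if v = a then ⟨1, 0, 0⟩ else if v = b then ⟨0, 1, 0⟩ else 1
  have hf : ∀ v w, Γ.Adj v w → Commute (f v) (f w) := by
    intro v w hvw
    by_cases h1 : v = a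
    · subst h1
      have h2 : w ≠ v := hvw.ne'
      have h3 : w ≠ b := by rintro rfl; exact hn hvw
      simp [f, h2, h3]
    · by_cases h2 : v = b
      · subst h2
        have h4 : w ≠ v := hvw.ne'
        have h3 : w ≠ a := by rintro rfl; exact hn hvw.symm
        simp [f, h4, h3]
      · simp [f, h1, h2]
  let F := rlift f hf
  have hp : Heis.pHom.comp F = ex Γ a := by
    apply rhom_ext
    intro v
    by_cases h1 : v = a
    · simp [F, f, h1, Heis.pHom]
    · by_cases h2 : v = b <;> simp [F, f, h1, h2, Heis.pHom, hab.symm]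
  have hq : Heis.qHom.comp F = ex Γ b := by
    apply rhom_ext
    intro v
    by_cases h1 : v = a
    · simp [F, f, h1, Heis.qHom, hab]
    · by_cases h2 : v = b <;> simp [F, f, h2, h1, Heis.qHom, hab.symm]
  have e1 : ∀ x, (ex Γ a x).toAdd = (F x).p := by intro x; rw [← hp]; rfl
  have e2 : ∀ x, (ex Γ b x).toAdd = (F x).q := by intro x; rw [← hq]; rfl
  have := congrArg Heis.r (hgh.map F).eq
  simp only [Heis.mul_r] at this
  rw [e1, e1, e2, e2]
  linarith

end Comm

section HNN

variable {V : Type} (Γ : SimpleGraph V) (u : V)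

/-- The infinite cyclic cover graph. -/
def cov : SimpleGraph (V × ℤ) where
  Adj x y := Γ.Adj x.1 y.1 ∧ (x.2 = y.2 ∨ Γ.Adj u x.1 ∨ Γ.Adj u y.1)
  symm := ⟨by
    rintro x y ⟨h, h'⟩
    refine ⟨h.symm, ?_⟩
    tauto⟩
  loopless := ⟨fun x h => h.1.ne rfl⟩

/-- The shift as a map on vertices. -/
noncomputable def sh (m : ℤ) (x : V × ℤ) : V × ℤ := (x.1, if Γ.Adj u x.1 then x.2 else x.2 + m)

/-- The shift as an endomorphism. -/
noncomputable def shHom (m : ℤ) : RAAG (cov Γ u) →* RAAG (cov Γ u) :=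
  rlift (fun x => gen _ (sh Γ u m x)) (by
    rintro ⟨v, i⟩ ⟨w, j⟩ ⟨h, h'⟩
    apply gen_commute
    refine ⟨h, ?_⟩
    dsimp only [sh] at *
    by_cases h1 : Γ.Adj u v
    · simp [h1]
    · by_cases h2 : Γ.Adj u w
      · simp [h2]
      · simp [h1, h2] at *
        exact h')

@[simp] theorem shHom_gen (m : ℤ) (x : V × ℤ) :
    shHom Γ u m (gen _ x) = gen _ (sh Γ u m x) := by
  simp [shHom]

theorem shHom_add (m n : ℤ) : shHom Γ u (m + n) = (shHom Γ u m).comp (shHom Γ u n) := by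
  apply rhom_ext
  rintro ⟨v, i⟩
  by_cases h : Γ.Adj u v
  · simp [sh, h]
  · simp [sh, h, add_comm, add_left_comm]

theorem shHom_zero : shHom Γ u 0 = MonoidHom.id _ := by
  apply rhom_ext
  rintro ⟨v, i⟩
  simp [sh]

/-- The shift action. -/
noncomputable def shAct : Multiplicative ℤ →* MulAut (RAAG (cov Γ u)) where
  toFun m := MonoidHom.toMulEquiv (shHom Γ u m.toAdd) (shHom Γ u (-m.toAdd))
    (by rw [← shHom_add, neg_add_cancel, shHom_zero])
    (by rw [← shHom_add, add_neg_cancel, shHom_zero])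
  map_one' := by
    ext x
    exact DFunLike.congr_fun (shHom_zero Γ u) x
  map_mul' m n := by
    ext x
    exact DFunLike.congr_fun (shHom_add Γ u m.toAdd n.toAdd) x

theorem shAct_apply (m : Multiplicative ℤ) (x : RAAG (cov Γ u)) :
    shAct Γ u m x = shHom Γ u m.toAdd x := rfl

/-- Embedding into the semidirect product. -/
noncomputable def fwd : RAAG Γ →* RAAG (cov Γ u) ⋊[shAct Γ u] Multiplicative ℤ :=
  rlift (fun v => if v = u then SemidirectProduct.inr (Multiplicative.ofAdd 1)
      else SemidirectProduct.inl (gen _ (v, 0))) (by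
    have key : ∀ w, Γ.Adj u w →
        Commute (SemidirectProduct.inr (Multiplicative.ofAdd (1 : ℤ)) :
          RAAG (cov Γ u) ⋊[shAct Γ u] Multiplicative ℤ)
          (SemidirectProduct.inl (gen _ (w, 0))) := by
      intro w h
      have := SemidirectProduct.inl_aut (φ := shAct Γ u) (Multiplicative.ofAdd 1) (gen _ (w, 0))
      rw [shAct_apply, shHom_gen] at this
      simp only [sh, h, if_true] at this
      rw [map_inv] at this
      exact (eq_mul_inv_iff_mul_eq.1 this).symm
    intro v w h
    by_cases h1 : v = u
    · subst h1
      simp only [if_true, h.ne', if_false]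
      exact key w h
    · by_cases h2 : w = u
      · subst h2
        simp only [if_true, h.ne, if_false]
        exact (key v h.symm).symm
      · simp only [h1, h2, if_false]
        exact (gen_commute (Γ := cov Γ u) (v := (v, 0)) (w := (w, 0)) ⟨h, Or.inl rfl⟩).map _)

/-- The back map from the cover. -/
noncomputable def bk : RAAG (cov Γ u) →* RAAG Γ :=
  rlift (fun x => gen Γ u ^ x.2 * gen Γ x.1 * (gen Γ u ^ x.2)⁻¹) (by
    have key : ∀ v w, ∀ i j : ℤ, Γ.Adj v w → Γ.Adj u v →
        Commute (gen Γ u ^ i * gen Γ v * (gen Γ u ^ i)⁻¹)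
          (gen Γ u ^ j * gen Γ w * (gen Γ u ^ j)⁻¹) := by
      intro v w i j h1 h2
      have c : Commute (gen Γ v) (gen Γ u) := (gen_commute h2).symm
      have c2 := gen_commute h1
      have e : gen Γ u ^ i * gen Γ v * (gen Γ u ^ i)⁻¹ = gen Γ v := by
        rw [← (c.zpow_right i).eq]; group
      rw [e]
      exact ((c.zpow_right j).mul_right c2).mul_right (c.zpow_right j).inv_right
    rintro ⟨v, i⟩ ⟨w, j⟩ ⟨h, h' | h' | h'⟩
    · dsimp only at *
      subst h'
      exact (gen_commute h).conj _
    · exact key v w i j h h'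
    · exact (key w v j i h.symm h').symm)

@[simp] theorem bk_gen (x : V × ℤ) :
    bk Γ u (gen _ x) = gen Γ u ^ x.2 * gen Γ x.1 * (gen Γ u ^ x.2)⁻¹ := by
  simp [bk]

theorem bk_sh (m : ℤ) (k : RAAG (cov Γ u)) :
    bk Γ u (shHom Γ u m k) = gen Γ u ^ m * bk Γ u k * (gen Γ u ^ m)⁻¹ := by
  have : (bk Γ u).comp (shHom Γ u m) =
      (MulAut.conj (gen Γ u ^ m)).toMonoidHom.comp (bk Γ u) := by
    apply rhom_ext
    rintro ⟨v, i⟩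
    by_cases h : Γ.Adj u v
    · have c : Commute (gen Γ v) (gen Γ u) := (gen_commute h).symm
      have e : ∀ i : ℤ, gen Γ u ^ i * gen Γ v * (gen Γ u ^ i)⁻¹ = gen Γ v := by
        intro i
        rw [← (c.zpow_right i).eq]; group
      simp only [MonoidHom.comp_apply, shHom_gen, bk_gen, sh, h, if_true, e,
        MulEquiv.coe_toMonoidHom, MulAut.conj_apply]
    · simp only [MonoidHom.comp_apply, shHom_gen, bk_gen, sh, h, if_false,
        MulEquiv.coe_toMonoidHom, MulAut.conj_apply]
      group
  exact DFunLike.congr_fun this k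

/-- The back map from the semidirect product. -/
noncomputable def bwd : RAAG (cov Γ u) ⋊[shAct Γ u] Multiplicative ℤ →* RAAG Γ :=
  SemidirectProduct.lift (bk Γ u) (zpowersHom _ (gen Γ u)) (by
    intro m
    ext1 k
    simp only [MonoidHom.comp_apply, MulEquiv.coe_toMonoidHom, MulAut.conj_apply,
      shAct_apply, bk_sh, zpowersHom_apply])

theorem bwd_fwd (g : RAAG Γ) : bwd Γ u (fwd Γ u g) = g := by
  have : (bwd Γ u).comp (fwd Γ u) = MonoidHom.id _ := by
    apply rhom_ext
    intro v
    by_cases h : v = u <;> simp [fwd, bwd, h]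
  exact DFunLike.congr_fun this g

theorem fwd_right (g : RAAG Γ) : (fwd Γ u g).right = ex Γ u g := by
  have : (SemidirectProduct.rightHom).comp (fwd Γ u) = ex Γ u := by
    apply rhom_ext
    intro v
    by_cases h : v = u <;> simp [fwd, h]
  exact DFunLike.congr_fun this g

/-- Truncation of the cover. -/
noncomputable def trunc (N : ℕ) : RAAG (cov Γ u) →* RAAG (cov Γ u) :=
  rlift (fun x => if Γ.Adj u x.1 ∨ |x.2| ≤ N then gen _ x else 1) (fun v w h => by
    have := gen_commute h
    split_ifs <;> simp [this])

theorem trunc_gen (N : ℕ) (x : V × ℤ) :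
    trunc Γ u N (gen _ x) = if Γ.Adj u x.1 ∨ |x.2| ≤ N then gen _ x else 1 := by
  simp [trunc]

theorem trunc_spec (k : RAAG (cov Γ u)) : ∃ N₀ : ℕ, ∀ N : ℕ, N₀ ≤ N → trunc Γ u N k = k ∧
    ∀ m : ℤ, 2 * (N : ℤ) < |m| →
      bk Γ u (trunc Γ u N (shHom Γ u m k)) = ret Γ (Γ.neighborSet u) (bk Γ u k) := by
  induction k using rind with
  | h1 => exact ⟨0, fun N _ => by simp⟩
  | hinv x ih =>
    obtain ⟨N₀, h⟩ := ih
    refine ⟨N₀, fun N hN => ⟨by simp [(h N hN).1], fun m hm => ?_⟩⟩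
    simp [(h N hN).2 m hm]
  | hmul x y ihx ihy =>
    obtain ⟨N₀, h⟩ := ihx
    obtain ⟨N₁, h'⟩ := ihy
    refine ⟨max N₀ N₁, fun N hN => ?_⟩
    have a := h N (le_trans (le_max_left _ _) hN)
    have b := h' N (le_trans (le_max_right _ _) hN)
    refine ⟨by simp [a.1, b.1], fun m hm => ?_⟩
    simp [a.2 m hm, b.2 m hm]
  | hg x =>
    obtain ⟨v, i⟩ := x
    refine ⟨i.natAbs, fun N hN => ?_⟩
    have hi : |i| ≤ N := by rw [Int.abs_eq_natAbs]; omega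
    refine ⟨by simp [trunc_gen, hi], fun m hm => ?_⟩
    by_cases h : Γ.Adj u v
    · have c : Commute (gen Γ v) (gen Γ u) := (gen_commute h).symm
      have e : ∀ i : ℤ, gen Γ u ^ i * gen Γ v * (gen Γ u ^ i)⁻¹ = gen Γ v := by
        intro i
        rw [← (c.zpow_right i).eq]; group
      rw [shHom_gen, trunc_gen]
      simp [sh, h, e]
    · have h2 : ¬ |i + m| ≤ N := by
        rw [Int.abs_eq_natAbs] at hm ⊢
        omega
      rw [shHom_gen, trunc_gen]
      simp [sh, h, h2]

variable {Γ u}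

theorem isConj_link {g h : RAAG Γ} (hgh : Commute g h) (hg : ex Γ u g = 1)
    (hh : (ex Γ u h).toAdd ≠ 0) : IsConj g (ret Γ (Γ.neighborSet u) g) := by
  set k := (fwd Γ u g).left with hk
  have hgk : fwd Γ u g = SemidirectProduct.inl k := by
    ext
    · simp [hk]
    · rw [fwd_right, hg]; simp
  have hbk : bk Γ u k = g := by
    have := bwd_fwd Γ u g
    rw [hgk] at this
    simpa [bwd] using this
  obtain ⟨N, hN⟩ := trunc_spec Γ u k
  obtain ⟨h1, h2⟩ := hN N le_rfl
  have hc : Commute (fwd Γ u g) (fwd Γ u (h ^ (2 * N + 1))) :=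
    (hgh.pow_right (2 * N + 1)).map _
  have hr : ((fwd Γ u (h ^ (2 * N + 1))).right).toAdd = (2 * N + 1) * (ex Γ u h).toAdd := by
    rw [fwd_right, map_pow, toAdd_pow]; simp
  set y := fwd Γ u (h ^ (2 * N + 1)) with hy
  have hl := congrArg SemidirectProduct.left hc.eq
  rw [hgk] at hl
  simp only [SemidirectProduct.mul_left, SemidirectProduct.left_inl, SemidirectProduct.right_inl,
    map_one, MulAut.one_apply, shAct_apply] at hl
  have hconj : IsConj k (shHom Γ u y.right.toAdd k) := by
    rw [isConj_comm, isConj_iff]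
    exact ⟨y.left, by rw [← hl]; group⟩
  have h3 := MonoidHom.map_isConj ((bk Γ u).comp (trunc Γ u N)) hconj
  simp only [MonoidHom.comp_apply] at h3
  rw [h1, h2, hbk] at h3
  · exact h3
  · rw [hr, abs_mul, abs_of_nonneg (by positivity : (0 : ℤ) ≤ 2 * N + 1)]
    have : 1 ≤ |(ex Γ u h).toAdd| := Int.one_le_abs hh
    nlinarith

end HNN

section Lin

variable {V : Type} [Fintype V] {Γ : SimpleGraph V}

theorem lin (hΓ : ∀ u v : V, Γ.neighborSet u ⊆ star Γ v → u = v)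
    (M : Matrix V V ℚ) (hdet : M.det ≠ 0)
    (hM : ∀ v v', Γ.Adj v v' → ∀ a b, a ≠ b → ¬ Γ.Adj a b → M a v * M b v' = M b v * M a v') :
    ∀ v, ∃ w, (∀ s, s ≠ w → M s v = 0) ∧
      ∀ u, Γ.Adj w u → ∃ v', Γ.Adj v v' ∧ M u v' ≠ 0 := by
  obtain ⟨τ, hτ⟩ : ∃ τ : Equiv.Perm V, ∀ v, M (τ v) v ≠ 0 := by
    rw [Matrix.det_apply] at hdet
    obtain ⟨τ, -, h⟩ := Finset.exists_ne_zero_of_sum_ne_zero hdet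
    refine ⟨τ, fun v hv => h ?_⟩
    rw [Finset.prod_eq_zero (f := fun i => M (τ i) i) (Finset.mem_univ v) hv, smul_zero]
  let St : V → Type := fun v => {x : V // x = v ∨ Γ.Adj v x}
  have hli : LinearIndependent ℚ M.col := by
    rw [Matrix.linearIndependent_cols_iff_isUnit, Matrix.isUnit_iff_isUnit_det]
    exact hdet.isUnit
  -- the vector attached to coefficients
  let Y : (v : V) → (St v → ℚ) → V → ℚ := fun v c a => ∑ x : St v, M a x.1 * c x
  have hY : ∀ v c a b, a ≠ b → ¬ Γ.Adj a b → M a v * Y v c b = M b v * Y v c a := by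
    intro v c a b hab hn
    simp only [Y, Finset.mul_sum]
    refine Finset.sum_congr rfl ?_
    rintro ⟨x, rfl | hx⟩ -
    · ring
    · have := hM v x hx a b hab hn
      dsimp only
      rw [← mul_assoc, this, mul_assoc]
  have hout : ∀ v c, Y v c (τ v) = 0 → ∀ b, b ≠ τ v → ¬ Γ.Adj (τ v) b → Y v c b = 0 := by
    intro v c h0 b hb hn
    have := hY v c (τ v) b hb.symm hn
    rw [h0, mul_zero] at this
    exact (mul_eq_zero.1 this).resolve_left (hτ v)
  let L : (v : V) → (St v → ℚ) →ₗ[ℚ] (St (τ v) → ℚ) := fun v =>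
    (M.submatrix (fun a : St (τ v) => a.1) (fun x : St v => x.1)).mulVecLin
  have hL : ∀ v c (a : St (τ v)), L v c a = Y v c a.1 := by
    intro v c a
    simp [L, Y, Matrix.mulVec, dotProduct]
  have hinj : ∀ v, Function.Injective (L v) := by
    intro v
    rw [← LinearMap.ker_eq_bot, LinearMap.ker_eq_bot']
    intro c hc
    have h0 : ∀ a, Y v c a = 0 := by
      have hin : ∀ a, (a = τ v ∨ Γ.Adj (τ v) a) → Y v c a = 0 := by
        intro a ha
        rw [← hL v c ⟨a, ha⟩, hc]; rfl
      intro a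
      by_cases ha : a = τ v ∨ Γ.Adj (τ v) a
      · exact hin a ha
      · push Not at ha
        exact hout v c (hin _ (Or.inl rfl)) a ha.1 ha.2
    have hli' := hli.comp (fun x : St v => x.1) Subtype.val_injective
    rw [Fintype.linearIndependent_iff] at hli'
    funext x
    refine hli' c ?_ x
    funext a
    have := h0 a
    simp only [Y] at this
    simp only [Finset.sum_apply, Pi.smul_apply, Function.comp, Matrix.col_apply, smul_eq_mul,
      Pi.zero_apply]
    rw [← this]
    exact Finset.sum_congr rfl fun x _ => mul_comm _ _
  have hle : ∀ v ∈ Finset.univ, Fintype.card (St v) ≤ Fintype.card (St (τ v)) := by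
    intro v _
    have := LinearMap.finrank_le_finrank_of_injective (hinj v)
    simpa using this
  have hcard : ∀ v, Fintype.card (St v) = Fintype.card (St (τ v)) := by
    have hs : ∑ v, Fintype.card (St v) = ∑ v, Fintype.card (St (τ v)) :=
      (Equiv.sum_comp τ (fun v => Fintype.card (St v))).symm
    have := (Finset.sum_eq_sum_iff_of_le hle).1 hs
    exact fun v => this v (Finset.mem_univ v)
  have hsurj : ∀ v, Function.Surjective (L v) := by
    intro v
    refine (LinearMap.injective_iff_surjective_of_finrank_eq_finrank ?_).1 (hinj v)
    simpa using hcard v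
  intro v
  -- vectors equal to a basis vector
  have hbasis : ∀ u, Γ.Adj (τ v) u → ∃ c, Y v c u = 1 ∧ ∀ b, b ≠ u → Y v c b = 0 := by
    intro u hu
    obtain ⟨c, hc⟩ := hsurj v (Pi.single ⟨u, Or.inr hu⟩ 1)
    have hin : ∀ a, (a = τ v ∨ Γ.Adj (τ v) a) → a ≠ u → Y v c a = 0 := by
      intro a ha hau
      rw [← hL v c ⟨a, ha⟩, hc, Pi.single_eq_of_ne]
      intro h
      exact hau (congrArg Subtype.val h)
    refine ⟨c, ?_, fun b hb => ?_⟩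
    · rw [← hL v c ⟨u, Or.inr hu⟩, hc, Pi.single_eq_same]
    · by_cases ha : b = τ v ∨ Γ.Adj (τ v) b
      · exact hin b ha hb
      · push Not at ha
        exact hout v c (hin _ (Or.inl rfl) hu.ne) b ha.1 ha.2
  have hzero : ∀ s, s ≠ τ v → M s v = 0 := by
    intro s hs
    by_contra hne
    refine hs (hΓ (τ v) s ?_).symm
    intro u hu
    obtain ⟨c, hc1, hc2⟩ := hbasis u hu
    by_cases hsu : u = s
    · exact Or.inl hsu
    right
    by_contra hn
    have := hY v c s u (fun h => hsu h.symm) hn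
    rw [hc1, hc2 s (fun h => hsu h.symm), mul_zero, mul_one] at this
    exact hne this
  refine ⟨τ v, hzero, fun u hu => ?_⟩
  obtain ⟨c, hc1, hc2⟩ := hbasis u hu
  have : Y v c u ≠ 0 := by rw [hc1]; exact one_ne_zero
  obtain ⟨⟨x, hx⟩, -, hx'⟩ := Finset.exists_ne_zero_of_sum_ne_zero this
  have hx'' : M u x ≠ 0 := left_ne_zero_of_mul hx'
  rcases hx with rfl | hx
  · exact absurd (hzero u hu.ne') hx''
  · exact ⟨x, hx, hx''⟩

end Lin

section Main

variable {V : Type} [Fintype V] {Γ : SimpleGraph V}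

theorem ex_hom (φ : RAAG Γ →* RAAG Γ) (a : V) (g : RAAG Γ) :
    (ex Γ a (φ g)).toAdd = ∑ v, (ex Γ a (φ (gen Γ v))).toAdd * (ex Γ v g).toAdd := by
  induction g using rind with
  | h1 => simp
  | hinv x ih => simp [ih]
  | hmul x y hx hy => simp [hx, hy, mul_add, Finset.sum_add_distrib]
  | hg w =>
    rw [Finset.sum_eq_single w]
    · simp
    · intro b _ hb
      simp [hb.symm]
    · simp

theorem key (hΓ : ∀ u v : V, Γ.neighborSet u ⊆ star Γ v → u = v) (φ : MulAut (RAAG Γ)) (v : V) :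
    ∃ p : V × ℤˣ, IsConj (gen Γ p.1 ^ (p.2 : ℤ)) (φ (gen Γ v)) := by
  let mat : MulAut (RAAG Γ) → Matrix V V ℤ := fun ψ =>
    Matrix.of fun a x => (ex Γ a (ψ (gen Γ x))).toAdd
  have hmul : mat φ * mat φ⁻¹ = 1 := by
    ext a x
    rw [Matrix.mul_apply]
    have := ex_hom φ.toMonoidHom a (φ⁻¹ (gen Γ x))
    simp only [MulEquiv.coe_toMonoidHom, MulAut.apply_inv_self] at this
    simp only [mat, Matrix.of_apply]
    rw [← this, Matrix.one_apply]
    by_cases h : x = a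
    · simp [h]
    · simp [h, Ne.symm h]
  let M : Matrix V V ℚ := (mat φ).map (Int.castRingHom ℚ)
  have hdet : M.det ≠ 0 := by
    have h1 : (mat φ).det ≠ 0 := by
      intro h0
      have := congrArg Matrix.det hmul
      rw [Matrix.det_mul, h0, zero_mul, Matrix.det_one] at this
      exact zero_ne_one this
    have h2 : M.det = ((mat φ).det : ℚ) := ((Int.castRingHom ℚ).map_det (mat φ)).symm
    rw [h2]
    exact_mod_cast h1
  have hM : ∀ x x', Γ.Adj x x' → ∀ a b, a ≠ b → ¬ Γ.Adj a b →
      M a x * M b x' = M b x * M a x' := by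
    intro x x' hx a b hab hn
    have := ex_comm ((gen_commute hx).map φ) hab hn
    simp only [M, mat, Matrix.map_apply, Matrix.of_apply, eq_intCast]
    exact_mod_cast this
  have hMe : ∀ a x, M a x = ((ex Γ a (φ (gen Γ x))).toAdd : ℚ) := fun a x => rfl
  obtain ⟨w, hw1, hw2⟩ := lin hΓ M hdet hM v
  set g := φ (gen Γ v) with hg
  have hlink : ∀ u, Γ.Adj w u → IsConj g (ret Γ (Γ.neighborSet u) g) := by
    intro u hu
    obtain ⟨v', hv', hne⟩ := hw2 u hu
    refine isConj_link (h := φ (gen Γ v')) ((gen_commute hv').map φ) ?_ ?_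
    · have := hw1 u hu.ne'
      rw [hMe] at this
      have h0 : (ex Γ u (φ (gen Γ v))).toAdd = 0 := by exact_mod_cast this
      exact h0
    · intro h0
      rw [hMe, h0] at hne
      simp at hne
  have hfin : ∀ F : Finset V, (∀ u ∈ F, Γ.Adj w u) →
      IsConj g (ret Γ {s | ∀ u ∈ F, Γ.Adj u s} g) := by
    intro F
    induction F using Finset.induction_on with
    | empty =>
      intro _
      have : ret Γ {s | ∀ u ∈ (∅ : Finset V), Γ.Adj u s} = MonoidHom.id _ := by
        apply rhom_ext
        intro x
        simp
      rw [this]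
      exact IsConj.refl _
    | insert u F _ ih =>
      intro hF
      have h1 := ih fun x hx => hF x (Finset.mem_insert_of_mem hx)
      have h2 := hlink u (hF u (Finset.mem_insert_self _ _))
      have h3 := isConj_inter h2 h1
      refine isConj_superset ?_ h3
      rintro s ⟨hs1, hs2⟩ x hx
      rcases Finset.mem_insert.1 hx with rfl | hx
      · exact hs1
      · exact hs2 x hx
  have hsing : IsConj g (ret Γ {w} g) := by
    refine isConj_superset ?_ (hfin (Finset.univ.filter fun u => Γ.Adj w u) (by simp))
    intro s hs
    refine (hΓ w s ?_).symm
    intro u hu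
    exact Or.inr (hs u (by simpa using hu)).symm
  rw [ret_singleton] at hsing
  set m := (ex Γ w g).toAdd with hm
  have hunit : IsUnit m := by
    have h1 := MonoidHom.map_isConj ((ex Γ v).comp (φ⁻¹ : MulAut (RAAG Γ)).toMonoidHom) hsing
    rw [isConj_iff_eq] at h1
    simp only [MonoidHom.comp_apply, MulEquiv.coe_toMonoidHom, hg, MulAut.inv_apply_self,
      map_zpow, ex_gen, if_true] at h1
    have h2 := congrArg Multiplicative.toAdd h1
    rw [toAdd_ofAdd, toAdd_zpow, smul_eq_mul] at h2
    exact IsUnit.of_mul_eq_one _ h2.symm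
  obtain ⟨e, he⟩ := hunit
  refine ⟨(w, e), ?_⟩
  rw [he]
  exact hsing.symm

/-- Pure symmetric automorphisms. -/
def psa (Γ : SimpleGraph V) : Subgroup (MulAut (RAAG Γ)) where
  carrier := {φ | ∀ v, IsConj (gen Γ v) (φ (gen Γ v))}
  one_mem' v := IsConj.refl _
  mul_mem' {φ ψ} hφ hψ v := (hφ v).trans (MonoidHom.map_isConj φ.toMonoidHom (hψ v))
  inv_mem' {φ} hφ v := by
    have := MonoidHom.map_isConj (φ⁻¹ : MulAut (RAAG Γ)).toMonoidHom (hφ v)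
    simp only [MulEquiv.coe_toMonoidHom, MulAut.inv_apply_self] at this
    exact this.symm

theorem psa_finiteIndex (hΓ : ∀ u v : V, Γ.neighborSet u ⊆ star Γ v → u = v) :
    (psa Γ).FiniteIndex := by
  choose f hf using key hΓ
  have : Finite (MulAut (RAAG Γ) ⧸ psa Γ) := by
    refine Finite.of_injective (fun q => f q.out) ?_
    intro a b hab
    rw [← QuotientGroup.out_eq' a, ← QuotientGroup.out_eq' b, QuotientGroup.eq]
    intro v
    have h1 := hf a.out v
    have h2 := hf b.out v
    rw [show f a.out v = f b.out v from congrFun hab v] at h1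
    have h3 := MonoidHom.map_isConj ((a.out)⁻¹ : MulAut (RAAG Γ)).toMonoidHom (h1.symm.trans h2)
    simp only [MulEquiv.coe_toMonoidHom, MulAut.inv_apply_self] at h3
    exact h3
  exact Subgroup.finiteIndex_of_finite_quotient

end Main

end PSOAux

theorem pso_finiteIndex_of_no_transvections {V : Type} [Fintype V] (Γ : SimpleGraph V)
    (h : ∀ u v : V, Γ.neighborSet u ⊆ star Γ v → u = v) :
    ∃ H : Subgroup (Out (RAAG Γ)),
      (H : Set (Out (RAAG Γ))) =
        {Φ : Out (RAAG Γ) | ∃ φ : MulAut (RAAG Γ), toOut (RAAG Γ) φ = Φ ∧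
          ∀ v : V, ∃ g : RAAG Γ,
            φ (PresentedGroup.of (rels := raagRels Γ) v) =
              g * PresentedGroup.of (rels := raagRels Γ) v * g⁻¹} ∧
      H.FiniteIndex := by
  refine ⟨(PSOAux.psa Γ).map (toOut (RAAG Γ)), ?_, ?_⟩
  · ext Φ
    constructor
    · rintro ⟨φ, hφ, rfl⟩
      refine ⟨φ, rfl, fun v => ?_⟩
      obtain ⟨c, hc⟩ := isConj_iff.1 (hφ v)
      exact ⟨c, hc.symm⟩
    · rintro ⟨φ, rfl, hφ⟩
      refine ⟨φ, fun v => ?_, rfl⟩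
      obtain ⟨c, hc⟩ := hφ v
      exact isConj_iff.2 ⟨c, hc.symm⟩
  · have hfi := PSOAux.psa_finiteIndex h
    constructor
    have hs : Function.Surjective (toOut (RAAG Γ)) := QuotientGroup.mk'_surjective _
    have hd := Subgroup.index_map_dvd (PSOAux.psa Γ) hs
    intro h0
    rw [h0, zero_dvd_iff] at hd
    exact hfi.index_ne_zero hd
end
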